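/- For any open set G in M_1(Ω_0 × U_d) (weak topology), P_0-almost surely, liminf_{n→∞} (1/n) log P^{π,ω}_0( L_n ∈ G ) ≥ −inf_{μ∈G} I(μ) = −inf_{μ∈G} I**(μ). -/

import Mathlib

open MeasureTheory ProbabilityTheory Filter Topology
open scoped ENNReal NNReal BigOperators

noncomputable section

namespace SRWPC

/-- Vertices of the lattice `ℤ^d`. -/
abbrev V (d : ℕ) := Fin d → ℤ

/-- Index of a nearest-neighbour bond: the bond from `x` to `x + eᵢ`. -/
abbrev EdgeIx (d : ℕ) := V d × Fin d

/-- Percolation configurations `Ω = {0,1}^{𝔹_d}`. -/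
abbrev Config (d : ℕ) := EdgeIx d → Bool

/-- The `i`-th coordinate unit vector. -/
def unitVec (d : ℕ) (i : Fin d) : V d := fun j => if j = i then 1 else 0

/-- The set `𝕌_d` of the `2d` unit vectors. -/
def Ud (d : ℕ) : Finset (V d) :=
  (Finset.univ.image (unitVec d)) ∪ (Finset.univ.image (fun i => -unitVec d i))

/-- The type of nearest-neighbour steps (elements of `𝕌_d`). -/
abbrev Step (d : ℕ) := {e : V d // e ∈ Ud d}

/-- The shift `(τ_x ω)_b = ω_{x+b}`. -/
def shift {d : ℕ} (x : V d) (ω : Config d) : Config d := fun b => ω (b.1 + x, b.2)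

/-- The bond from `x` to `x + e` is open in `ω`. -/
def edgeOpen {d : ℕ} (ω : Config d) (x e : V d) : Prop :=
  ∃ i : Fin d, (e = unitVec d i ∧ ω (x, i) = true) ∨
    (e = -unitVec d i ∧ ω (x - unitVec d i, i) = true)

open Classical in
/-- The number of open bonds incident to `x`. -/
def openDeg {d : ℕ} (ω : Config d) (x : V d) : ℕ :=
  ((Ud d).filter (fun e => edgeOpen ω x e)).card

open Classical in
/-- The transition probability `π_ω(x,e)` of the simple random walk on the cluster. -/
def trans {d : ℕ} (ω : Config d) (x e : V d) : ℝ :=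
  if edgeOpen ω x e then 1 / openDeg ω x else 0

/-- `γ` restricted to `{0,…,n}` is a nearest-neighbour open path in `ω`. -/
def IsOpenPath {d : ℕ} (ω : Config d) (γ : ℕ → V d) (n : ℕ) : Prop :=
  ∀ k < n, (γ (k + 1) - γ k) ∈ Ud d ∧ edgeOpen ω (γ k) (γ (k + 1) - γ k)

/-- `x` lies in the box `[-r,r]^d`. -/
def inBox {d : ℕ} (x : V d) (r : ℝ) : Prop := ∀ i, |(x i : ℝ)| ≤ r

/-- `x` is joined to infinity by a nearest-neighbour open path, i.e. `x ∈ 𝒞_∞(ω)`. -/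
def memCluster {d : ℕ} (ω : Config d) (x : V d) : Prop :=
  ∀ R : ℕ, ∃ (γ : ℕ → V d) (n : ℕ), γ 0 = x ∧ IsOpenPath ω γ n ∧ ¬ inBox (γ n) R

/-- The event `Ω_0 = {0 ∈ 𝒞_∞}`. -/
def cluZero (d : ℕ) : Set (Config d) := {ω | memCluster ω 0}

/-- `P` is the Bernoulli bond percolation product measure with parameter `q`. -/
def IsBernoulli (d : ℕ) (q : ℝ) (P : Measure (Config d)) : Prop :=
  IsProbabilityMeasure P ∧
    ∀ (F : Finset (EdgeIx d)) (a : EdgeIx d → Bool),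
      P {ω | ∀ b ∈ F, ω b = a b} = ∏ b ∈ F, ENNReal.ofReal (if a b then q else 1 - q)

/-- The critical probability `p_c(d)` of bond percolation on `ℤ^d`. -/
def pc (d : ℕ) : ℝ :=
  sInf {q : ℝ | q ∈ Set.Icc (0 : ℝ) 1 ∧
    ∀ P : Measure (Config d), IsBernoulli d q P → 0 < P (cluZero d)}

variable {d : ℕ}

/-- Position of the walk after `k` steps, given the sequence of steps `s`. -/
def pos {n : ℕ} (s : Fin n → Step d) (k : ℕ) : V d :=
  ∑ j ∈ Finset.univ.filter (fun j : Fin n => (j : ℕ) < k), (s j).1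

/-- The environment/step pair `(τ_{X_k} ω, X_{k+1} - X_k)` seen at time `k`. -/
def envPair (ω : Config d) {n : ℕ} (s : Fin n → Step d) (k : Fin n) : Config d × Step d :=
  (shift (pos s k) ω, s k)

/-- Quenched probability of a given sequence of `n` steps under the Markov kernel `κ`. -/
def pathProb (κ : Config d → Step d → ℝ) (ω : Config d) {n : ℕ} (s : Fin n → Step d) : ℝ :=
  ∏ k : Fin n, κ (shift (pos s k) ω) (s k)

/-- The SRWPC transition kernel `π`. -/
def srw (d : ℕ) : Config d → Step d → ℝ := fun ω e => trans ω 0 e.1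

/-- Quenched expectation (under `P_0^{κ,ω}`) of a functional of the first `n` steps. -/
def qE (κ : Config d → Step d → ℝ) (ω : Config d) {n : ℕ} (F : (Fin n → Step d) → ℝ) : ℝ :=
  ∑ s : Fin n → Step d, pathProb κ ω s * F s

/-- Quenched probability (under `P_0^{κ,ω}`) of a set of `n`-step trajectories. -/
def qP (κ : Config d → Step d → ℝ) (ω : Config d) {n : ℕ} (A : Set (Fin n → Step d)) : ℝ :=
  ∑ s : Fin n → Step d, A.indicator (fun s' => pathProb κ ω s') s

/-- Quenched probability, `ℝ≥0∞`-valued. -/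
def qPE (κ : Config d → Step d → ℝ) (ω : Config d) {n : ℕ} (A : Set (Fin n → Step d)) : ℝ≥0∞ :=
  ENNReal.ofReal (qP κ ω A)

/-- The environment-step space `Ω_0 × 𝕌_d`. -/
abbrev EnvSp (d : ℕ) := Config d × Step d

/-- The pair empirical measure `ℒ_n` as a measure. -/
def empMeas (ω : Config d) {n : ℕ} (s : Fin n → Step d) : Measure (EnvSp d) :=
  (n : ℝ≥0∞)⁻¹ • ∑ k : Fin n, Measure.dirac (envPair ω s k)

lemma empMeas_isProb (ω : Config d) {n : ℕ} (hn : n ≠ 0) (s : Fin n → Step d) :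
    IsProbabilityMeasure (empMeas ω s) := by
  constructor
  simp only [empMeas, Measure.smul_apply, Measure.coe_finset_sum, Finset.sum_apply,
    Measure.dirac_apply_of_mem (Set.mem_univ _), smul_eq_mul]
  rw [Finset.sum_const, Finset.card_univ, Fintype.card_fin, nsmul_eq_mul, mul_one,
    ENNReal.inv_mul_cancel]
  · exact_mod_cast hn
  · exact ENNReal.natCast_ne_top n

/-- The pair empirical measure `ℒ_{n+1}` as a probability measure. -/
def empPM (ω : Config d) {n : ℕ} (s : Fin (n + 1) → Step d) : ProbabilityMeasure (EnvSp d) :=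
  ⟨empMeas ω s, empMeas_isProb ω (Nat.succ_ne_zero n) s⟩

/-- First marginal `(μ)_1` of a measure on `Ω_0 × 𝕌_d`. -/
def marg1 (μ : Measure (EnvSp d)) : Measure (Config d) := μ.map Prod.fst

/-- Second marginal `(μ)_2` of a measure on `Ω_0 × 𝕌_d`. -/
def marg2 (μ : Measure (EnvSp d)) : Measure (Config d) := μ.map (fun q => shift q.2.1 q.1)

/-- The slice `dμ(·, e)` of a measure on `Ω_0 × 𝕌_d` at a fixed step `e`. -/
def slice (μ : Measure (EnvSp d)) (e : Step d) : Measure (Config d) :=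
  (μ.restrict (Set.univ ×ˢ {e})).map Prod.fst

/-- The space `ℳ_1⋆`: probability measures on `Ω_0 × 𝕌_d` whose two marginals coincide and
are absolutely continuous w.r.t. `P₀`, and whose densities `dμ(ω,e)/d(μ)_1(ω)` are positive
precisely on open edges, `P₀`-a.s. -/
def M1star (d : ℕ) (P₀ : Measure (Config d)) : Set (ProbabilityMeasure (EnvSp d)) :=
  {μ | marg1 μ.toMeasure = marg2 μ.toMeasure ∧ marg1 μ.toMeasure ≪ P₀ ∧
    ∃ ρ : Step d → Config d → ℝ≥0∞, (∀ e, Measurable (ρ e)) ∧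
      (∀ e, slice μ.toMeasure e = (marg1 μ.toMeasure).withDensity (ρ e)) ∧
      (∀ e : Step d, ∀ᵐ ω ∂P₀, (0 < ρ e ω ↔ edgeOpen ω 0 e.1))}

/-- The reference measure `π_ω(0,e) d(μ)_1(ω)` on `Ω_0 × 𝕌_d`. -/
def refM (μ : Measure (EnvSp d)) : Measure (EnvSp d) :=
  Measure.sum (fun e : Step d =>
    ((marg1 μ).withDensity (fun ω => ENNReal.ofReal (trans ω 0 e.1))).map (fun ω => (ω, e)))

/-- `x log x - x + 1`. -/
def klFun (x : ℝ) : ℝ := x * Real.log x - x + 1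

open Classical in
/-- The entropy functional `ℑ` (a relative entropy with respect to `refM μ`;
it equals `∫ Σ_e dμ(ω,e) log[dμ(ω,e) / (d(μ)_1(ω) π_ω(0,e))]` on `ℳ_1⋆` and `∞` otherwise). -/
def entI (P₀ : Measure (Config d)) (μ : ProbabilityMeasure (EnvSp d)) : ℝ≥0∞ :=
  if μ ∈ M1star d P₀ ∧ μ.toMeasure ≪ refM μ.toMeasure then
    ∫⁻ q, ENNReal.ofReal (klFun ((μ.toMeasure.rnDeriv (refM μ.toMeasure)) q).toReal)
      ∂(refM μ.toMeasure)
  else ∞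

/-- The pairing `⟨f, μ⟩`. -/
def pairing (f : EnvSp d → ℝ) (μ : ProbabilityMeasure (EnvSp d)) : ℝ :=
  ∫ q, f q ∂μ.toMeasure

/-- The Fenchel–Legendre transform `ℑ⋆` of `ℑ`. -/
def entIstar (P₀ : Measure (Config d)) (f : BoundedContinuousFunction (EnvSp d) ℝ) : EReal :=
  ⨆ μ : ProbabilityMeasure (EnvSp d),
    ((pairing f μ : ℝ) : EReal) - ((entI P₀ μ : ℝ≥0∞) : EReal)

/-- The double Fenchel–Legendre transform `ℑ⋆⋆` of `ℑ`. -/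
def entIbis (P₀ : Measure (Config d)) (μ : ProbabilityMeasure (EnvSp d)) : EReal :=
  ⨆ f : BoundedContinuousFunction (EnvSp d) ℝ,
    ((pairing f μ : ℝ) : EReal) - entIstar P₀ f

/-- The contraction map `ξ(μ) = ∫ Σ_e e dμ(ω,e)`. -/
def xi (μ : ProbabilityMeasure (EnvSp d)) : Fin d → ℝ :=
  fun i => ∫ q, ((q.2.1 i : ℤ) : ℝ) ∂μ.toMeasure

/-- The mean velocity `X_n / n` of a trajectory. -/
def meanVel {n : ℕ} (s : Fin n → Step d) : Fin d → ℝ :=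
  fun i => (n : ℝ)⁻¹ * ((pos s n) i : ℝ)

/-- The class `Π̃` of environment transition kernels. -/
def PiT (d : ℕ) (P₀ : Measure (Config d)) : Set (Config d → Step d → ℝ) :=
  {κ | (∀ e : Step d, Measurable (fun ω => κ ω e)) ∧
    (∀ ω e, 0 ≤ κ ω e) ∧ (∀ e : Step d, ∀ᵐ ω ∂P₀, κ ω e ≤ 1) ∧
    (∀ᵐ ω ∂P₀, ∑ e : Step d, κ ω e = 1) ∧
    (∀ e : Step d, ∀ᵐ ω ∂P₀, (κ ω e = 0 ↔ trans ω 0 e.1 = 0))}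

/-- `φ dP₀` is an invariant probability density for the kernel `κ`. -/
def IsInvDensity (P₀ : Measure (Config d)) (κ : Config d → Step d → ℝ)
    (φ : Config d → ℝ) : Prop :=
  Measurable φ ∧ (∀ ω, 0 ≤ φ ω) ∧ (∫ ω, φ ω ∂P₀) = 1 ∧
    (∀ᵐ ω ∂P₀, φ ω = ∑ e : Step d, κ (shift (-e.1) ω) e * φ (shift (-e.1) ω))

/-- The set `ℰ` of pairs `(π̃, φ)`. -/
def Epairs (d : ℕ) (P₀ : Measure (Config d)) :
    Set ((Config d → Step d → ℝ) × (Config d → ℝ)) :=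
  {q | q.1 ∈ PiT d P₀ ∧ IsInvDensity P₀ q.1 q.2}

/-- The measure `dμ(ω,e) = π̃(ω,e) φ(ω) dP₀(ω)` associated with a pair `(π̃, φ)`. -/
def pairMeasure (P₀ : Measure (Config d)) (κ : Config d → Step d → ℝ)
    (φ : Config d → ℝ) : Measure (EnvSp d) :=
  Measure.sum (fun e : Step d =>
    (P₀.withDensity (fun ω => ENNReal.ofReal (κ ω e * φ ω))).map (fun ω => (ω, e)))

/-- The kernel `dμ/d(μ)_1` associated with a measure on `Ω_0 × 𝕌_d`. -/
def toKappa (μ : Measure (EnvSp d)) : Config d → Step d → ℝ :=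
  fun ω e => ((slice μ e).rnDeriv (marg1 μ) ω).toReal

/-- The density `d(μ)_1/dP₀` associated with a measure on `Ω_0 × 𝕌_d`. -/
def toPhi (P₀ : Measure (Config d)) (μ : Measure (EnvSp d)) : Config d → ℝ :=
  fun ω => ((marg1 μ).rnDeriv P₀ ω).toReal

/-- The environment Markov transition operator `R_κ`. -/
def kernelStep (κ : Config d → Step d → ℝ) (f : Config d → ℝ) : Config d → ℝ :=
  fun ω => ∑ e : Step d, κ ω e * f (shift e.1 ω)

/-- `Q` is an invariant measure for the environment kernel `R_κ`. -/
def IsInvariant (κ : Config d → Step d → ℝ) (Q : Measure (Config d)) : Prop :=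
  ∀ f : Config d → ℝ, Measurable f → (∃ C, ∀ ω, |f ω| ≤ C) →
    ∫ ω, kernelStep κ f ω ∂Q = ∫ ω, f ω ∂Q

/-- Partial sum `Σ_{k<m} f(τ_{X_k}ω, X_{k+1}-X_k)` along a trajectory of length `N`. -/
def partialSumF (f : EnvSp d → ℝ) (ω : Config d) {N : ℕ} (s : Fin N → Step d) (m : ℕ) : ℝ :=
  ∑ k ∈ Finset.univ.filter (fun k : Fin N => (k : ℕ) < m), f (envPair ω s k)

/-- The sum of `G` along the path `γ` up to time `n`. -/
def pathSum (G : Config d → V d → ℝ) (ω : Config d) (γ : ℕ → V d) (n : ℕ) : ℝ :=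
  ∑ k ∈ Finset.range n, G (shift (γ k) ω) (γ (k + 1) - γ k)

/-- The class `𝒢_∞` of gradients: zero mean, uniformly bounded, closed loops. -/
def Ginfty (d : ℕ) (P₀ : Measure (Config d)) : Set (Config d → V d → ℝ) :=
  {G | (∀ e ∈ Ud d, Measurable (fun ω => G ω e)) ∧
    (∀ e ∈ Ud d, ∫ ω, G ω e ∂P₀ = 0) ∧
    (∃ M : ℝ, ∀ e ∈ Ud d, ∀ᵐ ω ∂P₀, |G ω e| ≤ M) ∧
    (∀ᵐ ω ∂P₀, ∀ (γ : ℕ → V d) (n : ℕ),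
      memCluster ω (γ 0) → IsOpenPath ω γ n → γ n = γ 0 → pathSum G ω γ n = 0)}

open Classical in
/-- The corrector `Ψ(ω,x)`: the sum of `G` along some open path from `0` to `x`. -/
def corr (G : Config d → V d → ℝ) (ω : Config d) (x : V d) : ℝ :=
  if h : ∃ q : (ℕ → V d) × ℕ, q.1 0 = 0 ∧ q.1 q.2 = x ∧ IsOpenPath ω q.1 q.2
  then pathSum G ω h.choose.1 h.choose.2 else 0

/-- The chemical distance: minimal length of an open path joining `x` and `y`. -/
def chemDist (ω : Config d) (x y : V d) : ℕ :=
  sInf {n : ℕ | ∃ γ : ℕ → V d, γ 0 = x ∧ γ n = y ∧ IsOpenPath ω γ n}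

open Classical in
/-- The functional `Λ(f,G)`. -/
def Lam (P₀ : Measure (Config d)) (f : EnvSp d → ℝ) (G : Config d → V d → ℝ) : EReal :=
  essSup (fun ω => ((Real.log (∑ e : Step d,
    if edgeOpen ω 0 e.1 then trans ω 0 e.1 * Real.exp (f (ω, e) + G ω e.1) else 0)) : EReal)) P₀

/-- The variational formula `H̄(f) = sup_{μ ∈ ℳ_1⋆} {⟨f,μ⟩ - ℑ(μ)}`. -/
def Hbar (P₀ : Measure (Config d)) (f : EnvSp d → ℝ) : EReal :=
  ⨆ μ ∈ M1star d P₀, ((pairing f μ : ℝ) : EReal) - ((entI P₀ μ : ℝ≥0∞) : EReal)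

/-- The finite σ-algebra `𝓑_k` recording all bonds in the box of size `k` around the origin. -/
def Bsig (d k : ℕ) : MeasurableSpace (Config d) :=
  MeasurableSpace.comap
    (fun (ω : Config d) (b : {b : EdgeIx d // ∀ i, |b.1 i| ≤ (k : ℤ)}) => ω b.1) inferInstance

end SRWPC

set_option linter.unusedSectionVars false

namespace SRWPC
/-! ### Finite graph exploration estimate -/

section FiniteGraph

variable {B X : Type*}

/-- Adjacency through an open bond. -/
def GAdj (s t : B → X) (a : B → Bool) (x y : X) : Prop :=
  ∃ b, a b = true ∧ ((s b = x ∧ t b = y) ∨ (s b = y ∧ t b = x))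

/-- Connectivity through open bonds. -/
def GCon (s t : B → X) (a : B → Bool) : X → X → Prop := Relation.ReflTransGen (GAdj s t a)

lemma GAdj.symm {s t : B → X} {a : B → Bool} {x y : X} (h : GAdj s t a x y) :
    GAdj s t a y x := by
  obtain ⟨b, hb, h⟩ := h
  exact ⟨b, hb, h.symm⟩

lemma GCon.symm {s t : B → X} {a : B → Bool} {x y : X} (h : GCon s t a x y) :
    GCon s t a y x := by
  induction h with
  | refl => exact Relation.ReflTransGen.refl
  | tail _ h2 ih => exact Relation.ReflTransGen.head h2.symm ih

lemma GCon.trans {s t : B → X} {a : B → Bool} {x y z : X} (h : GCon s t a x y)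
    (h2 : GCon s t a y z) : GCon s t a x z := Relation.ReflTransGen.trans h h2

lemma GCon.bond {s t : B → X} {a : B → Bool} {b : B} (h : a b = true) :
    GCon s t a (s b) (t b) := Relation.ReflTransGen.single ⟨b, h, Or.inl ⟨rfl, rfl⟩⟩

variable [Fintype B] [DecidableEq B]

lemma sum_pi_cyl (S : Finset B) (c : B → Bool) (g h : Bool → ℝ) (hg : g true + g false = 1) :
    ∑ a ∈ Finset.univ.filter (fun a : B → Bool => ∀ b ∈ S, a b = c b),
      ∏ b, (if b ∈ S then h (a b) else g (a b)) = ∏ b, (if b ∈ S then h (c b) else 1) := by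
  have e : Finset.univ.filter (fun a : B → Bool => ∀ b ∈ S, a b = c b) =
      Fintype.piFinset (fun b => if b ∈ S then {c b} else Finset.univ) := by
    ext a
    simp only [Finset.mem_filter, Finset.mem_univ, true_and, Fintype.mem_piFinset]
    constructor
    · intro H b
      by_cases hb : b ∈ S
      · simp [hb, H b hb]
      · simp [hb]
    · intro H b hb
      have := H b
      simpa [hb] using this
  rw [e, ← Finset.prod_univ_sum (fun b => if b ∈ S then {c b} else Finset.univ)
    (fun b v => if b ∈ S then h v else g v)]
  refine Finset.prod_congr rfl fun b _ => ?_
  by_cases hb : b ∈ S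
  · simp [hb]
  · simp [hb, hg]

lemma stop_sum (T : (B → Bool) → Finset B)
    (hT : ∀ a c, (∀ b ∈ T c, a b = c b) → T a = T c)
    (g h : Bool → ℝ) (hg : g true + g false = 1) (hh : h true + h false = 1) :
    ∑ a : B → Bool, ∏ b, (if b ∈ T a then h (a b) else g (a b)) = 1 := by
  have key : ∀ g : Bool → ℝ, g true + g false = 1 →
      ∑ a : B → Bool, ∏ b, (if b ∈ T a then h (a b) else g (a b)) =
      ∑ a : B → Bool, ∏ b, (if b ∈ T a then h (a b) else h (a b)) := by
    intro g hg
    rw [← Finset.sum_fiberwise Finset.univ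
        (fun a => (T a, fun b => if b ∈ T a then a b else false)),
      ← Finset.sum_fiberwise (f := fun a => ∏ b, (if b ∈ T a then h (a b) else h (a b)))
        Finset.univ (fun a => (T a, fun b => if b ∈ T a then a b else false))]
    refine Finset.sum_congr rfl fun j _ => ?_
    by_cases hne : ∃ c, (T c, fun b => if b ∈ T c then c b else false) = j
    · obtain ⟨c, rfl⟩ := hne
      have e : Finset.univ.filter (fun a : B → Bool =>
          (T a, fun b => if b ∈ T a then a b else false) =
          (T c, fun b => if b ∈ T c then c b else false)) =
          Finset.univ.filter (fun a : B → Bool => ∀ b ∈ T c, a b = c b) := by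
        ext a
        simp only [Finset.mem_filter, Finset.mem_univ, true_and, Prod.mk.injEq]
        constructor
        · rintro ⟨h1, h2⟩ b hb
          have := congrFun h2 b
          simpa [h1, hb] using this
        · intro H
          have h1 := hT a c H
          refine ⟨h1, ?_⟩
          funext b
          by_cases hb : b ∈ T c
          · simp [h1, hb, H b hb]
          · simp [h1, hb]
      rw [e]
      have e2 : ∀ g : Bool → ℝ, ∑ a ∈ Finset.univ.filter
          (fun a : B → Bool => ∀ b ∈ T c, a b = c b),
          ∏ b, (if b ∈ T a then h (a b) else g (a b)) = ∑ a ∈ Finset.univ.filter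
          (fun a : B → Bool => ∀ b ∈ T c, a b = c b),
          ∏ b, (if b ∈ T c then h (a b) else g (a b)) := by
        intro g
        refine Finset.sum_congr rfl fun a ha => ?_
        rw [hT a c (by simpa using ha)]
      rw [e2, e2, sum_pi_cyl _ _ _ _ hg, sum_pi_cyl _ _ _ _ hh]
    · rw [Finset.filter_false_of_mem, Finset.sum_empty, Finset.sum_empty]
      intro a _ ha
      exact hne ⟨a, ha⟩
  rw [key g hg]
  simp only [ite_self]
  have := Finset.prod_univ_sum (fun _ : B => (Finset.univ : Finset Bool)) (fun _ v => h v)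
  rw [Fintype.piFinset_univ] at this
  rw [← this]
  simp [hh]

open Classical in
/-- bonds touching the cluster of `x` -/
def touchSet (s t : B → X) (x : X) (a : B → Bool) : Finset B :=
  Finset.univ.filter (fun b => GCon s t a x (s b) ∨ GCon s t a x (t b))

lemma touchSet_stop (s t : B → X) (x : X) (a c : B → Bool)
    (H : ∀ b ∈ touchSet s t x c, a b = c b) : touchSet s t x a = touchSet s t x c := by
  have h1 : ∀ y, GCon s t c x y → GCon s t a x y := by
    intro y hy
    induction hy with
    | refl => exact Relation.ReflTransGen.refl
    | tail h1 h2 ih =>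
      obtain ⟨b, hb, h3⟩ := h2
      refine ih.tail ⟨b, ?_, h3⟩
      rw [H b, hb]
      rcases h3 with h3 | h3
      · simp only [touchSet, Finset.mem_filter, Finset.mem_univ, true_and]
        exact Or.inl (by rw [h3.1]; exact h1)
      · simp only [touchSet, Finset.mem_filter, Finset.mem_univ, true_and]
        exact Or.inr (by rw [h3.2]; exact h1)
  have h2 : ∀ y, GCon s t a x y → GCon s t c x y := by
    intro y hy
    induction hy with
    | refl => exact Relation.ReflTransGen.refl
    | tail h1 h2 ih =>
      obtain ⟨b, hb, h3⟩ := h2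
      refine ih.tail ⟨b, ?_, h3⟩
      rw [← H b, hb]
      rcases h3 with h3 | h3
      · simp only [touchSet, Finset.mem_filter, Finset.mem_univ, true_and]
        exact Or.inl (by rw [h3.1]; exact ih)
      · simp only [touchSet, Finset.mem_filter, Finset.mem_univ, true_and]
        exact Or.inr (by rw [h3.2]; exact ih)
  ext b
  simp only [touchSet, Finset.mem_filter, Finset.mem_univ, true_and]
  constructor
  · rintro (h | h)
    exacts [Or.inl (h2 _ h), Or.inr (h2 _ h)]
  · rintro (h | h)
    exacts [Or.inl (h1 _ h), Or.inr (h1 _ h)]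

/-- one-bond weight -/
def bw (q : ℝ) (v : Bool) : ℝ := if v then q else 1 - q

lemma bw_sum (q : ℝ) : bw q true + bw q false = 1 := by simp [bw]

lemma bw_pos {q : ℝ} (h0 : 0 < q) (h1 : q < 1) (v : Bool) : 0 < bw q v := by
  cases v <;> simp [bw] <;> linarith

/-- configuration weight -/
def wt (q : ℝ) (a : B → Bool) : ℝ := ∏ b, bw q (a b)

lemma wt_pos {q : ℝ} (h0 : 0 < q) (h1 : q < 1) (a : B → Bool) : 0 < wt q a :=
  Finset.prod_pos fun _ _ => bw_pos h0 h1 _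

lemma wt_sum (q : ℝ) : ∑ a : B → Bool, wt q a = 1 := by
  have := stop_sum (B := B) (fun _ => ∅) (fun _ _ _ => rfl) (bw q) (bw q) (bw_sum q) (bw_sum q)
  simpa [wt] using this

/-- log likelihood ratio of one bond -/
def lr (p q : ℝ) (v : Bool) : ℝ := Real.log (bw q v / bw p v)

lemma sum_Z (s t : B → X) (x : X) {p q : ℝ} (hp0 : 0 < p) (hp1 : p < 1) (hq0 : 0 < q)
    (hq1 : q < 1) :
    ∑ a : B → Bool, wt p a * Real.exp (∑ b ∈ touchSet s t x a, lr p q (a b)) = 1 := by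
  rw [← stop_sum (touchSet s t x) (touchSet_stop s t x) (bw p) (bw q) (bw_sum p) (bw_sum q)]
  refine Finset.sum_congr rfl fun a _ => ?_
  rw [Real.exp_sum, ← Finset.prod_ite_mem_eq, wt, ← Finset.prod_mul_distrib]
  refine Finset.prod_congr rfl fun b _ => ?_
  have := bw_pos hp0 hp1 (a b)
  have := bw_pos hq0 hq1 (a b)
  split_ifs
  · rw [lr, Real.exp_log (by positivity)]
    field_simp
  · simp

open Classical in
/-- bond `b` touches the cluster of some vertex in `W` -/
def touchW (s t : B → X) (W : Finset X) (a : B → Bool) (b : B) : Prop :=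
  ∃ x ∈ W, GCon s t a x (s b) ∨ GCon s t a x (t b)

/-- bond `b` is closed and joins two distinct clusters meeting `W` -/
def dbl (s t : B → X) (W : Finset X) (a : B → Bool) (b : B) : Prop :=
  a b = false ∧ (∃ x ∈ W, GCon s t a x (s b)) ∧ (∃ x ∈ W, GCon s t a x (t b)) ∧
    ¬ GCon s t a (s b) (t b)

lemma GCon_update_aux (s t : B → X) (W : Finset X) (a : B → Bool) (b : B) (v : Bool) (x y : X)
    (hx : x ∈ W) (h : GCon s t (Function.update a b v) x y) :
    GCon s t a x y ∨ touchW s t W a b := by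
  induction h with
  | refl => exact Or.inl Relation.ReflTransGen.refl
  | tail h1 h2 ih =>
    rcases ih with ih | ih
    · obtain ⟨c, hc, h3⟩ := h2
      by_cases hcb : c = b
      · subst hcb
        right
        refine ⟨x, hx, ?_⟩
        rcases h3 with h3 | h3
        · exact Or.inl (by rw [h3.1]; exact ih)
        · exact Or.inr (by rw [h3.2]; exact ih)
      · rw [Function.update_of_ne hcb] at hc
        exact Or.inl (ih.tail ⟨c, hc, h3⟩)
    · exact Or.inr ih

lemma touchW_update (s t : B → X) (W : Finset X) (a : B → Bool) (b : B) (v : Bool) :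
    touchW s t W (Function.update a b v) b ↔ touchW s t W a b := by
  have key : ∀ (a : B → Bool) v, touchW s t W (Function.update a b v) b → touchW s t W a b := by
    rintro a v ⟨x, hx, h | h⟩
    · rcases GCon_update_aux s t W a b v x _ hx h with h | h
      exacts [⟨x, hx, Or.inl h⟩, h]
    · rcases GCon_update_aux s t W a b v x _ hx h with h | h
      exacts [⟨x, hx, Or.inr h⟩, h]
  refine ⟨key a v, fun h => key _ (a b) ?_⟩
  simpa using h

open Classical in
lemma sum_touch (s t : B → X) (W : Finset X) (p : ℝ) (f : Bool → ℝ) (b : B)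
    (hf : bw p true * f true + bw p false * f false = 0) :
    ∑ a : B → Bool, wt p a * (if touchW s t W a b then f (a b) else 0) = 0 := by
  refine Finset.sum_involution (fun a _ => Function.update a b (!(a b))) ?_ ?_ ?_ ?_
  · intro a _
    have h1 : ∀ c : B → Bool, wt p c = bw p (c b) * ∏ x ∈ Finset.univ.erase b, bw p (c x) :=
      fun c => (Finset.mul_prod_erase _ _ (Finset.mem_univ b)).symm
    have h2 : ∏ x ∈ Finset.univ.erase b, bw p (Function.update a b (!(a b)) x) =
        ∏ x ∈ Finset.univ.erase b, bw p (a x) := by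
      refine Finset.prod_congr rfl fun x hx => ?_
      rw [Function.update_of_ne (Finset.ne_of_mem_erase hx)]
    rw [h1 a, h1 (Function.update a b _), h2]
    simp only [touchW_update, Function.update_self]
    split_ifs
    · cases hab : a b
      · simp only [Bool.not_false]
        linear_combination (∏ x ∈ Finset.univ.erase b, bw p (a x)) * hf
      · simp only [Bool.not_true]
        linear_combination (∏ x ∈ Finset.univ.erase b, bw p (a x)) * hf
    · simp
  · intro a _ _ h
    have := congrFun h b
    simp at this
  · intro a _
    exact Finset.mem_univ _
  · intro a _
    simp

open Classical in
/-- Pointwise estimate: clusters meeting `W`, counted with their log likelihood ratio. -/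
lemma pointwise_est (s t : B → X) (W : Finset X) (a : B → Bool) (f : Bool → ℝ)
    (hf1 : f true ≤ 0) (hf0 : 0 ≤ f false) :
    ∑ b, (if touchW s t W a b then f (a b) else 0) +
      f false * ∑ b, (if dbl s t W a b then (1 : ℝ) else 0) ≤
    ∑ x ∈ W, Real.exp (∑ b ∈ touchSet s t x a, f (a b)) := by
  let cl : X → Set X := fun x => {y | GCon s t a x y}
  have hcl : ∀ x y, GCon s t a x y → cl x = cl y := by
    intro x y h
    ext z
    exact ⟨fun h2 => h.symm.trans h2, fun h2 => h.trans h2⟩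
  let F : Set X → ℝ := fun C => ∑ b, if s b ∈ C ∨ t b ∈ C then f (a b) else 0
  have hF : ∀ x, ∑ b ∈ touchSet s t x a, f (a b) = F (cl x) := by
    intro x
    rw [touchSet, Finset.sum_filter]
    rfl
  have h1 : ∑ C ∈ W.image cl, F C ≤ ∑ x ∈ W, Real.exp (F (cl x)) := by
    calc ∑ C ∈ W.image cl, F C ≤ ∑ C ∈ W.image cl, Real.exp (F C) := by
          refine Finset.sum_le_sum fun C _ => ?_
          linarith [Real.add_one_le_exp (F C)]
      _ ≤ ∑ C ∈ W.image cl, ∑ x ∈ W with cl x = C, Real.exp (F (cl x)) := by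
          refine Finset.sum_le_sum fun C hC => ?_
          obtain ⟨x, hx, rfl⟩ := Finset.mem_image.1 hC
          refine Finset.single_le_sum (f := fun x => Real.exp (F (cl x)))
            (fun _ _ => (Real.exp_pos _).le) ?_
          simp [hx]
      _ = ∑ x ∈ W, Real.exp (F (cl x)) :=
          Finset.sum_fiberwise_of_maps_to (fun x hx => Finset.mem_image_of_mem _ hx) _
  simp only [hF]
  refine le_trans ?_ h1
  simp only [F]
  rw [Finset.sum_comm, Finset.mul_sum, ← Finset.sum_add_distrib]
  refine Finset.sum_le_sum fun b _ => ?_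
  have hN : ∑ C ∈ W.image cl, (if s b ∈ C ∨ t b ∈ C then f (a b) else 0) =
      (((W.image cl).filter (fun C => s b ∈ C ∨ t b ∈ C)).card : ℝ) * f (a b) := by
    rw [← Finset.sum_filter, Finset.sum_const, nsmul_eq_mul]
  rw [hN]
  set N := (W.image cl).filter (fun C => s b ∈ C ∨ t b ∈ C) with hNdef
  have memN : ∀ C, C ∈ N ↔ ∃ x ∈ W, cl x = C ∧ (s b ∈ C ∨ t b ∈ C) := by
    intro C
    simp only [hNdef, Finset.mem_filter, Finset.mem_image]
    constructor
    · rintro ⟨⟨x, hx, h⟩, h2⟩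
      exact ⟨x, hx, h, h2⟩
    · rintro ⟨x, hx, h, h2⟩
      exact ⟨⟨x, hx, h⟩, h2⟩
  have hts : touchW s t W a b → 1 ≤ N.card := by
    rintro ⟨x, hx, h⟩
    refine Finset.card_pos.2 ⟨cl x, (memN _).2 ⟨x, hx, rfl, h⟩⟩
  cases hab : a b
  · have hdt : dbl s t W a b → touchW s t W a b := by
      rintro ⟨_, ⟨x, hx, h⟩, _⟩
      exact ⟨x, hx, Or.inl h⟩
    have hd2 : dbl s t W a b → 2 ≤ N.card := by
      rintro ⟨_, ⟨x, hx, h⟩, ⟨y, hy, h'⟩, hn⟩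
      refine Finset.one_lt_card.2 ⟨cl x, (memN _).2 ⟨x, hx, rfl, Or.inl h⟩, cl y,
        (memN _).2 ⟨y, hy, rfl, Or.inr h'⟩, ?_⟩
      intro he
      apply hn
      have : t b ∈ cl x := by rw [he]; exact h'
      exact (GCon.symm h).trans this
    by_cases hd : dbl s t W a b
    · have h2 : (2 : ℝ) ≤ N.card := by exact_mod_cast hd2 hd
      simp only [hd, hdt hd, if_true]
      nlinarith
    · by_cases ht : touchW s t W a b
      · have h2 : (1 : ℝ) ≤ N.card := by exact_mod_cast hts ht
        simp only [hd, ht, if_true, if_false]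
        nlinarith
      · simp only [hd, ht, if_false]
        have : (0 : ℝ) ≤ N.card := by positivity
        nlinarith
  · have hd : ¬ dbl s t W a b := by
      rintro ⟨h, _⟩
      rw [hab] at h
      exact absurd h (by decide)
    have hsub : N ⊆ {cl (s b)} := by
      intro C hC
      obtain ⟨x, hx, rfl, h⟩ := (memN _).1 hC
      rw [Finset.mem_singleton]
      rcases h with h | h
      · exact hcl _ _ h
      · exact hcl _ _ (GCon.trans h (GCon.bond hab).symm)
    have hc1 : N.card ≤ 1 := by simpa using Finset.card_le_card hsub
    by_cases ht : touchW s t W a b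
    · have h2 : (N.card : ℝ) ≤ 1 := by exact_mod_cast hc1
      simp only [hd, ht, if_true, if_false]
      nlinarith
    · have : N = ∅ := by
        rw [Finset.eq_empty_iff_forall_notMem]
        intro C hC
        obtain ⟨x, hx, rfl, h⟩ := (memN _).1 hC
        exact ht ⟨x, hx, h⟩
      simp [hd, ht, this]

open Classical in
/-- Expected number of bonds joining two distinct clusters meeting `W`. -/
lemma two_arm_finite (s t : B → X) (W : Finset X) {p q : ℝ} (hp1 : p < 1) (hq0 : 0 < q)
    (hqp : q < p) :
    ∑ b, ∑ a : B → Bool, wt p a * (if dbl s t W a b then (1 : ℝ) else 0) ≤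
      (1 - q) / (p - q) * W.card + (p - q) / q * Fintype.card B := by
  have hp0 : 0 < p := hq0.trans hqp
  have hq1 : q < 1 := hqp.trans hp1
  set f := lr p q with hf
  have f1 : f true ≤ 0 := by
    simp only [hf, lr, bw, if_true]
    exact Real.log_nonpos (by positivity) (by rw [div_le_one hp0]; exact hqp.le)
  have f0 : (p - q) / (1 - q) ≤ f false := by
    simp only [hf, lr, bw]
    have := Real.one_sub_inv_le_log_of_pos (x := (1 - q) / (1 - p)) (by
      apply div_pos <;> linarith)
    simp only [Bool.false_eq_true, if_false]
    refine le_trans (le_of_eq ?_) this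
    have : 1 - q ≠ 0 := by linarith
    have : 1 - p ≠ 0 := by linarith
    field_simp
    ring
  have f0' : 0 ≤ f false := le_trans (div_nonneg (by linarith) (by linarith)) f0
  set K := bw p true * f true + bw p false * f false with hK
  have hKge : -((p - q) ^ 2 / (q * (1 - q))) ≤ K := by
    have e1 := Real.one_sub_inv_le_log_of_pos (x := q / p) (by positivity)
    have e0 := Real.one_sub_inv_le_log_of_pos (x := (1 - q) / (1 - p)) (by
      apply div_pos <;> linarith)
    simp only [hK, hf, lr, bw, if_true, Bool.false_eq_true, if_false]
    have g1 := mul_le_mul_of_nonneg_left e1 hp0.le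
    have g0 := mul_le_mul_of_nonneg_left e0 (by linarith : 0 ≤ 1 - p)
    refine le_trans (le_of_eq ?_) (add_le_add g1 g0)
    have : 1 - q ≠ 0 := by linarith
    have : 1 - p ≠ 0 := by linarith
    field_simp
    ring
  have main := Finset.sum_le_sum (s := (Finset.univ : Finset (B → Bool))) (fun a _ =>
    mul_le_mul_of_nonneg_left (pointwise_est s t W a f f1 f0') (wt_pos hp0 hp1 a).le)
  have R : ∑ a : B → Bool, wt p a * ∑ x ∈ W, Real.exp (∑ b ∈ touchSet s t x a, f (a b)) =
      W.card := by
    simp only [Finset.mul_sum]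
    rw [Finset.sum_comm]
    simp only [hf, sum_Z s t _ hp0 hp1 hq0 hq1, Finset.sum_const, nsmul_eq_mul, mul_one]
  rw [R] at main
  simp only [mul_add, Finset.sum_add_distrib] at main
  have L1 : -((p - q) ^ 2 / (q * (1 - q))) * Fintype.card B ≤
      ∑ a : B → Bool, wt p a * ∑ b, (if touchW s t W a b then f (a b) else 0) := by
    simp only [Finset.mul_sum]
    rw [Finset.sum_comm]
    have : ∀ b, K ≤ ∑ a : B → Bool, wt p a * (if touchW s t W a b then f (a b) else 0) := by
      intro b
      have h0 := sum_touch s t W p (fun v => f v - K) b (by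
        have := bw_sum p
        linear_combination (-K) * this + hK.symm)
      have h1 : ∑ a : B → Bool, wt p a * (if touchW s t W a b then f (a b) else 0) =
          ∑ a : B → Bool, wt p a * (if touchW s t W a b then K else 0) := by
        rw [← sub_eq_zero, ← Finset.sum_sub_distrib, ← h0]
        refine Finset.sum_congr rfl fun a _ => ?_
        split_ifs <;> ring
      rw [h1]
      have hKneg : K ≤ 0 := by
        have e1 := Real.log_le_sub_one_of_pos (x := q / p) (by positivity)
        have e0 := Real.log_le_sub_one_of_pos (x := (1 - q) / (1 - p)) (by
          apply div_pos <;> linarith)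
        simp only [hK, hf, lr, bw, if_true, Bool.false_eq_true, if_false]
        have g1 := mul_le_mul_of_nonneg_left e1 hp0.le
        have g0 := mul_le_mul_of_nonneg_left e0 (by linarith : 0 ≤ 1 - p)
        refine le_trans (add_le_add g1 g0) (le_of_eq ?_)
        have : 1 - p ≠ 0 := by linarith
        field_simp
        ring
      calc K = ∑ a : B → Bool, wt p a * K := by rw [← Finset.sum_mul, wt_sum, one_mul]
        _ ≤ _ := by
          refine Finset.sum_le_sum fun a _ => mul_le_mul_of_nonneg_left ?_ (wt_pos hp0 hp1 a).le
          split_ifs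
          exacts [le_rfl, hKneg]
    calc _ ≤ K * Fintype.card B := mul_le_mul_of_nonneg_right hKge (by positivity)
      _ = ∑ _b : B, K := by simp [mul_comm]
      _ ≤ _ := Finset.sum_le_sum fun b _ => this b
  have L2 : ∑ a : B → Bool, wt p a * (f false * ∑ b, (if dbl s t W a b then (1 : ℝ) else 0)) =
      f false * ∑ b, ∑ a : B → Bool, wt p a * (if dbl s t W a b then (1 : ℝ) else 0) := by
    rw [Finset.sum_comm]
    simp only [Finset.mul_sum]
    refine Finset.sum_congr rfl fun a _ => Finset.sum_congr rfl fun b _ => ?_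
    ring
  rw [L2] at main
  set D := ∑ b, ∑ a : B → Bool, wt p a * (if dbl s t W a b then (1 : ℝ) else 0) with hD
  have hD0 : 0 ≤ D := Finset.sum_nonneg fun b _ => Finset.sum_nonneg fun a _ =>
    mul_nonneg (wt_pos hp0 hp1 a).le (by split_ifs <;> norm_num)
  have fin := mul_le_mul_of_nonneg_right f0 hD0
  have hpq : 0 < p - q := by linarith
  have hq1' : 0 < 1 - q := by linarith
  have : (p - q) / (1 - q) * D ≤ W.card + (p - q) ^ 2 / (q * (1 - q)) * Fintype.card B := by
    linarith
  calc D = (1 - q) / (p - q) * ((p - q) / (1 - q) * D) := by field_simp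
    _ ≤ (1 - q) / (p - q) * (W.card + (p - q) ^ 2 / (q * (1 - q)) * Fintype.card B) :=
      mul_le_mul_of_nonneg_left this (by positivity)
    _ = _ := by field_simp

end FiniteGraph
/-! ### Lattice connectivity -/

section Lattice

variable {d : ℕ}

/-- upper endpoint of a bond -/
def tip (b : EdgeIx d) : V d := b.1 + unitVec d b.2

/-- connectivity in the configuration -/
def Con (ω : Config d) : V d → V d → Prop := GCon Prod.fst tip ω

lemma adj_iff (ω : Config d) (x y : V d) :
    GAdj Prod.fst tip ω x y ↔ edgeOpen ω x (y - x) := by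
  constructor
  · rintro ⟨⟨z, i⟩, hb, ⟨h1, h2⟩ | ⟨h1, h2⟩⟩
    · simp only [tip] at h1 h2
      subst h1 h2
      exact ⟨i, Or.inl ⟨by abel, hb⟩⟩
    · simp only [tip] at h1 h2
      subst h1 h2
      exact ⟨i, Or.inr ⟨by abel, by simpa using hb⟩⟩
  · rintro ⟨i, ⟨h1, h2⟩ | ⟨h1, h2⟩⟩
    · exact ⟨(x, i), h2, Or.inl ⟨rfl, by simp [tip, ← h1]⟩⟩
    · refine ⟨(x - unitVec d i, i), h2, Or.inr ⟨?_, by simp [tip]⟩⟩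
      have : unitVec d i = x - y := by rw [← neg_inj, ← h1]; abel
      simp [this]

lemma edgeOpen_mem {ω : Config d} {x e : V d} (h : edgeOpen ω x e) : e ∈ Ud d := by
  obtain ⟨i, ⟨h1, _⟩ | ⟨h1, _⟩⟩ := h
  · simp [Ud, h1]
  · simp [Ud, h1]

lemma isOpenPath_con {ω : Config d} {γ : ℕ → V d} {n : ℕ} (h : IsOpenPath ω γ n) :
    Con ω (γ 0) (γ n) := by
  induction n with
  | zero => exact Relation.ReflTransGen.refl
  | succ n ih =>
    exact (ih (fun k hk => h k (by omega))).tail ((adj_iff _ _ _).2 (h n (by omega)).2)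

lemma con_path {ω : Config d} {x y : V d} (h : Con ω x y) :
    ∃ (γ : ℕ → V d) (n : ℕ), γ 0 = x ∧ γ n = y ∧ IsOpenPath ω γ n := by
  induction h with
  | refl => exact ⟨fun _ => x, 0, rfl, rfl, fun k hk => by omega⟩
  | @tail y z _ h2 ih =>
    obtain ⟨γ, n, h0, h1, hp⟩ := ih
    refine ⟨fun k => if k ≤ n then γ k else z, n + 1, by simp [h0], by simp, ?_⟩
    intro k hk
    by_cases hkn : k < n
    · have := hp k hkn
      simpa [hkn.le, Nat.succ_le_of_lt hkn] using this
    · have : k = n := by omega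
      subst this
      have := (adj_iff _ _ _).1 h2
      simp only [le_refl, if_true, h1, Nat.not_succ_le_self, if_false]
      exact ⟨edgeOpen_mem this, this⟩

lemma memCluster_iff (ω : Config d) (x : V d) :
    memCluster ω x ↔ ∀ R : ℕ, ∃ y, Con ω x y ∧ ¬ inBox y R := by
  constructor
  · intro h R
    obtain ⟨γ, n, h0, hp, hb⟩ := h R
    exact ⟨γ n, h0 ▸ isOpenPath_con hp, hb⟩
  · intro h R
    obtain ⟨y, hc, hb⟩ := h R
    obtain ⟨γ, n, h0, h1, hp⟩ := con_path hc
    exact ⟨γ, n, h0, hp, h1 ▸ hb⟩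

lemma memCluster_of_con {ω : Config d} {x y : V d} (h : Con ω x y) (hy : memCluster ω y) :
    memCluster ω x := by
  rw [memCluster_iff] at *
  intro R
  obtain ⟨z, hz, hb⟩ := hy R
  exact ⟨z, GCon.trans h hz, hb⟩

lemma con_mono {ω ω' : Config d} (h : ∀ b, ω b = true → ω' b = true) {x y : V d}
    (hc : Con ω x y) : Con ω' x y :=
  Relation.ReflTransGen.mono (r := GAdj Prod.fst tip ω) (p := GAdj Prod.fst tip ω')
    (fun _ _ ⟨b, hb, h2⟩ => ⟨b, h b hb, h2⟩) _ _ hc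

lemma memCluster_mono {ω ω' : Config d} (h : ∀ b, ω b = true → ω' b = true) {x : V d}
    (hc : memCluster ω x) : memCluster ω' x := by
  rw [memCluster_iff] at *
  intro R
  obtain ⟨z, hz, hb⟩ := hc R
  exact ⟨z, con_mono h hz, hb⟩

lemma shift_shift (x y : V d) (ω : Config d) : shift x (shift y ω) = shift (x + y) ω := by
  funext b
  simp [shift, add_assoc]

lemma shift_zero (ω : Config d) : shift 0 ω = ω := by
  funext b
  simp [shift]

lemma con_shift_of {z : V d} {ω : Config d} {x y : V d} (h : Con ω x y) :
    Con (shift z ω) (x - z) (y - z) := by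
  induction h with
  | refl => exact Relation.ReflTransGen.refl
  | tail _ h2 ih =>
    obtain ⟨⟨u, i⟩, hb, h3⟩ := h2
    refine ih.tail ⟨(u - z, i), by simpa [shift] using hb, ?_⟩
    rcases h3 with ⟨h3, h4⟩ | ⟨h3, h4⟩
    · exact Or.inl ⟨by simp [← h3], by rw [← h4]; simp only [tip]; abel⟩
    · exact Or.inr ⟨by simp [← h3], by rw [← h4]; simp only [tip]; abel⟩

lemma con_shift (z : V d) (ω : Config d) (x y : V d) :
    Con (shift z ω) x y ↔ Con ω (x + z) (y + z) := by
  constructor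
  · intro h
    have := con_shift_of (z := -z) h
    rwa [shift_shift, neg_add_cancel, shift_zero, sub_neg_eq_add, sub_neg_eq_add] at this
  · intro h
    have := con_shift_of (z := z) h
    simpa using this

lemma inBox_add {y z : V d} {R : ℕ} (h : inBox y R) :
    inBox (y + z) ((R + ∑ i, (z i).natAbs : ℕ) : ℝ) := by
  intro i
  have h1 := h i
  have h2 : (z i).natAbs ≤ ∑ i, (z i).natAbs :=
    Finset.single_le_sum (f := fun i => (z i).natAbs) (fun _ _ => Nat.zero_le _)
      (Finset.mem_univ i)
  have h3 : ((z i).natAbs : ℝ) = |(z i : ℝ)| := by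
    rw [Nat.cast_natAbs]; simp
  have h4 : |(z i : ℝ)| ≤ ((∑ i, (z i).natAbs : ℕ) : ℝ) := by
    rw [← h3]; exact_mod_cast h2
  simp only [Pi.add_apply, Int.cast_add]
  rw [Nat.cast_add]
  exact (abs_add_le _ _).trans (add_le_add h1 h4)

lemma memCluster_shift_of {z : V d} {ω : Config d} {x : V d} (h : memCluster ω x) :
    memCluster (shift z ω) (x - z) := by
  rw [memCluster_iff] at *
  intro R
  obtain ⟨y, hy, hb⟩ := h (R + ∑ i, (z i).natAbs)
  refine ⟨y - z, con_shift_of hy, fun h => hb ?_⟩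
  have := inBox_add (z := z) h
  rwa [sub_add_cancel] at this

lemma memCluster_shift (z : V d) (ω : Config d) (x : V d) :
    memCluster (shift z ω) x ↔ memCluster ω (x + z) := by
  constructor
  · intro h
    have := memCluster_shift_of (z := -z) h
    rwa [shift_shift, neg_add_cancel, shift_zero, sub_neg_eq_add] at this
  · intro h
    have := memCluster_shift_of (z := z) h
    simpa using this

lemma edgeOpen_shift (z : V d) (ω : Config d) (x e : V d) :
    edgeOpen (shift z ω) x e ↔ edgeOpen ω (x + z) e := by
  simp only [edgeOpen, shift]
  refine exists_congr fun i => ?_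
  rw [sub_add_eq_add_sub]

lemma edgeOpen_iff_adj (ω : Config d) (x e : V d) :
    edgeOpen ω x e ↔ GAdj Prod.fst tip ω x (x + e) := by
  rw [adj_iff]; simp

lemma edgeOpen_symm {ω : Config d} {x e : V d} (h : edgeOpen ω x e) :
    edgeOpen ω (x + e) (-e) := by
  rw [edgeOpen_iff_adj] at *
  simpa using h.symm

/-! ### Measurability -/

lemma measurable_shift (z : V d) : Measurable (shift z : Config d → Config d) := by
  unfold shift
  fun_prop

lemma measurableSet_coord (b : EdgeIx d) (v : Bool) : MeasurableSet {ω : Config d | ω b = v} :=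
  measurableSet_eq_fun (measurable_pi_apply b) measurable_const

lemma measurableSet_adj (x y : V d) :
    MeasurableSet {ω : Config d | GAdj Prod.fst tip ω x y} := by
  simp only [GAdj, Set.ofPred_exists]
  refine MeasurableSet.iUnion fun b => ?_
  exact (measurableSet_coord b true).inter (MeasurableSet.const _)

/-- reachability in exactly `n` steps -/
def reachN (ω : Config d) (x : V d) : ℕ → V d → Prop
  | 0, y => x = y
  | n + 1, y => ∃ z, reachN ω x n z ∧ GAdj Prod.fst tip ω z y

lemma con_iff_reachN (ω : Config d) (x y : V d) : Con ω x y ↔ ∃ n, reachN ω x n y := by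
  constructor
  · intro h
    induction h with
    | refl => exact ⟨0, rfl⟩
    | tail _ h2 ih =>
      obtain ⟨n, hn⟩ := ih
      exact ⟨n + 1, _, hn, h2⟩
  · rintro ⟨n, hn⟩
    induction n generalizing y with
    | zero => rw [show x = y from hn]; exact Relation.ReflTransGen.refl
    | succ n ih =>
      obtain ⟨z, hz, h2⟩ := hn
      exact (ih z hz).tail h2

lemma measurableSet_con (x y : V d) : MeasurableSet {ω : Config d | Con ω x y} := by
  simp only [con_iff_reachN, Set.ofPred_exists]
  refine MeasurableSet.iUnion fun n => ?_
  induction n generalizing y with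
  | zero => exact MeasurableSet.const _
  | succ n ih =>
    simp only [reachN, Set.ofPred_exists]
    exact MeasurableSet.iUnion fun z => (ih z).inter (measurableSet_adj z y)

lemma measurableSet_memCluster (x : V d) : MeasurableSet {ω : Config d | memCluster ω x} := by
  simp only [memCluster_iff, Set.ofPred_forall, Set.ofPred_exists]
  exact MeasurableSet.iInter fun R => MeasurableSet.iUnion fun y =>
    (measurableSet_con x y).inter (MeasurableSet.const _)

lemma measurableSet_cluZero : MeasurableSet (cluZero d) := measurableSet_memCluster 0

lemma measurableSet_edgeOpen (x e : V d) : MeasurableSet {ω : Config d | edgeOpen ω x e} := by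
  simp only [edgeOpen_iff_adj]
  exact measurableSet_adj _ _

/-! ### Bernoulli measure -/

lemma bern_unique {q : ℝ} {P P' : Measure (Config d)} (h : IsBernoulli d q P)
    (h' : IsBernoulli d q P') : P = P' := by
  have := h.1
  have := h'.1
  have key : ∀ I : Finset (EdgeIx d), P'.map I.restrict = P.map I.restrict := by
    intro I
    refine Measure.ext_of_singleton fun a => ?_
    have e : (I.restrict ⁻¹' {a} : Set (Config d)) =
        {ω | ∀ b ∈ I, ω b = (fun b => if hb : b ∈ I then a ⟨b, hb⟩ else false) b} := by
      ext ω
      simp only [Set.mem_preimage, Set.mem_singleton_iff, Set.mem_ofPred_eq]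
      constructor
      · intro h b hb
        simp [hb, ← h]
      · intro h
        funext b
        have := h b.1 b.2
        simpa using this
    rw [Measure.map_apply (by fun_prop) (measurableSet_singleton a),
      Measure.map_apply (by fun_prop) (measurableSet_singleton a), e, h.2, h'.2]
  exact IsProjectiveLimit.unique (P := fun I => P.map I.restrict) (fun I => rfl) key

lemma bern_map_shift {q : ℝ} {P : Measure (Config d)} (h : IsBernoulli d q P) (z : V d) :
    P.map (shift z) = P := by
  have := h.1
  refine bern_unique (q := q) ⟨Measure.isProbabilityMeasure_map (measurable_shift z).aemeasurable,
    fun F a => ?_⟩ h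
  rw [Measure.map_apply (measurable_shift z)]
  · let em : EdgeIx d ↪ EdgeIx d :=
      ⟨fun b => (b.1 + z, b.2), fun b c hbc => by
        simp only [Prod.mk.injEq, add_left_inj] at hbc
        exact Prod.ext hbc.1 hbc.2⟩
    have hem : ∀ b, em b = (b.1 + z, b.2) := fun _ => rfl
    have := h.2 (F.map em) (fun b => a (b.1 - z, b.2))
    rw [Finset.prod_map] at this
    have e : (shift z ⁻¹' {ω | ∀ b ∈ F, ω b = a b} : Set (Config d)) =
        {ω | ∀ b ∈ F.map em, ω b = (fun b => a (b.1 - z, b.2)) b} := by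
      ext ω
      simp only [Set.mem_preimage, Set.mem_ofPred_eq, Finset.mem_map, forall_exists_index, and_imp,
        forall_apply_eq_imp_iff₂]
      simp [hem, shift]
    rw [e, this]
    simp [hem]
  · have : {ω : Config d | ∀ b ∈ F, ω b = a b} = ⋂ b ∈ F, {ω | ω b = a b} := by
      ext; simp
    rw [this]
    exact MeasurableSet.biInter F.countable_toSet fun b _ => measurableSet_coord b _

lemma bern_shift_mp {q : ℝ} {P : Measure (Config d)} (h : IsBernoulli d q P) (z : V d) :
    MeasurePreserving (shift z) P P := ⟨measurable_shift z, bern_map_shift h z⟩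

lemma measurable_upd (b : EdgeIx d) (v : Bool) :
    Measurable (fun ω : Config d => Function.update ω b v) := by
  refine measurable_pi_lambda _ fun c => ?_
  by_cases h : c = b
  · subst h; simp
  · simp only [Function.update_of_ne h]; fun_prop

lemma bern_upd {p : ℝ} (hp0 : 0 < p) (hp1 : p < 1) {P : Measure (Config d)}
    (h : IsBernoulli d p P) (b : EdgeIx d) :
    P = ENNReal.ofReal p • P.map (fun ω => Function.update ω b true) +
      ENNReal.ofReal (1 - p) • P.map (fun ω => Function.update ω b false) := by
  have := h.1
  have hmap : ∀ v, IsProbabilityMeasure (P.map (fun ω : Config d => Function.update ω b v)) :=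
    fun v => Measure.isProbabilityMeasure_map (measurable_upd b v).aemeasurable
  have hsum : ENNReal.ofReal p + ENNReal.ofReal (1 - p) = 1 := by
    rw [← ENNReal.ofReal_add hp0.le (by linarith)]; simp
  refine bern_unique h ⟨⟨?_⟩, fun F a => ?_⟩
  · have h1 := hmap true
    have h2 := hmap false
    simp only [Measure.add_apply, Measure.smul_apply, measure_univ, smul_eq_mul, mul_one]
    exact hsum
  · have hm : MeasurableSet {ω : Config d | ∀ b ∈ F, ω b = a b} := by
      have : {ω : Config d | ∀ b ∈ F, ω b = a b} = ⋂ b ∈ F, {ω | ω b = a b} := by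
        ext; simp
      rw [this]
      exact MeasurableSet.biInter F.countable_toSet fun b _ => measurableSet_coord b _
    simp only [Measure.add_apply, Measure.smul_apply, smul_eq_mul]
    rw [Measure.map_apply (measurable_upd b true) hm, Measure.map_apply (measurable_upd b false) hm]
    by_cases hb : b ∈ F
    · have hv : ∀ v, P ((fun ω : Config d => Function.update ω b v) ⁻¹'
          {ω | ∀ b ∈ F, ω b = a b}) =
          if a b = v then ∏ c ∈ F.erase b, ENNReal.ofReal (if a c then p else 1 - p) else 0 := by
        intro v
        split_ifs with hav
        · rw [← h.2]
          congr 1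
          ext ω
          simp only [Set.mem_preimage, Set.mem_ofPred_eq, Finset.mem_erase, and_imp]
          constructor
          · intro H c hc hcF
            have := H c hcF
            rwa [Function.update_of_ne hc] at this
          · intro H c hcF
            by_cases hc : c = b
            · subst hc; simp [hav]
            · rw [Function.update_of_ne hc]; exact H c hc hcF
        · convert measure_empty (μ := P)
          ext ω
          simp only [Set.mem_preimage, Set.mem_ofPred_eq, Set.mem_empty_iff_false, iff_false]
          intro H
          have := H b hb
          simp at this
          exact hav this.symm
      rw [hv, hv, ← Finset.mul_prod_erase F _ hb]
      cases a b <;> simp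
    · have hv : ∀ v, ((fun ω : Config d => Function.update ω b v) ⁻¹'
          {ω | ∀ b ∈ F, ω b = a b}) = {ω | ∀ b ∈ F, ω b = a b} := by
        intro v
        ext ω
        simp only [Set.mem_preimage, Set.mem_ofPred_eq]
        refine forall₂_congr fun c hc => ?_
        rw [Function.update_of_ne (show c ≠ b from fun e => hb (e ▸ hc))]
      rw [hv, hv, h.2, ← add_mul, hsum, one_mul]

lemma bern_upd_ac {p : ℝ} (hp0 : 0 < p) (hp1 : p < 1) {P : Measure (Config d)}
    (h : IsBernoulli d p P) (b : EdgeIx d) :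
    P.map (fun ω => Function.update ω b true) ≪ P := by
  intro N hN
  rw [bern_upd hp0 hp1 h b] at hN
  simp only [Measure.add_apply, Measure.smul_apply, smul_eq_mul, add_eq_zero, mul_eq_zero,
    ENNReal.ofReal_eq_zero, not_le.2 hp0, false_or] at hN
  exact hN.1

lemma bern_cyl {p : ℝ} (hp0 : 0 < p) (hp1 : p < 1) {P : Measure (Config d)}
    (h : IsBernoulli d p P) (E : Finset (EdgeIx d)) (D : Set ({b // b ∈ E} → Bool))
    [DecidablePred (· ∈ D)] :
    P.real {ω | (fun b : {b // b ∈ E} => ω b.1) ∈ D} = ∑ a, wt p a * (if a ∈ D then 1 else 0) := by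
  have := h.1
  have e : {ω : Config d | (fun b : {b // b ∈ E} => ω b.1) ∈ D} =
      E.restrict ⁻¹' ((Finset.univ.filter (· ∈ D) : Finset ({b // b ∈ E} → Bool)) : Set _) := by
    ext ω
    simp only [Set.mem_ofPred_eq, Set.mem_preimage, Finset.coe_filter, Finset.mem_univ, true_and]
    rfl
  rw [e, Measure.real, ← sum_measure_preimage_singleton _ (fun y _ =>
    (by fun_prop : Measurable (E.restrict : Config d → _)) (measurableSet_singleton y)),
    ENNReal.toReal_sum (fun _ _ => measure_ne_top _ _), Finset.sum_filter]
  refine Finset.sum_congr rfl fun a _ => ?_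
  split_ifs with ha
  · have e2 : (E.restrict ⁻¹' {a} : Set (Config d)) =
        {ω | ∀ b ∈ E, ω b = (fun b => if hb : b ∈ E then a ⟨b, hb⟩ else false) b} := by
      ext ω
      simp only [Set.mem_preimage, Set.mem_singleton_iff, Set.mem_ofPred_eq]
      constructor
      · intro h b hb
        simp [hb, ← h]
      · intro h
        funext b
        have := h b.1 b.2
        simpa using this
    rw [e2, h.2, ENNReal.toReal_prod, mul_one, wt, ← Finset.prod_coe_sort]
    refine Finset.prod_congr rfl fun b _ => ?_
    rw [ENNReal.toReal_ofReal (by split_ifs <;> linarith)]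
    simp [bw]
  · simp

end Lattice
/-! ### Uniqueness of the infinite cluster -/

section Uniqueness

variable {d : ℕ}

/-- the box `[-n,n]^d` -/
def boxN (d n : ℕ) : Finset (V d) := Fintype.piFinset (fun _ => Finset.Icc (-(n : ℤ)) n)

lemma mem_boxN {n : ℕ} {x : V d} : x ∈ boxN d n ↔ ∀ i, -(n : ℤ) ≤ x i ∧ x i ≤ n := by
  simp [boxN, Fintype.mem_piFinset]

lemma card_boxN (n : ℕ) : (boxN d n).card = (2 * n + 1) ^ d := by
  rw [boxN, Fintype.card_piFinset_const]
  congr 1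
  rw [Int.card_Icc]
  omega

lemma boxN_mono {n : ℕ} : boxN d n ⊆ boxN d (n + 1) := by
  intro x hx
  rw [mem_boxN] at *
  intro i
  have := hx i
  push_cast
  omega

lemma add_unit_mem {n : ℕ} {x : V d} (hx : x ∈ boxN d n) (i : Fin d) :
    x + unitVec d i ∈ boxN d (n + 1) := by
  rw [mem_boxN] at *
  intro j
  have := hx j
  simp only [Pi.add_apply, unitVec]
  split_ifs <;> push_cast <;> omega

lemma of_add_unit_mem {n : ℕ} {x : V d} (i : Fin d) (hx : x + unitVec d i ∈ boxN d n) :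
    x ∈ boxN d (n + 1) := by
  rw [mem_boxN] at *
  intro j
  have := hx j
  simp only [Pi.add_apply, unitVec] at this
  split_ifs at this <;> push_cast <;> omega

lemma not_inBox_notMem {n : ℕ} {x : V d} (h : ¬ inBox x n) : x ∉ boxN d n := by
  intro hx
  apply h
  intro i
  rw [mem_boxN] at hx
  rw [abs_le]
  constructor
  · exact_mod_cast (hx i).1
  · exact_mod_cast (hx i).2

/-- bonds based in the box -/
def boxE (d n : ℕ) : Finset (EdgeIx d) := boxN d n ×ˢ Finset.univ

lemma card_boxE (d n : ℕ) : Fintype.card ↥(boxE d n) = (2 * n + 1) ^ d * d := by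
  rw [Fintype.card_coe, boxE, Finset.card_product, card_boxN, Finset.card_univ, Fintype.card_fin]

/-- the boundary of the box -/
def bdry (d n : ℕ) : Finset (V d) := boxN d (n + 1) \ boxN d n

/-- restricted start point -/
def sE (d n : ℕ) (b : {b // b ∈ boxE d n}) : V d := b.1.1

/-- restricted end point -/
def tE (d n : ℕ) (b : {b // b ∈ boxE d n}) : V d := tip b.1

/-- restricted configuration -/
def rE (n : ℕ) (ω : Config d) (b : {b // b ∈ boxE d n}) : Bool := ω b.1

lemma con_of_restrict {n : ℕ} {ω : Config d} {x y : V d}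
    (h : GCon (sE d n) (tE d n) (rE n ω) x y) : Con ω x y := by
  induction h with
  | refl => exact Relation.ReflTransGen.refl
  | tail _ h2 ih =>
    obtain ⟨b, hb, h3⟩ := h2
    exact ih.tail ⟨b.1, hb, h3⟩

lemma to_bdry {n : ℕ} {ω : Config d} {x : V d} (hx : x ∈ boxN d (n + 1))
    (h : memCluster ω x) :
    ∃ y ∈ bdry d n, GCon (sE d (n + 1)) (tE d (n + 1)) (rE (n + 1) ω) y x := by
  obtain ⟨z, hz, hb⟩ := (memCluster_iff _ _).1 h (n + 1)
  have hb := not_inBox_notMem hb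
  have key : ∀ z, Con ω x z →
      (GCon (sE d (n + 1)) (tE d (n + 1)) (rE (n + 1) ω) x z ∧ z ∈ boxN d n) ∨
      ∃ y ∈ bdry d n, GCon (sE d (n + 1)) (tE d (n + 1)) (rE (n + 1) ω) x y := by
    have aux : ∀ z, z ∈ boxN d (n + 1) →
        GCon (sE d (n + 1)) (tE d (n + 1)) (rE (n + 1) ω) x z →
        (GCon (sE d (n + 1)) (tE d (n + 1)) (rE (n + 1) ω) x z ∧ z ∈ boxN d n) ∨
        ∃ y ∈ bdry d n, GCon (sE d (n + 1)) (tE d (n + 1)) (rE (n + 1) ω) x y := by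
      intro z hz hc
      by_cases hzn : z ∈ boxN d n
      · exact Or.inl ⟨hc, hzn⟩
      · exact Or.inr ⟨z, Finset.mem_sdiff.2 ⟨hz, hzn⟩, hc⟩
    intro z hz
    induction hz with
    | refl => exact aux x hx Relation.ReflTransGen.refl
    | @tail z w _ h2 ih =>
      rcases ih with ⟨hc, hzn⟩ | h3
      · obtain ⟨⟨u, i⟩, hu, h3⟩ := h2
        rcases h3 with ⟨h3, h4⟩ | ⟨h3, h4⟩
        · simp only [tip] at h3 h4
          subst h3
          have hw : w ∈ boxN d (n + 1) := h4 ▸ add_unit_mem hzn i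
          refine aux w hw (hc.tail ⟨⟨(u, i), ?_⟩, hu, Or.inl ⟨rfl, h4⟩⟩)
          simp [boxE, boxN_mono hzn]
        · simp only [tip] at h3 h4
          subst h3
          have hw : u ∈ boxN d (n + 1) := of_add_unit_mem i (by rw [h4]; exact hzn)
          refine aux u hw (hc.tail ⟨⟨(u, i), ?_⟩, hu, Or.inr ⟨rfl, h4⟩⟩)
          simp [boxE, hw]
      · exact Or.inr h3
  rcases key z hz with ⟨_, h2⟩ | ⟨y, hy, h2⟩
  · exact absurd (boxN_mono h2) hb
  · exact ⟨y, hy, h2.symm⟩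

/-- `b` is closed and joins two distinct infinite clusters -/
def badE (d : ℕ) (b : EdgeIx d) : Set (Config d) :=
  {ω | ω b = false ∧ memCluster ω b.1 ∧ memCluster ω (tip b) ∧ ¬ Con ω b.1 (tip b)}

lemma measurableSet_badE (b : EdgeIx d) : MeasurableSet (badE d b) :=
  (measurableSet_coord b false).inter ((measurableSet_memCluster _).inter
    ((measurableSet_memCluster _).inter (measurableSet_con _ _).compl))

lemma badE_shift {p : ℝ} {P : Measure (Config d)} (h : IsBernoulli d p P) (x : V d) (i : Fin d) :
    P.real (badE d (x, i)) = P.real (badE d (0, i)) := by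
  have e : badE d (x, i) = shift x ⁻¹' badE d (0, i) := by
    ext ω
    simp only [badE, Set.mem_preimage, Set.mem_ofPred_eq, memCluster_shift, con_shift, tip]
    simp [shift, add_comm]
  rw [e, Measure.real, (bern_shift_mp h x).measure_preimage
    (measurableSet_badE _).nullMeasurableSet, Measure.real]

open Classical in
lemma badE_bound {p q : ℝ} (hp1 : p < 1) (hq0 : 0 < q) (hqp : q < p) {P : Measure (Config d)}
    (h : IsBernoulli d p P) (i : Fin d) (n : ℕ) :
    ((2 * n + 1) ^ d : ℝ) * P.real (badE d (0, i)) ≤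
      (1 - q) / (p - q) * ((2 * n + 3) ^ d - (2 * n + 1) ^ d) +
        (p - q) / q * ((2 * n + 3) ^ d * d) := by
  have hp0 : 0 < p := hq0.trans hqp
  have := h.1
  have main := two_arm_finite (sE d (n + 1)) (tE d (n + 1)) (bdry d n) hp1 hq0 hqp
  have hW : ((bdry d n).card : ℝ) = (2 * n + 3) ^ d - (2 * n + 1) ^ d := by
    rw [bdry, Finset.card_sdiff_of_subset boxN_mono,
      Nat.cast_sub (Finset.card_le_card boxN_mono), card_boxN, card_boxN]
    push_cast
    ring
  have hB : (Fintype.card ↥(boxE d (n + 1)) : ℝ) = (2 * n + 3) ^ d * d := by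
    rw [card_boxE]
    push_cast
    ring
  rw [hW, hB] at main
  refine le_trans ?_ main
  have hb : ∀ b : {b : EdgeIx d // b ∈ boxE d (n + 1)},
      ∑ a : {b : EdgeIx d // b ∈ boxE d (n + 1)} → Bool,
        wt p a * (if dbl (sE d (n + 1)) (tE d (n + 1)) (bdry d n) a b then (1 : ℝ) else 0) =
      P.real {ω | dbl (sE d (n + 1)) (tE d (n + 1)) (bdry d n) (rE (n + 1) ω) b} := by
    intro b
    exact (bern_cyl hp0 hp1 h (boxE d (n + 1))
      {a | dbl (sE d (n + 1)) (tE d (n + 1)) (bdry d n) a b}).symm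
  simp only [hb]
  let em : {x // x ∈ boxN d n} → {b : EdgeIx d // b ∈ boxE d (n + 1)} :=
    fun x => ⟨(x.1, i), by simp [boxE, boxN_mono x.2]⟩
  have hem : Function.Injective em := by
    intro x y hxy
    have h2 : (em x).1.1 = (em y).1.1 := by rw [hxy]
    exact Subtype.ext h2
  calc ((2 * n + 1) ^ d : ℝ) * P.real (badE d (0, i))
      = ∑ x : {x // x ∈ boxN d n}, P.real (badE d (x.1, i)) := by
        simp only [badE_shift h, Finset.sum_const, Finset.card_univ, Fintype.card_coe, card_boxN,
          nsmul_eq_mul]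
        push_cast
        ring
    _ ≤ ∑ x : {x // x ∈ boxN d n}, P.real {ω | dbl (sE d (n + 1)) (tE d (n + 1)) (bdry d n)
          (rE (n + 1) ω) (em x)} := by
        refine Finset.sum_le_sum fun x _ => measureReal_mono ?_
        rintro ω ⟨h1, h2, h3, h4⟩
        refine ⟨h1, to_bdry (boxN_mono x.2) h2, to_bdry (add_unit_mem x.2 i) h3, fun h => h4 ?_⟩
        exact con_of_restrict h
    _ = ∑ b ∈ Finset.univ.map ⟨em, hem⟩, P.real {ω | dbl (sE d (n + 1)) (tE d (n + 1))
          (bdry d n) (rE (n + 1) ω) b} := by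
        rw [Finset.sum_map]; rfl
    _ ≤ _ := Finset.sum_le_sum_of_subset_of_nonneg (Finset.subset_univ _)
        (fun _ _ _ => measureReal_nonneg)

lemma badE_zero {p : ℝ} (hp0 : 0 < p) (hp1 : p < 1) {P : Measure (Config d)}
    (h : IsBernoulli d p P) (b : EdgeIx d) : P (badE d b) = 0 := by
  have := h.1
  obtain ⟨x, i⟩ := b
  suffices P.real (badE d (0, i)) ≤ 0 by
    have h2 := badE_shift h x i
    have h3 : P.real (badE d (x, i)) = 0 := by
      rw [h2]; exact le_antisymm this measureReal_nonneg
    exact (measureReal_eq_zero_iff (measure_ne_top _ _)).1 h3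
  set α := P.real (badE d (0, i))
  have step : ∀ q, 0 < q → q < p → α ≤ (p - q) / q * d := by
    intro q hq0 hqp
    have hr : Tendsto (fun n : ℕ => (((2 * n + 3 : ℝ) / (2 * n + 1)) ^ d)) atTop (𝓝 1) := by
      have h1 : Tendsto (fun n : ℕ => ((2 * n + 3 : ℝ) / (2 * n + 1))) atTop (𝓝 1) := by
        have h2 : Tendsto (fun n : ℕ => 1 + 2 * (1 / ((2 * n + 1 : ℕ) : ℝ))) atTop
            (𝓝 (1 + 2 * 0)) := by
          refine tendsto_const_nhds.add (Tendsto.const_mul _ ?_)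
          refine tendsto_one_div_atTop_nhds_zero_nat.comp
            (tendsto_atTop_mono (fun n => ?_) tendsto_id)
          simp only [id]
          omega
        simp only [mul_zero, add_zero] at h2
        refine h2.congr fun n => ?_
        have : (2 * n + 1 : ℝ) ≠ 0 := by positivity
        push_cast
        field_simp
        ring
      simpa using h1.pow d
    have hlim : Tendsto (fun n : ℕ => (1 - q) / (p - q) * ((((2 * n + 3 : ℝ) / (2 * n + 1)) ^ d) - 1)
        + (p - q) / q * ((((2 * n + 3 : ℝ) / (2 * n + 1)) ^ d) * d)) atTop
        (𝓝 ((1 - q) / (p - q) * (1 - 1) + (p - q) / q * (1 * d))) :=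
      (Tendsto.const_mul _ (hr.sub_const 1)).add (Tendsto.const_mul _ (hr.mul_const _))
    simp only [sub_self, mul_zero, one_mul, zero_add] at hlim
    refine ge_of_tendsto' hlim fun n => ?_
    have hb := badE_bound hp1 hq0 hqp h i n
    have hpos : (0 : ℝ) < (2 * n + 1) ^ d := by positivity
    have : α ≤ ((1 - q) / (p - q) * ((2 * n + 3) ^ d - (2 * n + 1) ^ d) +
        (p - q) / q * ((2 * n + 3) ^ d * d)) / (2 * n + 1) ^ d := by
      rw [le_div_iff₀ hpos]; linarith
    refine this.trans (le_of_eq ?_)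
    have hq : p - q ≠ 0 := by linarith
    rw [div_pow]
    field_simp
  have hlim : Tendsto (fun q : ℝ => (p - q) / q * d) (𝓝[<] p) (𝓝 0) := by
    have : Tendsto (fun q : ℝ => (p - q) / q * d) (𝓝 p) (𝓝 ((p - p) / p * d)) := by
      refine Tendsto.mul_const _ (Tendsto.div ?_ tendsto_id hp0.ne')
      exact tendsto_const_nhds.sub tendsto_id
    simp only [sub_self, zero_div, zero_mul] at this
    exact this.mono_left nhdsWithin_le_nhds
  refine ge_of_tendsto hlim ?_
  filter_upwards [Ioo_mem_nhdsLT hp0] with q hq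
  exact step q hq.1 hq.2

/-- open all the bonds of a list -/
def openL : List (EdgeIx d) → Config d → Config d
  | [], ω => ω
  | b :: l, ω => openL l (Function.update ω b true)

lemma le_upd (ω : Config d) (b : EdgeIx d) (c : EdgeIx d) (h : ω c = true) :
    Function.update ω b true c = true := by
  by_cases hc : c = b
  · subst hc; simp
  · rwa [Function.update_of_ne hc]

lemma le_openL (l : List (EdgeIx d)) (ω : Config d) (c : EdgeIx d) (h : ω c = true) :
    openL l ω c = true := by
  induction l generalizing ω with
  | nil => exact h
  | cons b l ih => exact ih _ (le_upd ω b c h)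

lemma openL_append (l m : List (EdgeIx d)) (ω : Config d) :
    openL (l ++ m) ω = openL m (openL l ω) := by
  induction l generalizing ω with
  | nil => rfl
  | cons b l ih => exact ih _

/-- lattice connectedness, witnessed by a list of bonds -/
def linkable (x y : V d) : Prop := ∃ l : List (EdgeIx d), ∀ ω, Con (openL l ω) x y

lemma linkable.symm {x y : V d} (h : linkable x y) : linkable y x := by
  obtain ⟨l, hl⟩ := h
  exact ⟨l, fun ω => GCon.symm (hl ω)⟩

lemma linkable.trans {x y z : V d} (h : linkable x y) (h2 : linkable y z) : linkable x z := by
  obtain ⟨l, hl⟩ := h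
  obtain ⟨m, hm⟩ := h2
  refine ⟨l ++ m, fun ω => ?_⟩
  rw [openL_append]
  exact GCon.trans (con_mono (fun c hc => le_openL m _ c hc) (hl ω)) (hm _)

lemma linkable_all (x y : V d) : linkable x y := by
  let H : AddSubgroup (V d) :=
    { carrier := {z | ∀ x, linkable x (x + z)}
      zero_mem' := fun x => ⟨[], fun ω => by simp only [add_zero]; exact Relation.ReflTransGen.refl⟩
      add_mem' := fun {a b} ha hb x => by
        have := (ha x).trans (hb (x + a))
        rwa [add_assoc] at this
      neg_mem' := fun {a} ha x => by
        have := (ha (x + -a)).symm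
        rwa [neg_add_cancel_right] at this }
  have hu : ∀ i, unitVec d i ∈ H := by
    intro i x
    exact ⟨[(x, i)], fun ω => GCon.bond (b := ((x, i) : EdgeIx d)) (by simp [openL])⟩
  have hz : y - x ∈ H := by
    have : y - x = ∑ i, (y - x) i • unitVec d i := by
      funext j
      simp [Finset.sum_apply, unitVec]
    rw [this]
    exact AddSubgroup.sum_mem _ fun i _ => AddSubgroup.zsmul_mem _ (hu i) _
  have := hz x
  rwa [add_sub_cancel] at this

lemma con_update {ω : Config d} {b : EdgeIx d} {x y : V d}
    (h : Con (Function.update ω b true) x y) :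
    Con ω x y ∨ (Con ω x b.1 ∧ Con ω (tip b) y) ∨ (Con ω x (tip b) ∧ Con ω b.1 y) := by
  induction h with
  | refl => exact Or.inl Relation.ReflTransGen.refl
  | @tail z w _ h2 ih =>
    obtain ⟨c, hc, h3⟩ := h2
    by_cases hcb : c = b
    · subst hcb
      rcases h3 with ⟨rfl, rfl⟩ | ⟨rfl, rfl⟩
      · rcases ih with ih | ih | ih
        · exact Or.inr (Or.inl ⟨ih, Relation.ReflTransGen.refl⟩)
        · exact Or.inr (Or.inl ⟨ih.1, Relation.ReflTransGen.refl⟩)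
        · exact Or.inl ih.1
      · rcases ih with ih | ih | ih
        · exact Or.inr (Or.inr ⟨ih, Relation.ReflTransGen.refl⟩)
        · exact Or.inl ih.1
        · exact Or.inr (Or.inr ⟨ih.1, Relation.ReflTransGen.refl⟩)
    · rw [Function.update_of_ne hcb] at hc
      have hs : GAdj Prod.fst tip ω z w := ⟨c, hc, h3⟩
      rcases ih with ih | ih | ih
      · exact Or.inl (ih.tail hs)
      · exact Or.inr (Or.inl ⟨ih.1, ih.2.tail hs⟩)
      · exact Or.inr (Or.inr ⟨ih.1, ih.2.tail hs⟩)

theorem unique_cluster {p : ℝ} (hp0 : 0 < p) (hp1 : p < 1) {P : Measure (Config d)}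
    (h : IsBernoulli d p P) :
    ∀ᵐ ω ∂P, ∀ x y, memCluster ω x → memCluster ω y → Con ω x y := by
  rw [ae_all_iff]
  intro x
  rw [ae_all_iff]
  intro y
  have key : ∀ l : List (EdgeIx d), ∀ᵐ ω ∂P, memCluster ω x → memCluster ω y →
      Con (openL l ω) x y → Con ω x y := by
    intro l
    induction l with
    | nil => exact Eventually.of_forall fun ω _ _ h => h
    | cons b l ih =>
      have h1 : ∀ᵐ ω ∂P, memCluster (Function.update ω b true) x →
          memCluster (Function.update ω b true) y →
          Con (openL l (Function.update ω b true)) x y → Con (Function.update ω b true) x y :=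
        ae_of_ae_map (measurable_upd b true).aemeasurable ((bern_upd_ac hp0 hp1 h b).ae_le ih)
      have h2 : ∀ᵐ ω ∂P, ω ∉ badE d b := measure_eq_zero_iff_ae_notMem.1 (badE_zero hp0 hp1 h b)
      filter_upwards [h1, h2] with ω h1 h2 hx hy hc
      have h3 := h1 (memCluster_mono (le_upd ω b) hx) (memCluster_mono (le_upd ω b) hy) hc
      by_contra hn
      apply h2
      have hb : ω b = false := by
        by_contra hb
        rw [Bool.not_eq_false] at hb
        apply hn
        have : Function.update ω b true = ω := by rw [← hb]; simp
        rwa [this] at h3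
      rcases con_update h3 with h4 | h4 | h4
      · exact absurd h4 hn
      · exact ⟨hb, memCluster_of_con (GCon.symm h4.1) hx, memCluster_of_con h4.2 hy,
          fun h5 => hn (GCon.trans h4.1 (GCon.trans h5 h4.2))⟩
      · exact ⟨hb, memCluster_of_con h4.2 hy, memCluster_of_con (GCon.symm h4.1) hx,
          fun h5 => hn (GCon.trans h4.1 (GCon.trans (GCon.symm h5) h4.2))⟩
  obtain ⟨l, hl⟩ := linkable_all x y
  filter_upwards [key l] with ω h hx hy
  exact h hx hy (hl ω)

end Uniqueness

/-- one-bond law -/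
def bondM (p : ℝ) : Measure Bool :=
  ENNReal.ofReal p • Measure.dirac true + ENNReal.ofReal (1 - p) • Measure.dirac false

lemma bondM_prob {p : ℝ} (hp0 : 0 < p) (hp1 : p < 1) : IsProbabilityMeasure (bondM p) := by
  constructor
  simp only [bondM, Measure.add_apply, Measure.smul_apply, measure_univ, smul_eq_mul, mul_one]
  rw [← ENNReal.ofReal_add hp0.le (by linarith)]
  simp

lemma bern_eq_pi {p : ℝ} (hp0 : 0 < p) (hp1 : p < 1) {P : Measure (Config d)}
    (h : IsBernoulli d p P) : P = Measure.infinitePi (fun _ : EdgeIx d => bondM p) := by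
  have := bondM_prob hp0 hp1
  refine bern_unique h ⟨inferInstance, fun F a => ?_⟩
  have e : {ω : Config d | ∀ b ∈ F, ω b = a b} = Set.pi (F : Set (EdgeIx d)) (fun b => {a b}) := by
    ext ω; simp [Set.pi]
  rw [e, Measure.infinitePi_pi _ (fun _ _ => measurableSet_singleton _)]
  refine Finset.prod_congr rfl fun b _ => ?_
  cases a b <;> simp [bondM]

lemma bern_indep {p : ℝ} (hp0 : 0 < p) (hp1 : p < 1) {P : Measure (Config d)}
    (h : IsBernoulli d p P) : iIndepFun (fun (b : EdgeIx d) (ω : Config d) => ω b) P := by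
  have := bondM_prob hp0 hp1
  rw [bern_eq_pi hp0 hp1 h]
  exact iIndepFun_infinitePi (P := fun _ : EdgeIx d => bondM p) (X := fun _ => id)
    (fun _ => measurable_id)

/-- shifted cylinders are eventually independent -/
lemma cyl_indep {p : ℝ} (hd : 0 < d) (hp0 : 0 < p) (hp1 : p < 1) {P : Measure (Config d)}
    (h : IsBernoulli d p P) {t : Set (Config d)}
    (ht : t ∈ measurableCylinders (fun _ : EdgeIx d => Bool)) :
    ∃ x : V d, P (t ∩ shift x ⁻¹' t) = P t * P t := by
  classical
  obtain ⟨s, S, hS, rfl⟩ := (mem_measurableCylinders _).1 ht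
  obtain ⟨x, hx⟩ : ∃ x : V d, Disjoint s (s.image (fun b => (b.1 + x, b.2))) := by
    let i0 : Fin d := ⟨0, hd⟩
    let N : ℕ := ∑ b ∈ s, (b.1 i0).natAbs
    refine ⟨fun _ => 2 * N + 1, ?_⟩
    rw [Finset.disjoint_left]
    rintro b hb hb2
    obtain ⟨c, hc, rfl⟩ := Finset.mem_image.1 hb2
    have h1 : (c.1 i0).natAbs ≤ N :=
      Finset.single_le_sum (f := fun b : EdgeIx d => (b.1 i0).natAbs) (fun _ _ => Nat.zero_le _) hc
    have h2 := Finset.single_le_sum (f := fun b : EdgeIx d => (b.1 i0).natAbs)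
      (fun _ _ => Nat.zero_le _) hb
    change (c.1 i0 + (2 * N + 1)).natAbs ≤ N at h2
    omega
  refine ⟨x, ?_⟩
  have key : ∃ S' : Set ({b // b ∈ s.image (fun b => (b.1 + x, b.2))} → Bool), MeasurableSet S' ∧
      shift x ⁻¹' (cylinder s S) = cylinder (s.image (fun b : EdgeIx d => (b.1 + x, b.2))) S' := by
    refine ⟨(fun g (b : {b // b ∈ s}) =>
      g ⟨(b.1.1 + x, b.1.2), Finset.mem_image_of_mem _ b.2⟩) ⁻¹' S, ?_, ?_⟩
    · refine hS.preimage ?_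
      fun_prop
    · ext ω; rfl
  obtain ⟨S', hS', e⟩ := key
  have hi := (bern_indep hp0 hp1 h).indepFun_finset s _ hx (fun b => measurable_pi_apply b)
  have h2 := hi.measure_inter_preimage_eq_mul S S' hS hS'
  have e2 : P (shift x ⁻¹' (cylinder s S)) = P (cylinder s S) :=
    (bern_shift_mp h x).measure_preimage (MeasurableSet.cylinder s hS).nullMeasurableSet
  calc P (cylinder s S ∩ shift x ⁻¹' cylinder s S) = P (cylinder s S ∩ cylinder _ S') := by rw [e]
    _ = P (cylinder s S) * P (cylinder _ S') := h2
    _ = _ := by rw [← e, e2]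

open scoped symmDiff in
lemma shift_ergodic {p : ℝ} (hd : 0 < d) (hp0 : 0 < p) (hp1 : p < 1) {P : Measure (Config d)}
    (h : IsBernoulli d p P) {A : Set (Config d)} (hA : MeasurableSet A)
    (hinv : ∀ x : V d, shift x ⁻¹' A = A) : P A = 0 ∨ P Aᶜ = 0 := by
  have := h.1
  have key : ∀ ε : ℝ, 0 < ε → |P.real A - P.real A * P.real A| ≤ 4 * ε := by
    intro ε hε
    obtain ⟨t, ht, hlt⟩ := exists_measure_symmDiff_lt_of_generateFrom_isSetRing (μ := P)
      (isSetRing_measurableCylinders (α := fun _ : EdgeIx d => Bool))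
      ⟨{Set.univ}, Set.countable_singleton _, 
        Set.singleton_subset_iff.2 (univ_mem_measurableCylinders _), by simp⟩
      generateFrom_measurableCylinders.symm hA (ENNReal.ofReal_pos.2 hε)
    have htm : MeasurableSet t := MeasurableSet.of_mem_measurableCylinders ht
    have hlt' : P.real (t ∆ A) ≤ ε := ENNReal.toReal_le_of_le_ofReal hε.le hlt.le
    obtain ⟨x, hx⟩ := cyl_indep hd hp0 hp1 h ht
    have hx' : P.real (t ∩ shift x ⁻¹' t) = P.real t * P.real t := by
      simp only [Measure.real, hx, ENNReal.toReal_mul]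
    have h1 : |P.real t - P.real A| ≤ ε :=
      (abs_measureReal_sub_le_measureReal_symmDiff htm.nullMeasurableSet
        hA.nullMeasurableSet).trans hlt'
    have h2 : P.real ((shift x ⁻¹' t) ∆ A) ≤ ε := by
      refine le_trans (le_of_eq ?_) hlt'
      conv_lhs => rw [← hinv x]
      rw [← Set.preimage_symmDiff, Measure.real, (bern_shift_mp h x).measure_preimage
        (htm.symmDiff hA).nullMeasurableSet, Measure.real]
    have h3 : |P.real (t ∩ shift x ⁻¹' t) - P.real A| ≤ 2 * ε := by
      refine (abs_measureReal_sub_le_measureReal_symmDiff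
        (htm.inter (measurable_shift x htm)).nullMeasurableSet hA.nullMeasurableSet).trans ?_
      have : (t ∩ shift x ⁻¹' t) ∆ A ⊆ (t ∆ A) ∪ ((shift x ⁻¹' t) ∆ A) := by
        intro y
        simp only [Set.mem_symmDiff, Set.mem_inter_iff, Set.mem_union]
        tauto
      have := (measureReal_mono (μ := P) this).trans (measureReal_union_le _ _)
      linarith
    rw [hx'] at h3
    have h0 : P.real t ≤ 1 := measureReal_le_one
    have h0' : P.real A ≤ 1 := measureReal_le_one
    have h4 : 0 ≤ P.real t := measureReal_nonneg
    have h5 : 0 ≤ P.real A := measureReal_nonneg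
    rw [abs_le] at *
    constructor <;> nlinarith
  have h0 : P.real A - P.real A * P.real A = 0 := by
    by_contra hne
    have := key (|P.real A - P.real A * P.real A| / 8) (by positivity)
    have : 0 < |P.real A - P.real A * P.real A| := by positivity
    linarith
  have h1 : P.real A * (1 - P.real A) = 0 := by linarith
  rcases mul_eq_zero.1 h1 with h1 | h1
  · left; exact (measureReal_eq_zero_iff).1 h1
  · right
    rw [prob_compl_eq_zero_iff hA, ← ENNReal.toReal_eq_one_iff]
    change P.real A = 1
    linarith

/-- ergodicity of the environment on the infinite cluster -/
lemma cluster_ergodic {p : ℝ} (hd : 0 < d) (hp0 : 0 < p) (hp1 : p < 1) {P : Measure (Config d)}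
    (h : IsBernoulli d p P) {A : Set (Config d)} (hA : MeasurableSet A)
    (hinv : ∀ᵐ ω ∂P, memCluster ω 0 → ω ∈ A → ∀ e : V d, edgeOpen ω 0 e → shift e ω ∈ A) :
    P (cluZero d ∩ A) = 0 ∨ P (cluZero d \ A) = 0 := by
  let B : Set (Config d) := ⋃ x : V d, {ω | memCluster ω x} ∩ shift x ⁻¹' A
  have hB : MeasurableSet B := MeasurableSet.iUnion fun x =>
    (measurableSet_memCluster x).inter (measurable_shift x hA)
  have hBinv : ∀ x : V d, shift x ⁻¹' B = B := by
    intro x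
    ext ω
    simp only [B, Set.mem_preimage, Set.mem_iUnion, Set.mem_inter_iff, Set.mem_ofPred_eq,
      memCluster_shift, shift_shift]
    constructor
    · rintro ⟨y, h1, h2⟩; exact ⟨y + x, h1, h2⟩
    · rintro ⟨y, h1, h2⟩; exact ⟨y - x, by simpa using h1, by simpa using h2⟩
  rcases shift_ergodic hd hp0 hp1 h hB hBinv with h0 | h1
  · left
    refine measure_mono_null ?_ h0
    rintro ω ⟨h1, h2⟩
    refine Set.mem_iUnion.2 ⟨0, h1, ?_⟩
    simpa [shift_zero] using h2
  · right
    have hall : ∀ᵐ ω ∂P, ∀ x : V d, memCluster ω x → shift x ω ∈ A → ∀ e : V d,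
        edgeOpen ω x e → shift (x + e) ω ∈ A := by
      rw [ae_all_iff]
      intro x
      have := (bern_shift_mp h x).quasiMeasurePreserving.ae hinv
      filter_upwards [this] with ω hω h1 h2 e he
      have := hω (by rw [memCluster_shift, zero_add]; exact h1) h2 e
        (by rw [edgeOpen_shift, zero_add]; exact he)
      rwa [shift_shift, add_comm] at this
    have hfin : ∀ᵐ ω ∂P, memCluster ω 0 → ω ∈ A := by
      have hBae : ∀ᵐ ω ∂P, ω ∈ B := h1
      filter_upwards [hall, unique_cluster hp0 hp1 h, hBae] with ω h2 h3 h4 h5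
      obtain ⟨x, hx, hxA⟩ := Set.mem_iUnion.1 h4
      have hc := h3 x 0 hx h5
      have : ∀ z, Con ω x z → shift z ω ∈ A := by
        intro z hz
        induction hz with
        | refl => exact hxA
        | @tail y z hy hyz ih =>
          have hyc : memCluster ω y := memCluster_of_con (GCon.symm hy) hx
          have := h2 y hyc ih (z - y) (by rw [edgeOpen_iff_adj]; simpa using hyz)
          simpa using this
      have := this 0 hc
      rwa [shift_zero] at this
    have : P {ω | ¬ (memCluster ω 0 → ω ∈ A)} = 0 := hfin
    refine measure_mono_null ?_ this
    rintro ω ⟨h1, h2⟩ h3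
    exact h2 (h3 h1)

section Birk

variable {X : Type*} [MeasurableSpace X]

/-- running maximum of the ergodic sums -/
def runM (θ : X → X) (f : X → ℝ) : ℕ → X → ℝ
  | 0 => fun _ => 0
  | n + 1 => fun x => max 0 (f x + runM θ f n (θ x))

lemma runM_nonneg (θ : X → X) (f : X → ℝ) (n : ℕ) (x : X) : 0 ≤ runM θ f n x := by
  cases n with
  | zero => exact le_rfl
  | succ n => exact le_max_left _ _

lemma runM_mono (θ : X → X) (f : X → ℝ) (n : ℕ) : ∀ x, runM θ f n x ≤ runM θ f (n + 1) x := by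
  induction n with
  | zero => intro x; exact runM_nonneg _ _ _ _
  | succ n ih =>
    intro x
    exact max_le_max le_rfl (add_le_add le_rfl (ih _))

lemma runM_ge (θ : X → X) (f : X → ℝ) (n : ℕ) :
    ∀ x, birkhoffSum θ f n x ≤ runM θ f n x := by
  induction n with
  | zero => intro x; simp [runM]
  | succ n ih =>
    intro x
    rw [birkhoffSum_succ']
    exact le_trans (add_le_add le_rfl (ih _)) (le_max_right _ _)

variable {m : Measure X} [IsProbabilityMeasure m] {θ : X → X}

lemma runM_meas (hθ : Measurable θ) {f : X → ℝ} (hf : Measurable f) (n : ℕ) :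
    Measurable (runM θ f n) := by
  induction n with
  | zero => exact measurable_const
  | succ n ih =>
    exact measurable_const.max (hf.add (ih.comp hθ))

lemma runM_int (hθ : MeasurePreserving θ m m) {f : X → ℝ} (hfi : Integrable f m)
    (n : ℕ) : Integrable (runM θ f n) m := by
  induction n with
  | zero => exact integrable_const _
  | succ n ih =>
    have h := (integrable_zero X ℝ m).sup (hfi.add (hθ.integrable_comp_of_integrable ih))
    exact h

lemma birk_neg (hθ : MeasurePreserving θ m m)
    (herg : ∀ B : Set X, MeasurableSet B → θ ⁻¹' B = B → m B = 0 ∨ m Bᶜ = 0)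
    {f : X → ℝ} (hf : Measurable f) (hfi : Integrable f m) (hneg : ∫ x, f x ∂m < 0) :
    ∀ᵐ x ∂m, ∃ C : ℝ, ∀ n, birkhoffSum θ f n x ≤ C := by
  let A : Set X := {x | ∀ N : ℕ, ∃ n, (N : ℝ) < runM θ f n x}
  have hA : MeasurableSet A := by
    have : A = ⋂ N : ℕ, ⋃ n, {x | (N : ℝ) < runM θ f n x} := by
      ext x; simp [A]
    rw [this]
    exact MeasurableSet.iInter fun N => MeasurableSet.iUnion fun n =>
      measurableSet_lt measurable_const (runM_meas hθ.measurable hf n)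
  have hinv : θ ⁻¹' A = A := by
    ext x
    simp only [A, Set.mem_preimage, Set.mem_ofPred_eq]
    constructor
    · intro h N
      obtain ⟨K, hK⟩ := exists_nat_gt (N - f x)
      obtain ⟨n, hn⟩ := h K
      refine ⟨n + 1, lt_of_lt_of_le ?_ (le_max_right _ _)⟩
      linarith
    · intro h N
      obtain ⟨K, hK⟩ := exists_nat_gt (N + |f x|)
      obtain ⟨n, hn⟩ := h K
      have h1 := abs_nonneg (f x)
      have h2 := le_abs_self (f x)
      have hN : (0 : ℝ) ≤ N := Nat.cast_nonneg N
      cases n with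
      | zero => simp only [runM] at hn; linarith
      | succ n =>
        refine ⟨n, ?_⟩
        simp only [runM] at hn
        rcases lt_max_iff.1 hn with h3 | h3 <;> linarith
  rcases herg A hA hinv with h0 | h1
  · have : ∀ᵐ x ∂m, x ∉ A := by rw [ae_iff]; simpa using h0
    filter_upwards [this] with x hx
    simp only [A, Set.mem_ofPred_eq, not_forall, not_exists, not_lt] at hx
    obtain ⟨N, hN⟩ := hx
    exact ⟨N, fun n => (runM_ge θ f n x).trans (hN n)⟩
  · exfalso
    have hae : ∀ᵐ x ∂m, θ x ∈ A := by
      have : ∀ᵐ x ∂m, x ∈ A := h1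
      exact hθ.quasiMeasurePreserving.ae this
    have hlim : Tendsto (fun n : ℕ => ∫ x, max (-(runM θ f n (θ x))) (f x) ∂m) atTop
        (𝓝 (∫ x, f x ∂m)) := by
      refine tendsto_integral_of_dominated_convergence (fun x => |f x|)
        (fun n => (((runM_meas hθ.measurable hf n).comp hθ.measurable).neg.max
          hf).aestronglyMeasurable) hfi.abs ?_ ?_
      · intro n
        refine ae_of_all _ fun x => ?_
        rw [Real.norm_eq_abs]
        have := runM_nonneg θ f n (θ x)
        refine abs_le.2 ⟨(neg_abs_le _).trans (le_max_right _ _), max_le ?_ (le_abs_self _)⟩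
        linarith [abs_nonneg (f x)]
      · filter_upwards [hae] with x hx
        obtain ⟨K, hK⟩ := exists_nat_gt (-f x)
        obtain ⟨n, hn⟩ := hx K
        refine tendsto_const_nhds.congr' ?_
        filter_upwards [eventually_ge_atTop n] with k hk
        have : runM θ f n (θ x) ≤ runM θ f k (θ x) :=
          monotone_nat_of_le_succ (f := fun n => runM θ f n (θ x)) (fun n => runM_mono θ f n _) hk
        rw [max_eq_right]
        linarith
    refine absurd (ge_of_tendsto' hlim fun n => ?_) (not_le.2 hneg)
    have e : ∀ x, max (-(runM θ f n (θ x))) (f x) = runM θ f (n + 1) x - runM θ f n (θ x) := by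
      intro x
      simp only [runM]
      rw [max_sub_sub_right _ _ _ |>.symm]
      simp
    simp only [e]
    have hi := runM_int hθ hfi n
    have hi2 : Integrable (fun x => runM θ f n (θ x)) m := hθ.integrable_comp_of_integrable hi
    rw [integral_sub (runM_int hθ hfi (n + 1)) hi2]
    have e2 : ∫ x, runM θ f n (θ x) ∂m = ∫ x, runM θ f n x ∂m := by
      conv_rhs => rw [← hθ.map_eq]
      rw [integral_map hθ.measurable.aemeasurable]
      exact (runM_meas hθ.measurable hf n).aestronglyMeasurable
    rw [e2, sub_nonneg]
    exact integral_mono hi (runM_int hθ hfi (n + 1)) (runM_mono θ f n)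

lemma birk_upper (hθ : MeasurePreserving θ m m)
    (herg : ∀ B : Set X, MeasurableSet B → θ ⁻¹' B = B → m B = 0 ∨ m Bᶜ = 0)
    {f : X → ℝ} (hf : Measurable f) (hfi : Integrable f m) {ε : ℝ} (hε : 0 < ε) :
    ∀ᵐ x ∂m, ∀ᶠ n : ℕ in atTop, birkhoffSum θ f n x ≤ n * ((∫ x, f x ∂m) + ε) := by
  have h := birk_neg hθ herg (f := fun x => f x - ((∫ x, f x ∂m) + ε / 2)) (hf.sub_const _)
    (hfi.sub (integrable_const _)) (by
      rw [integral_sub hfi (integrable_const _)]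
      simp
      linarith)
  filter_upwards [h] with x hx
  obtain ⟨C, hC⟩ := hx
  obtain ⟨N, hN⟩ := exists_nat_gt (C / (ε / 2))
  filter_upwards [eventually_ge_atTop N] with n hn
  have h1 := hC n
  have h2 : birkhoffSum θ (fun x => f x - ((∫ x, f x ∂m) + ε / 2)) n x =
      birkhoffSum θ f n x - n * ((∫ x, f x ∂m) + ε / 2) := by
    simp [birkhoffSum, Finset.sum_sub_distrib]
    ring
  rw [h2] at h1
  rw [div_lt_iff₀ (by positivity)] at hN
  have : (N : ℝ) ≤ n := by exact_mod_cast hn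
  nlinarith

lemma birk_abs (hθ : MeasurePreserving θ m m)
    (herg : ∀ B : Set X, MeasurableSet B → θ ⁻¹' B = B → m B = 0 ∨ m Bᶜ = 0)
    {f : X → ℝ} (hf : Measurable f) (hfi : Integrable f m) {ε : ℝ} (hε : 0 < ε) :
    ∀ᵐ x ∂m, ∀ᶠ n : ℕ in atTop, |birkhoffSum θ f n x - n * ∫ x, f x ∂m| ≤ n * ε := by
  filter_upwards [birk_upper hθ herg hf hfi hε, birk_upper hθ herg hf.neg hfi.neg hε]
    with x h1 h2
  filter_upwards [h1, h2] with n h3 h4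
  have e : birkhoffSum θ (-f) n x = - birkhoffSum θ f n x := by
    simp [birkhoffSum]
  rw [e] at h4
  simp only [Pi.neg_apply, integral_neg] at h4
  rw [abs_le]
  constructor <;> linarith

end Birk

lemma step_nonempty (hd : 0 < d) : Nonempty (Step d) :=
  ⟨⟨unitVec d ⟨0, hd⟩, by simp [Ud]⟩⟩

open Classical in
lemma openDeg_pos {ω : Config d} {e : Step d} (h : edgeOpen ω 0 e.1) : 0 < openDeg ω 0 :=
  Finset.card_pos.2 ⟨e.1, Finset.mem_filter.2 ⟨e.2, h⟩⟩

open Classical in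
lemma openDeg_le (ω : Config d) : openDeg ω 0 ≤ Fintype.card (Step d) := by
  rw [Fintype.card_coe]
  exact Finset.card_filter_le _ _

lemma srw_pos_iff {ω : Config d} {e : Step d} : 0 < srw d ω e ↔ edgeOpen ω 0 e.1 := by
  unfold srw trans
  split_ifs with h
  · simp only [h, iff_true]
    have := openDeg_pos h
    positivity
  · simp [h]

lemma srw_nonneg (ω : Config d) (e : Step d) : 0 ≤ srw d ω e := by
  unfold srw trans
  split_ifs <;> positivity

lemma srw_le_one (ω : Config d) (e : Step d) : srw d ω e ≤ 1 := by
  unfold srw trans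
  split_ifs with h
  · have : (1 : ℝ) ≤ openDeg ω 0 := by exact_mod_cast openDeg_pos h
    rw [div_le_one (by linarith)]
    exact this
  · norm_num

lemma srw_ge {ω : Config d} {e : Step d} (h : edgeOpen ω 0 e.1) :
    1 / (Fintype.card (Step d) : ℝ) ≤ srw d ω e := by
  unfold srw trans
  rw [if_pos h]
  have : (0 : ℝ) < openDeg ω 0 := by exact_mod_cast openDeg_pos h
  exact one_div_le_one_div_of_le this (by exact_mod_cast openDeg_le ω)

open Classical in
lemma srw_sum {ω : Config d} {e : Step d} (h : edgeOpen ω 0 e.1) :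
    ∑ e : Step d, srw d ω e = 1 := by
  have h0 : (0 : ℝ) < openDeg ω 0 := by exact_mod_cast openDeg_pos h
  unfold srw trans
  rw [Finset.sum_coe_sort (Ud d) (fun e => if edgeOpen ω 0 e then 1 / (openDeg ω 0 : ℝ) else 0),
    ← Finset.sum_filter, Finset.sum_const, nsmul_eq_mul]
  change (openDeg ω 0 : ℝ) * _ = 1
  field_simp

lemma srw_meas (e : Step d) : Measurable (fun ω => srw d ω e) := by
  classical
  have h1 : Measurable (fun ω : Config d => openDeg ω 0) := by
    have : (fun ω : Config d => openDeg ω 0) =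
        fun ω => ∑ e ∈ Ud d, if edgeOpen ω 0 e then 1 else 0 := by
      funext ω
      rw [openDeg, Finset.card_filter]
    rw [this]
    refine Finset.measurable_sum _ fun e _ => ?_
    exact Measurable.ite (measurableSet_edgeOpen 0 e) measurable_const measurable_const
  unfold srw trans
  refine Measurable.ite (measurableSet_edgeOpen 0 e.1) ?_ measurable_const
  exact measurable_const.div (measurable_from_nat.comp h1)

lemma meas_env {β : Type*} [MeasurableSpace β] {f : EnvSp d → β}
    (h : ∀ e, Measurable (fun ω => f (ω, e))) : Measurable f :=
  measurable_from_prod_countable_left h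

lemma lint_slice (μ : Measure (EnvSp d)) {f : EnvSp d → ℝ≥0∞} (hf : Measurable f) :
    ∫⁻ q, f q ∂μ = ∑ e : Step d, ∫⁻ ω, f (ω, e) ∂(slice μ e) := by
  have hm : ∀ e : Step d, MeasurableSet (Set.univ ×ˢ {e} : Set (EnvSp d)) :=
    fun e => MeasurableSet.univ.prod (measurableSet_singleton e)
  have h1 : ∀ q : EnvSp d, f q = ∑ e : Step d, (Set.univ ×ˢ {e} : Set (EnvSp d)).indicator f q := by
    rintro ⟨ω, e⟩
    rw [Finset.sum_eq_single e]
    · simp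
    · intro b _ hb
      simp [hb.symm]
    · simp
  calc ∫⁻ q, f q ∂μ = ∫⁻ q, ∑ e : Step d, (Set.univ ×ˢ {e} : Set (EnvSp d)).indicator f q ∂μ :=
        lintegral_congr h1
    _ = ∑ e : Step d, ∫⁻ q, (Set.univ ×ˢ {e} : Set (EnvSp d)).indicator f q ∂μ :=
        lintegral_finsetSum _ fun e _ => hf.indicator (hm e)
    _ = _ := by
        refine Finset.sum_congr rfl fun e _ => ?_
        have hfe : Measurable fun ω => f (ω, e) :=
          hf.comp (by fun_prop : Measurable fun ω : Config d => (ω, e))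
        rw [lintegral_indicator (hm e), slice, lintegral_map hfe measurable_fst]
        refine setLIntegral_congr_fun (hm e) ?_
        rintro ⟨ω, e'⟩ h
        simp only [Set.mem_prod, Set.mem_univ, Set.mem_singleton_iff, true_and] at h
        simp [h]

/-- `κ` is a disintegration of `μ` -/
structure IsKer (μ : Measure (EnvSp d)) (κ : Config d → Step d → ℝ) : Prop where
  meas : ∀ e, Measurable fun ω => κ ω e
  nonneg : ∀ ω e, 0 ≤ κ ω e
  sum : ∀ ω, ∑ e, κ ω e = 1
  pos : ∀ᵐ ω ∂(marg1 μ), ∀ e : Step d, 0 < κ ω e ↔ edgeOpen ω 0 e.1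
  lint : ∀ f : EnvSp d → ℝ≥0∞, Measurable f →
    ∫⁻ q, f q ∂μ = ∫⁻ ω, ∑ e, ENNReal.ofReal (κ ω e) * f (ω, e) ∂(marg1 μ)

lemma IsKer.le_one {μ : Measure (EnvSp d)} {κ : Config d → Step d → ℝ} (h : IsKer μ κ)
    (ω : Config d) (e : Step d) : κ ω e ≤ 1 := by
  rw [← h.sum ω]
  exact Finset.single_le_sum (fun e _ => h.nonneg ω e) (Finset.mem_univ e)

lemma marg1_prob (μ : ProbabilityMeasure (EnvSp d)) : IsProbabilityMeasure (marg1 μ.toMeasure) :=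
  Measure.isProbabilityMeasure_map measurable_fst.aemeasurable

lemma ker_of_density (hd : 0 < d) {μ : ProbabilityMeasure (EnvSp d)}
    {ρ : Step d → Config d → ℝ≥0∞} (hm : ∀ e, Measurable (ρ e))
    (hs : ∀ e, slice μ.toMeasure e = (marg1 μ.toMeasure).withDensity (ρ e))
    (hp : ∀ e : Step d, ∀ᵐ ω ∂(marg1 μ.toMeasure), (0 < ρ e ω ↔ edgeOpen ω 0 e.1)) :
    ∃ κ, IsKer μ.toMeasure κ := by
  classical
  have := step_nonempty hd
  have := marg1_prob μ
  set Q := marg1 μ.toMeasure with hQ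
  have hlint : ∀ f : EnvSp d → ℝ≥0∞, Measurable f →
      ∫⁻ q, f q ∂μ.toMeasure = ∫⁻ ω, ∑ e, ρ e ω * f (ω, e) ∂Q := by
    intro f hf
    have hfe : ∀ e, Measurable fun ω => f (ω, e) := fun e =>
      hf.comp (by fun_prop : Measurable fun ω : Config d => (ω, e))
    have hmul : ∀ e, Measurable fun ω => ρ e ω * f (ω, e) := fun e => (hm e).mul (hfe e)
    rw [lint_slice _ hf, lintegral_finsetSum _ (fun e _ => hmul e)]
    refine Finset.sum_congr rfl fun e _ => ?_
    rw [hs e, lintegral_withDensity_eq_lintegral_mul _ (hm e) (hfe e)]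
    rfl
  have hsm : Measurable fun ω => ∑ e, ρ e ω := Finset.measurable_sum _ fun e _ => hm e
  have hsum : ∀ᵐ ω ∂Q, ∑ e, ρ e ω = 1 := by
    refine ae_eq_of_forall_setLIntegral_eq_of_sigmaFinite (g := fun _ => 1) hsm measurable_const ?_
    intro s hsme _
    have h1 := hlint (fun q => s.indicator 1 q.1)
      ((measurable_const.indicator hsme).comp measurable_fst)
    have h2 : ∫⁻ q : EnvSp d, s.indicator 1 q.1 ∂μ.toMeasure = ∫⁻ ω, s.indicator 1 ω ∂Q := by
      have hi : Measurable (s.indicator (1 : Config d → ℝ≥0∞)) := measurable_const.indicator hsme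
      rw [hQ, marg1, lintegral_map hi measurable_fst]
    rw [h2] at h1
    simp only [← Finset.sum_mul] at h1
    rw [← lintegral_indicator hsme, ← lintegral_indicator hsme]
    refine Eq.trans (lintegral_congr fun ω => ?_) (h1.symm.trans (lintegral_congr fun ω => ?_)) <;>
    by_cases h : ω ∈ s <;> simp [h]
  let κ : Config d → Step d → ℝ := fun ω e =>
    if ∑ e, ρ e ω = 1 then (ρ e ω).toReal else 1 / (Fintype.card (Step d) : ℝ)
  have hset : MeasurableSet {ω : Config d | ∑ e, ρ e ω = 1} :=
    measurableSet_eq_fun hsm measurable_const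
  have hfin : ∀ ω, ∑ e, ρ e ω = 1 → ∀ e, ρ e ω ≠ ∞ := by
    intro ω h e he
    have := Finset.single_le_sum (f := fun e => ρ e ω) (fun e _ => zero_le) (Finset.mem_univ e)
    rw [h] at this
    simp [he] at this
  refine ⟨κ, ⟨fun e => Measurable.ite hset (hm e).ennreal_toReal measurable_const, ?_, ?_, ?_, ?_⟩⟩
  · intro ω e
    simp only [κ]
    split_ifs <;> positivity
  · intro ω
    simp only [κ]
    split_ifs with h
    · rw [← ENNReal.toReal_sum (fun e _ => hfin ω h e), h]; simp
    · have : (Fintype.card (Step d) : ℝ) ≠ 0 := by exact_mod_cast Fintype.card_ne_zero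
      rw [Finset.sum_const, Finset.card_univ, nsmul_eq_mul]
      field_simp
  · filter_upwards [hsum, ae_all_iff.2 hp] with ω h1 h2 e
    rw [← h2 e]
    simp only [κ, if_pos h1]
    rw [ENNReal.toReal_pos_iff]
    exact ⟨fun h => h.1, fun h => ⟨h, (hfin ω h1 e).lt_top⟩⟩
  · intro f hf
    rw [hlint f hf]
    refine lintegral_congr_ae ?_
    filter_upwards [hsum] with ω h1
    refine Finset.sum_congr rfl fun e _ => ?_
    simp only [κ, if_pos h1]
    rw [ENNReal.ofReal_toReal (hfin ω h1 e)]

lemma exists_ker (hd : 0 < d) {P₀ : Measure (Config d)} {μ : ProbabilityMeasure (EnvSp d)}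
    (h : μ ∈ M1star d P₀) : ∃ κ, IsKer μ.toMeasure κ := by
  obtain ⟨_, h2, ρ, h3, h4, h5⟩ := h
  exact ker_of_density hd h3 h4 fun e => h2.ae_le (h5 e)

/-- quenched entropy density -/
def hent (κ : Config d → Step d → ℝ) (ω : Config d) : ℝ :=
  ∑ e, κ ω e * Real.log (κ ω e / srw d ω e)

lemma lint_refM (μ : Measure (EnvSp d)) {f : EnvSp d → ℝ≥0∞} (hf : Measurable f) :
    ∫⁻ q, f q ∂(refM μ) = ∫⁻ ω, ∑ e, ENNReal.ofReal (srw d ω e) * f (ω, e) ∂(marg1 μ) := by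
  have hfe : ∀ e, Measurable fun ω => f (ω, e) := fun e =>
    hf.comp (by fun_prop : Measurable fun ω : Config d => (ω, e))
  have hs : ∀ e, Measurable fun ω => ENNReal.ofReal (srw d ω e) := fun e => (srw_meas e).ennreal_ofReal
  have hmul : ∀ e, Measurable fun ω => ENNReal.ofReal (srw d ω e) * f (ω, e) :=
    fun e => (hs e).mul (hfe e)
  rw [refM, lintegral_sum_measure, tsum_fintype, lintegral_finsetSum _ (fun e _ => hmul e)]
  refine Finset.sum_congr rfl fun e _ => ?_
  rw [lintegral_map hf (by fun_prop)]
  exact lintegral_withDensity_eq_lintegral_mul _ (hs e) (hfe e)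

lemma klFun_nonneg' {x : ℝ} (h : 0 ≤ x) : 0 ≤ klFun x := by
  have := InformationTheory.klFun_nonneg h
  unfold InformationTheory.klFun at this
  unfold klFun
  linarith

lemma hent_meas {μ : Measure (EnvSp d)} {κ : Config d → Step d → ℝ} (h : IsKer μ κ) :
    Measurable (hent κ) :=
  Finset.measurable_sum _ fun e _ => (h.meas e).mul
    (Real.measurable_log.comp ((h.meas e).div (srw_meas e)))

lemma hent_eq {μ : Measure (EnvSp d)} {κ : Config d → Step d → ℝ} (h : IsKer μ κ)
    {ω : Config d} (hω : ∀ e : Step d, 0 < κ ω e ↔ edgeOpen ω 0 e.1) :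
    hent κ ω = ∑ e, srw d ω e * klFun (κ ω e / srw d ω e) := by
  have hex : ∃ e, 0 < κ ω e := by
    by_contra hc
    push Not at hc
    have := h.sum ω
    rw [Finset.sum_eq_zero (fun e _ => le_antisymm (hc e) (h.nonneg ω e))] at this
    norm_num at this
  obtain ⟨e0, he0⟩ := hex
  have hs := srw_sum ((hω e0).1 he0)
  have h2 : ∀ e, srw d ω e * klFun (κ ω e / srw d ω e) =
      κ ω e * Real.log (κ ω e / srw d ω e) - κ ω e + srw d ω e := by
    intro e
    by_cases ho : edgeOpen ω 0 e.1
    · have := srw_pos_iff.2 ho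
      unfold klFun
      field_simp
    · have h3 : κ ω e = 0 := le_antisymm (not_lt.1 fun h' => ho ((hω e).1 h')) (h.nonneg ω e)
      have h4 : srw d ω e = 0 := le_antisymm (not_lt.1 fun h' => ho (srw_pos_iff.1 h'))
        (srw_nonneg ω e)
      simp [h3, h4]
  simp only [h2, Finset.sum_add_distrib, Finset.sum_sub_distrib, hs, h.sum ω, hent]
  ring

lemma hent_nonneg {μ : Measure (EnvSp d)} {κ : Config d → Step d → ℝ} (h : IsKer μ κ)
    {ω : Config d} (hω : ∀ e : Step d, 0 < κ ω e ↔ edgeOpen ω 0 e.1) : 0 ≤ hent κ ω := by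
  rw [hent_eq h hω]
  exact Finset.sum_nonneg fun e _ => mul_nonneg (srw_nonneg ω e)
    (klFun_nonneg' (div_nonneg (h.nonneg ω e) (srw_nonneg ω e)))

lemma klog_bound {x y N : ℝ} (hx0 : 0 < x) (hx1 : x ≤ 1) (hN : 0 < N) (hy : 1 / N ≤ y)
    (hy1 : y ≤ 1) : x * |Real.log (x / y)| ≤ 1 + N := by
  have hy0 : 0 < y := lt_of_lt_of_le (by positivity) hy
  rw [Real.log_div hx0.ne' hy0.ne']
  have h1 := Real.abs_log_mul_self_lt x hx0 hx1
  rw [abs_mul, abs_of_pos hx0] at h1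
  have h2 : |Real.log y| ≤ N := by
    rw [abs_of_nonpos (Real.log_nonpos hy0.le hy1), ← Real.log_inv]
    have h3 : y⁻¹ ≤ N := by
      rw [inv_le_comm₀ hy0 hN]; simpa using hy
    have := Real.log_le_sub_one_of_pos (inv_pos.2 hy0)
    linarith
  have h3 : |Real.log x - Real.log y| ≤ |Real.log x| + |Real.log y| := abs_sub _ _
  have h4 := abs_nonneg (Real.log y)
  nlinarith [abs_nonneg (Real.log x)]

lemma ent_term_bound {μ : Measure (EnvSp d)} {κ : Config d → Step d → ℝ} (h : IsKer μ κ)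
    {ω : Config d} (hω : ∀ e : Step d, 0 < κ ω e ↔ edgeOpen ω 0 e.1) (e : Step d) :
    κ ω e * |Real.log (κ ω e / srw d ω e)| ≤ 1 + (Fintype.card (Step d) : ℝ) := by
  have hN : (0 : ℝ) < Fintype.card (Step d) := by exact_mod_cast Fintype.card_pos_iff.2 ⟨e⟩
  rcases (h.nonneg ω e).eq_or_lt with h0 | h0
  · rw [← h0]; simp; positivity
  · exact klog_bound h0 (h.le_one ω e) hN (srw_ge ((hω e).1 h0)) (srw_le_one ω e)

lemma refM_finite (μ : ProbabilityMeasure (EnvSp d)) : IsFiniteMeasure (refM μ.toMeasure) := by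
  have := marg1_prob μ
  constructor
  rw [← lintegral_one, lint_refM _ measurable_const]
  calc ∫⁻ ω, ∑ e, ENNReal.ofReal (srw d ω e) * 1 ∂(marg1 μ.toMeasure)
      ≤ ∫⁻ ω, ∑ e : Step d, 1 ∂(marg1 μ.toMeasure) := by
        refine lintegral_mono fun ω => Finset.sum_le_sum fun e _ => ?_
        rw [mul_one]
        exact ENNReal.ofReal_le_one.2 (srw_le_one ω e)
    _ < ∞ := by simp

lemma ker_withDensity {μ : ProbabilityMeasure (EnvSp d)} {κ : Config d → Step d → ℝ}
    (h : IsKer μ.toMeasure κ) :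
    μ.toMeasure = (refM μ.toMeasure).withDensity
      (fun q => ENNReal.ofReal (κ q.1 q.2 / srw d q.1 q.2)) := by
  have hg : Measurable fun q : EnvSp d => ENNReal.ofReal (κ q.1 q.2 / srw d q.1 q.2) :=
    meas_env fun e => ((h.meas e).div (srw_meas e)).ennreal_ofReal
  ext s hs
  have hi : Measurable (s.indicator (1 : EnvSp d → ℝ≥0∞)) := measurable_const.indicator hs
  rw [withDensity_apply _ hs, ← lintegral_indicator hs, ← lintegral_indicator_one hs, h.lint _ hi,
    lint_refM _ (hg.indicator hs)]
  refine lintegral_congr_ae ?_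
  filter_upwards [h.pos] with ω hω
  refine Finset.sum_congr rfl fun e _ => ?_
  by_cases hm : (ω, e) ∈ s
  · simp only [Set.indicator_of_mem hm, Pi.one_apply, mul_one]
    rw [← ENNReal.ofReal_mul (srw_nonneg ω e)]
    by_cases ho : edgeOpen ω 0 e.1
    · rw [mul_div_cancel₀ _ (srw_pos_iff.2 ho).ne']
    · have h3 : κ ω e = 0 := le_antisymm (not_lt.1 fun h' => ho ((hω e).1 h')) (h.nonneg ω e)
      simp [h3]
  · simp [hm]

lemma entI_eq {P₀ : Measure (Config d)} {μ : ProbabilityMeasure (EnvSp d)}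
    (hM : μ ∈ M1star d P₀) {κ : Config d → Step d → ℝ} (h : IsKer μ.toMeasure κ) :
    entI P₀ μ = ∫⁻ ω, ENNReal.ofReal (hent κ ω) ∂(marg1 μ.toMeasure) := by
  have := refM_finite μ
  have hg : Measurable fun q : EnvSp d => ENNReal.ofReal (κ q.1 q.2 / srw d q.1 q.2) :=
    meas_env fun e => ((h.meas e).div (srw_meas e)).ennreal_ofReal
  have hw := ker_withDensity h
  have hac : μ.toMeasure ≪ refM μ.toMeasure := by
    conv_lhs => rw [hw]
    exact withDensity_absolutelyContinuous _ _
  have hrn : μ.toMeasure.rnDeriv (refM μ.toMeasure) =ᵐ[refM μ.toMeasure]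
      (fun q => ENNReal.ofReal (κ q.1 q.2 / srw d q.1 q.2)) := by
    have := Measure.rnDeriv_withDensity (refM μ.toMeasure) hg
    rwa [← hw] at this
  have hkl : Measurable klFun :=
    ((measurable_id.mul Real.measurable_log).sub measurable_id).add_const 1
  rw [entI, if_pos ⟨hM, hac⟩]
  have e1 : ∫⁻ q, ENNReal.ofReal (klFun ((μ.toMeasure.rnDeriv (refM μ.toMeasure)) q).toReal)
      ∂(refM μ.toMeasure) = ∫⁻ q, ENNReal.ofReal (klFun (κ q.1 q.2 / srw d q.1 q.2))
      ∂(refM μ.toMeasure) := by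
    refine lintegral_congr_ae ?_
    filter_upwards [hrn] with q hq
    rw [hq, ENNReal.toReal_ofReal (div_nonneg (h.nonneg _ _) (srw_nonneg _ _))]
  rw [e1, lint_refM]
  · refine lintegral_congr_ae ?_
    filter_upwards [h.pos] with ω hω
    rw [hent_eq h hω, ENNReal.ofReal_sum_of_nonneg]
    · refine Finset.sum_congr rfl fun e _ => ?_
      rw [ENNReal.ofReal_mul (srw_nonneg ω e)]
    · exact fun e _ => mul_nonneg (srw_nonneg ω e)
        (klFun_nonneg' (div_nonneg (h.nonneg ω e) (srw_nonneg ω e)))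
  · exact meas_env fun e => (hkl.comp ((h.meas e).div (srw_meas e))).ennreal_ofReal

section Inv

variable {μ : ProbabilityMeasure (EnvSp d)} {κ : Config d → Step d → ℝ}

lemma inv_lint (hk : IsKer μ.toMeasure κ) (hinv : marg1 μ.toMeasure = marg2 μ.toMeasure)
    {F : Config d → ℝ≥0∞} (hF : Measurable F) :
    ∫⁻ ω, ∑ e, ENNReal.ofReal (κ ω e) * F (shift e.1 ω) ∂(marg1 μ.toMeasure) =
      ∫⁻ ω, F ω ∂(marg1 μ.toMeasure) := by
  have hs : Measurable fun q : EnvSp d => shift q.2.1 q.1 := meas_env fun e => measurable_shift e.1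
  rw [← hk.lint (fun q => F (shift q.2.1 q.1)) (hF.comp hs)]
  conv_rhs => rw [hinv, marg2, lintegral_map hF hs]

lemma ae_step (hk : IsKer μ.toMeasure κ) (hinv : marg1 μ.toMeasure = marg2 μ.toMeasure)
    {R : Config d → Prop} (hR : ∀ᵐ ω ∂(marg1 μ.toMeasure), R ω) :
    ∀ᵐ ω ∂(marg1 μ.toMeasure), ∀ e : Step d, 0 < κ ω e → R (shift e.1 ω) := by
  set Q := marg1 μ.toMeasure
  let N := toMeasurable Q {ω | ¬ R ω}
  have hN : MeasurableSet N := measurableSet_toMeasurable _ _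
  have hN0 : Q N = 0 := by rw [measure_toMeasurable]; exact hR
  have hF : Measurable (N.indicator (1 : Config d → ℝ≥0∞)) := measurable_const.indicator hN
  have h1 := inv_lint hk hinv hF
  rw [lintegral_indicator_one hN, hN0, lintegral_eq_zero_iff] at h1
  · filter_upwards [h1] with ω hω e he
    simp only [Pi.zero_apply, Finset.sum_eq_zero_iff, Finset.mem_univ, true_imp_iff,
      mul_eq_zero] at hω
    rcases hω e with h2 | h2
    · rw [ENNReal.ofReal_eq_zero] at h2; linarith
    · by_contra hc
      have : shift e.1 ω ∈ N := subset_toMeasurable _ _ hc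
      simp [this] at h2
  · exact Finset.measurable_sum _ fun e _ =>
      (hk.meas e).ennreal_ofReal.mul (hF.comp (measurable_shift e.1))

/-- configurations reachable by the walk -/
def Reach (κ : Config d → Step d → ℝ) : Config d → Config d → Prop :=
  Relation.ReflTransGen (fun ω ω' => ∃ e : Step d, 0 < κ ω e ∧ ω' = shift e.1 ω)

lemma ae_reach (hk : IsKer μ.toMeasure κ) (hinv : marg1 μ.toMeasure = marg2 μ.toMeasure)
    {R : Config d → Prop} (hR : ∀ᵐ ω ∂(marg1 μ.toMeasure), R ω) :
    ∀ᵐ ω ∂(marg1 μ.toMeasure), ∀ ω', Reach κ ω ω' → R ω' := by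
  let Rn : ℕ → Config d → Prop := fun n => Nat.rec R
    (fun _ S ω => ∀ e : Step d, 0 < κ ω e → S (shift e.1 ω)) n
  have h : ∀ n, ∀ᵐ ω ∂(marg1 μ.toMeasure), Rn n ω := by
    intro n
    induction n with
    | zero => exact hR
    | succ n ih => exact ae_step hk hinv ih
  filter_upwards [ae_all_iff.2 h] with ω hω ω' hr
  have key : ∀ ω, Reach κ ω ω' → (∀ n, Rn n ω) → R ω' := by
    intro ω hr
    induction hr using Relation.ReflTransGen.head_induction_on with
    | refl => intro h; exact h 0
    | head hab _ ih =>
      obtain ⟨e, he, rfl⟩ := hab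
      exact fun h => ih fun n => h (n + 1) e he
  exact key ω hr hω

variable {p : ℝ} {P : Measure (Config d)}

lemma cond_ae_imp (h : IsBernoulli d p P) {R : Config d → Prop}
    (hR : ∀ᵐ ω ∂(P[|cluZero d]), R ω) : ∀ᵐ ω ∂P, memCluster ω 0 → R ω := by
  have := h.1
  rw [ProbabilityTheory.cond, Measure.ae_ennreal_smul_measure_iff
    (ENNReal.inv_ne_zero.2 (measure_ne_top _ _))] at hR
  exact (ae_restrict_iff' measurableSet_cluZero).1 hR

lemma cond_zero {A : Set (Config d)} (h0 : P (cluZero d ∩ A) = 0) :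
    P[|cluZero d] A = 0 := by
  rw [cond_apply measurableSet_cluZero, h0, mul_zero]

lemma ac_of_star (hd : 0 < d) (hp0 : 0 < p) (hp1 : p < 1) (h : IsBernoulli d p P)
    (hM : μ ∈ M1star d (P[|cluZero d])) (hk : IsKer μ.toMeasure κ) :
    P[|cluZero d] ≪ marg1 μ.toMeasure := by
  have := h.1
  have := marg1_prob μ
  obtain ⟨hinv, hac, -⟩ := hM
  set Q := marg1 μ.toMeasure with hQ
  set P₀ := P[|cluZero d] with hP0
  have hfin : IsFiniteMeasure P₀ := by rw [hP0]; infer_instance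
  have hsf : SigmaFinite P₀ := inferInstance
  have hsQ : IsFiniteMeasure Q := inferInstance
  have : Q.HaveLebesgueDecomposition P₀ := Measure.haveLebesgueDecomposition_of_sigmaFinite Q P₀
  have hw : P₀.withDensity (Q.rnDeriv P₀) = Q := Measure.withDensity_rnDeriv_eq Q P₀ hac
  have hm : Measurable (Q.rnDeriv P₀) := Measure.measurable_rnDeriv Q P₀
  let S : Set (Config d) := {ω | Q.rnDeriv P₀ ω ≠ 0}
  have hS : MeasurableSet S := (measurableSet_eq_fun hm measurable_const).compl
  have hQS : ∀ᵐ ω ∂Q, ω ∈ S := by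
    rw [← hw, ae_withDensity_iff hm]
    exact ae_of_all _ fun ω h => h
  have h1 : ∀ᵐ ω ∂Q, ∀ e : Step d, edgeOpen ω 0 e.1 → shift e.1 ω ∈ S := by
    filter_upwards [ae_step hk hinv hQS, hk.pos] with ω h1 h2 e he
    exact h1 e ((h2 e).2 he)
  have h2 : ∀ᵐ ω ∂P₀, ω ∈ S → ∀ e : Step d, edgeOpen ω 0 e.1 → shift e.1 ω ∈ S := by
    rw [← hw, ae_withDensity_iff hm] at h1
    exact h1
  have h3 : ∀ᵐ ω ∂P, memCluster ω 0 → ω ∈ S → ∀ e : V d, edgeOpen ω 0 e → shift e ω ∈ S := by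
    filter_upwards [cond_ae_imp h h2] with ω hω hc hs e he
    exact hω hc hs ⟨e, edgeOpen_mem he⟩ he
  rcases cluster_ergodic hd hp0 hp1 h hS h3 with h4 | h4
  · exfalso
    have h5 : Q S = 0 := hac (cond_zero h4)
    have h6 : Q Sᶜ = 0 := hQS
    have := measure_univ (μ := Q)
    rw [← Set.union_compl_self S] at this
    have h7 := measure_union_null h5 h6
    rw [h7] at this
    norm_num at this
  · have h5 : ∀ᵐ ω ∂P₀, ω ∈ S := cond_zero h4
    rw [← hw]
    exact withDensity_absolutelyContinuous' hm.aemeasurable h5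

lemma zero_one (hd : 0 < d) (hp0 : 0 < p) (hp1 : p < 1) (h : IsBernoulli d p P)
    (hM : μ ∈ M1star d (P[|cluZero d])) (hk : IsKer μ.toMeasure κ) {A : Set (Config d)}
    (hA : MeasurableSet A)
    (hinv : ∀ᵐ ω ∂(marg1 μ.toMeasure), ω ∈ A → ∀ e : Step d, 0 < κ ω e → shift e.1 ω ∈ A) :
    marg1 μ.toMeasure A = 0 ∨ marg1 μ.toMeasure Aᶜ = 0 := by
  have hac := ac_of_star hd hp0 hp1 h hM hk
  have h1 : ∀ᵐ ω ∂(marg1 μ.toMeasure), ω ∈ A → ∀ e : Step d, edgeOpen ω 0 e.1 →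
      shift e.1 ω ∈ A := by
    filter_upwards [hinv, hk.pos] with ω h1 h2 h3 e he
    exact h1 h3 e ((h2 e).2 he)
  have h3 : ∀ᵐ ω ∂P, memCluster ω 0 → ω ∈ A → ∀ e : V d, edgeOpen ω 0 e → shift e ω ∈ A := by
    filter_upwards [cond_ae_imp h (hac.ae_le h1)] with ω hω hc hs e he
    exact hω hc hs ⟨e, edgeOpen_mem he⟩ he
  rcases cluster_ergodic hd hp0 hp1 h hA h3 with h4 | h4
  · exact Or.inl (hM.2.1 (cond_zero h4))
  · exact Or.inr (hM.2.1 (cond_zero h4))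

end Inv

/-- driving noise -/
abbrev Noise := ℕ → unitInterval

/-- law of the driving noise -/
def nuN : Measure Noise := Measure.infinitePi (fun _ : ℕ => (volume : Measure unitInterval))

instance nuN_prob : IsProbabilityMeasure nuN := by unfold nuN; infer_instance

/-- prepend a symbol -/
def consN (a : unitInterval) (u : Noise) : Noise := fun n => Nat.casesOn n a u

lemma consN_meas : Measurable (fun q : unitInterval × Noise => consN q.1 q.2) := by
  refine measurable_pi_lambda _ fun n => ?_
  cases n with
  | zero => exact measurable_fst
  | succ n => exact (measurable_pi_apply n).comp measurable_snd

lemma nuN_cons : (volume.prod nuN).map (fun q : unitInterval × Noise => consN q.1 q.2) = nuN := by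
  classical
  refine Measure.eq_infinitePi _ fun s t ht => ?_
  rw [Measure.map_apply consN_meas (MeasurableSet.pi s.countable_toSet fun i hi => ht i)]
  let t' : ℕ → Set unitInterval := fun i => if i ∈ s then t i else Set.univ
  have ht' : ∀ i, MeasurableSet (t' i) := by
    intro i
    simp only [t']
    split_ifs
    · exact ht i
    · exact MeasurableSet.univ
  let s1 : Finset ℕ := s.preimage Nat.succ (Nat.succ_injective.injOn)
  have e1 : (fun q : unitInterval × Noise => consN q.1 q.2) ⁻¹' (Set.pi s t) =
      t' 0 ×ˢ Set.pi (s1 : Set ℕ) (fun i => t (i + 1)) := by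
    ext ⟨a, u⟩
    simp only [Set.mem_preimage, Set.mem_pi, Set.mem_prod, s1, Finset.coe_preimage, t']
    constructor
    · intro h
      refine ⟨?_, fun i hi => h (i + 1) hi⟩
      split_ifs with h0
      · exact h 0 h0
      · trivial
    · rintro ⟨h0, h1⟩ i hi
      cases i with
      | zero => rw [if_pos (by simpa using hi)] at h0; exact h0
      | succ i => exact h1 i hi
  rw [e1, Measure.prod_prod, nuN, Measure.infinitePi_pi _ (fun i _ => ht (i + 1))]
  by_cases h0 : 0 ∈ s
  · have : s = insert 0 (s1.map ⟨Nat.succ, Nat.succ_injective⟩) := by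
      ext i
      cases i with
      | zero => simp [h0]
      | succ i => simp [s1]
    conv_rhs => rw [this]
    rw [Finset.prod_insert (by simp), Finset.prod_map]
    simp [t', h0]
  · have : s = s1.map ⟨Nat.succ, Nat.succ_injective⟩ := by
      ext i
      cases i with
      | zero => simp [h0]
      | succ i => simp [s1]
    conv_rhs => rw [this]
    rw [Finset.prod_map]
    simp [t', h0]

lemma lint_cons {F : Noise → ℝ≥0∞} (hF : Measurable F) :
    ∫⁻ u, F u ∂nuN = ∫⁻ a : unitInterval, ∫⁻ u, F (consN a u) ∂nuN := by
  have h : Measurable fun q : unitInterval × Noise => F (consN q.1 q.2) := hF.comp consN_meas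
  conv_lhs => rw [← nuN_cons]
  rw [lintegral_map hF consN_meas, lintegral_prod _ h.aemeasurable]

/-- `stp` simulates the kernel `κ` -/
structure IsStp (κ : Config d → Step d → ℝ) (stp : Config d → unitInterval → Step d) : Prop where
  meas : Measurable (Function.uncurry stp)
  law : ∀ ω e, volume {a | stp ω a = e} = ENNReal.ofReal (κ ω e)

lemma exists_stp (hd : 0 < d) {μ : Measure (EnvSp d)} {κ : Config d → Step d → ℝ}
    (hk : IsKer μ κ) : ∃ stp, IsStp κ stp := by
  have := step_nonempty hd
  let K : Kernel (Config d) (Step d) :=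
    ⟨fun ω => ∑ e, ENNReal.ofReal (κ ω e) • Measure.dirac e, by
      refine Measure.measurable_of_measurable_coe _ fun s hs => ?_
      simp only [Measure.coe_finsetSum, Finset.sum_apply, Measure.smul_apply, smul_eq_mul]
      exact Finset.measurable_sum _ fun e _ => (hk.meas e).ennreal_ofReal.mul_const _⟩
  have hK : ∀ ω, K ω = ∑ e, ENNReal.ofReal (κ ω e) • Measure.dirac e := fun ω => rfl
  have : IsMarkovKernel K := by
    constructor
    intro ω
    constructor
    rw [hK]
    simp only [Measure.coe_finsetSum, Finset.sum_apply, Measure.smul_apply, smul_eq_mul,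
      measure_univ, mul_one]
    rw [← ENNReal.ofReal_sum_of_nonneg (fun e _ => hk.nonneg ω e), hk.sum ω, ENNReal.ofReal_one]
  obtain ⟨f, hf, hfK⟩ := Kernel.exists_measurable_map_eq_unitInterval K
  refine ⟨f, hf, fun ω e => ?_⟩
  have hfω : Measurable (f ω) := hf.comp (by fun_prop : Measurable fun a : unitInterval => (ω, a))
  have h1 : volume {a | f ω a = e} = (volume.map (f ω)) {e} := by
    rw [Measure.map_apply hfω (measurableSet_singleton e)]; rfl
  rw [h1, hfK, hK]
  simp only [Measure.coe_finsetSum, Finset.sum_apply, Measure.smul_apply, smul_eq_mul]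
  rw [Finset.sum_eq_single e]
  · simp
  · intro b _ hb
    simp [hb]
  · simp

section Skew

variable {κ : Config d → Step d → ℝ} {stp : Config d → unitInterval → Step d}

/-- the skew product -/
def skew (stp : Config d → unitInterval → Step d) (x : Config d × Noise) : Config d × Noise :=
  (shift (stp x.1 (x.2 0)).1 x.1, fun n => x.2 (n + 1))

/-- first step -/
def fstp (stp : Config d → unitInterval → Step d) (x : Config d × Noise) : EnvSp d :=
  (x.1, stp x.1 (x.2 0))

lemma fstp_meas (hs : IsStp κ stp) : Measurable (fstp stp) := by
  refine measurable_fst.prodMk (hs.meas.comp (measurable_fst.prodMk ?_))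
  fun_prop

lemma skew_meas (hs : IsStp κ stp) : Measurable (skew stp) := by
  refine Measurable.prodMk ?_ ?_
  · have : Measurable fun q : EnvSp d => shift q.2.1 q.1 := meas_env fun e => measurable_shift e.1
    exact this.comp (fstp_meas hs)
  · refine measurable_pi_lambda _ fun n => ?_
    exact (measurable_pi_apply (n + 1)).comp measurable_snd

lemma stp_meas (hs : IsStp κ stp) (ω : Config d) : Measurable (stp ω) :=
  hs.meas.comp (by fun_prop : Measurable fun a : unitInterval => (ω, a))

lemma lint_stp (hs : IsStp κ stp) (ω : Config d) (g : Step d → ℝ≥0∞) :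
    ∫⁻ a, g (stp ω a) = ∑ e, ENNReal.ofReal (κ ω e) * g e := by
  have hm : ∀ e, MeasurableSet {a | stp ω a = e} := fun e =>
    stp_meas hs ω (measurableSet_singleton e)
  have h1 : ∀ a, g (stp ω a) = ∑ e, {a | stp ω a = e}.indicator (fun _ => g e) a := by
    intro a
    rw [Finset.sum_eq_single (stp ω a)]
    · simp
    · intro b _ hb
      simp [hb.symm]
    · simp
  rw [lintegral_congr h1, lintegral_finsetSum _ (fun e _ => measurable_const.indicator (hm e))]
  refine Finset.sum_congr rfl fun e _ => ?_
  rw [lintegral_indicator_const (hm e), hs.law, mul_comm]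

lemma ae_stp_pos (hs : IsStp κ stp) (ω : Config d) :
    ∀ᵐ a : unitInterval, 0 < κ ω (stp ω a) := by
  have h := lint_stp hs ω (fun e => if 0 < κ ω e then 0 else 1)
  have h0 : ∑ e, ENNReal.ofReal (κ ω e) * (if 0 < κ ω e then (0 : ℝ≥0∞) else 1) = 0 := by
    refine Finset.sum_eq_zero fun e _ => ?_
    split_ifs with h1
    · simp
    · rw [ENNReal.ofReal_of_nonpos (not_lt.1 h1), zero_mul]
  rw [h0, lintegral_eq_zero_iff] at h
  · filter_upwards [h] with a ha
    by_contra hc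
    simp [hc] at ha
  · exact (measurable_of_countable (fun e : Step d => if 0 < κ ω e then (0 : ℝ≥0∞) else 1)).comp
      (stp_meas hs ω)

lemma lint_first (hs : IsStp κ stp) (ω : Config d) {G : Step d → Noise → ℝ≥0∞}
    (hG : ∀ e, Measurable (G e)) :
    ∫⁻ u, G (stp ω (u 0)) (fun n => u (n + 1)) ∂nuN =
      ∑ e, ENNReal.ofReal (κ ω e) * ∫⁻ u, G e u ∂nuN := by
  have hG2 : Measurable (fun q : Step d × Noise => G q.1 q.2) :=
    measurable_from_prod_countable_right hG
  rw [lint_cons]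
  · exact lint_stp hs ω (fun e => ∫⁻ u, G e u ∂nuN)
  · refine hG2.comp (Measurable.prodMk ((stp_meas hs ω).comp (measurable_pi_apply 0)) ?_)
    refine measurable_pi_lambda _ fun n => measurable_pi_apply (n + 1)

lemma lint_skew (hs : IsStp κ stp) (ω : Config d) {F : Config d × Noise → ℝ≥0∞}
    (hF : Measurable F) :
    ∫⁻ u, F (skew stp (ω, u)) ∂nuN =
      ∑ e : Step d, ENNReal.ofReal (κ ω e) * ∫⁻ u, F (shift e.1 ω, u) ∂nuN :=
  lint_first hs ω (G := fun e u => F (shift e.1 ω, u)) fun e =>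
    hF.comp (by fun_prop : Measurable fun u : Noise => (shift e.1 ω, u))

variable {μ : ProbabilityMeasure (EnvSp d)}

lemma skew_mp (hk : IsKer μ.toMeasure κ) (hinv : marg1 μ.toMeasure = marg2 μ.toMeasure)
    (hs : IsStp κ stp) :
    MeasurePreserving (skew stp) ((marg1 μ.toMeasure).prod nuN) ((marg1 μ.toMeasure).prod nuN) := by
  have := marg1_prob μ
  refine ⟨skew_meas hs, ?_⟩
  ext s hS
  have hF : Measurable (s.indicator (1 : Config d × Noise → ℝ≥0∞)) := measurable_const.indicator hS
  have h : Measurable fun x => s.indicator (1 : Config d × Noise → ℝ≥0∞) (skew stp x) := hF.comp (skew_meas hs)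
  rw [← lintegral_indicator_one hS, lintegral_map hF (skew_meas hs),
    lintegral_prod _ h.aemeasurable,
    ← lintegral_indicator_one hS, lintegral_prod _ hF.aemeasurable]
  simp only [lint_skew hs _ hF]
  exact inv_lint hk hinv (F := fun ω => ∫⁻ u, s.indicator 1 (ω, u) ∂nuN) hF.lintegral_prod_right'

lemma fstp_mp (hk : IsKer μ.toMeasure κ) (hs : IsStp κ stp) :
    MeasurePreserving (fstp stp) ((marg1 μ.toMeasure).prod nuN) μ.toMeasure := by
  have := marg1_prob μ
  refine ⟨fstp_meas hs, ?_⟩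
  ext s hS
  have hF : Measurable (s.indicator (1 : EnvSp d → ℝ≥0∞)) := measurable_const.indicator hS
  have h : Measurable fun x => s.indicator (1 : EnvSp d → ℝ≥0∞) (fstp stp x) := hF.comp (fstp_meas hs)
  rw [← lintegral_indicator_one hS, lintegral_map hF (fstp_meas hs),
    lintegral_prod _ h.aemeasurable,
    ← lintegral_indicator_one hS, hk.lint _ hF]
  refine lintegral_congr fun ω => ?_
  have := lint_first hs ω (G := fun e _ => s.indicator (1 : EnvSp d → ℝ≥0∞) (ω, e))
    (fun e => measurable_const)
  simp only [lintegral_const, measure_univ, mul_one] at this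
  exact this

end Skew

section Erg

variable {κ : Config d → Step d → ℝ} {stp : Config d → unitInterval → Step d}
variable {μ : ProbabilityMeasure (EnvSp d)}

lemma meas_cons {S : Set Noise} (hS : MeasurableSet S) :
    nuN S = ∫⁻ a : unitInterval, nuN (consN a ⁻¹' S) := by
  have hF : Measurable (S.indicator (1 : Noise → ℝ≥0∞)) := measurable_const.indicator hS
  rw [← lintegral_indicator_one hS, lint_cons hF]
  refine lintegral_congr fun a => ?_
  have hc : Measurable (consN a) :=
    consN_meas.comp (by fun_prop : Measurable fun u : Noise => (a, u))
  rw [← lintegral_indicator_one (hc hS)]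
  rfl

/-- conditional probability of an event given the environment -/
def condH (B : Set (Config d × Noise)) (ω : Config d) : ℝ≥0∞ := nuN (Prod.mk ω ⁻¹' B)

lemma condH_meas {B : Set (Config d × Noise)} (hB : MeasurableSet B) : Measurable (condH B) :=
  measurable_measure_prodMk_left hB

lemma condH_le (B : Set (Config d × Noise)) (ω : Config d) : condH B ω ≤ 1 := prob_le_one

lemma condH_step (hs : IsStp κ stp) {B : Set (Config d × Noise)} (hB : MeasurableSet B)
    (hinv : skew stp ⁻¹' B = B) (ω : Config d) :
    condH B ω = ∑ e : Step d, ENNReal.ofReal (κ ω e) * condH B (shift e.1 ω) := by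
  have hF : Measurable (B.indicator (1 : Config d × Noise → ℝ≥0∞)) := measurable_const.indicator hB
  have hm : ∀ ω : Config d, MeasurableSet (Prod.mk ω ⁻¹' B : Set Noise) := fun ω =>
    measurable_prodMk_left hB
  have h1 : ∀ ω : Config d, condH B ω = ∫⁻ u, B.indicator (1 : Config d × Noise → ℝ≥0∞) (ω, u) ∂nuN := by
    intro ω
    rw [condH, ← lintegral_indicator_one (hm ω)]
    rfl
  have h2 := lint_skew hs ω hF
  simp only [← h1] at h2
  rw [← h2, h1]
  refine lintegral_congr fun u => ?_
  have : (ω, u) ∈ B ↔ skew stp (ω, u) ∈ B := by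
    conv_lhs => rw [← hinv]
    rfl
  by_cases hb : (ω, u) ∈ B
  · rw [Set.indicator_of_mem hb, Set.indicator_of_mem (this.1 hb)]; rfl
  · rw [Set.indicator_of_notMem hb, Set.indicator_of_notMem (fun h => hb (this.2 h))]

lemma condH_harm (hk : IsKer μ.toMeasure κ) (hinv : marg1 μ.toMeasure = marg2 μ.toMeasure)
    (hs : IsStp κ stp) {B : Set (Config d × Noise)} (hB : MeasurableSet B)
    (hBi : skew stp ⁻¹' B = B) :
    ∀ᵐ ω ∂(marg1 μ.toMeasure), ∀ e : Step d, 0 < κ ω e → condH B (shift e.1 ω) = condH B ω := by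
  have := marg1_prob μ
  set Q := marg1 μ.toMeasure
  let g : Config d → ℝ := fun ω => (condH B ω).toReal
  have hgm : Measurable g := (condH_meas hB).ennreal_toReal
  have hfin : ∀ ω, condH B ω ≠ ∞ := fun ω => ne_top_of_le_ne_top ENNReal.one_ne_top (condH_le B ω)
  have hg : ∀ ω, g ω = ∑ e : Step d, κ ω e * g (shift e.1 ω) := by
    intro ω
    simp only [g]
    conv_lhs => rw [condH_step hs hB hBi ω]
    rw [ENNReal.toReal_sum (fun e _ => ENNReal.mul_ne_top ENNReal.ofReal_ne_top (hfin _))]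
    simp [ENNReal.toReal_ofReal (hk.nonneg ω _)]
  let D : Config d → ℝ := fun ω => ∑ e : Step d, κ ω e * (g (shift e.1 ω) - g ω) ^ 2
  have hDm : Measurable D := Finset.measurable_sum _ fun e _ =>
    (hk.meas e).mul (((hgm.comp (measurable_shift e.1)).sub hgm).pow_const 2)
  have hD0 : ∀ ω, 0 ≤ D ω := fun ω =>
    Finset.sum_nonneg fun e _ => mul_nonneg (hk.nonneg ω e) (sq_nonneg _)
  have hid : ∀ ω, D ω + g ω ^ 2 = ∑ e : Step d, κ ω e * g (shift e.1 ω) ^ 2 := by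
    intro ω
    have e1 : D ω = ∑ e : Step d, κ ω e * g (shift e.1 ω) ^ 2
        - 2 * g ω * ∑ e : Step d, κ ω e * g (shift e.1 ω) + g ω ^ 2 * ∑ e : Step d, κ ω e := by
      simp only [D]
      rw [Finset.mul_sum, Finset.mul_sum, ← Finset.sum_sub_distrib, ← Finset.sum_add_distrib]
      refine Finset.sum_congr rfl fun e _ => by ring
    rw [e1, ← hg, hk.sum]
    ring
  have hid2 : ∀ ω, ENNReal.ofReal (D ω) + ENNReal.ofReal (g ω ^ 2) =
      ∑ e : Step d, ENNReal.ofReal (κ ω e) * ENNReal.ofReal (g (shift e.1 ω) ^ 2) := by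
    intro ω
    rw [← ENNReal.ofReal_add (hD0 ω) (sq_nonneg _), hid,
      ENNReal.ofReal_sum_of_nonneg (fun e _ => mul_nonneg (hk.nonneg ω e) (sq_nonneg _))]
    exact Finset.sum_congr rfl fun e _ => ENNReal.ofReal_mul (hk.nonneg ω e)
  have hsqm : Measurable fun ω => ENNReal.ofReal (g ω ^ 2) := (hgm.pow_const 2).ennreal_ofReal
  have h1 := inv_lint hk hinv hsqm
  rw [← lintegral_congr hid2, lintegral_add_left hDm.ennreal_ofReal] at h1
  have hf : ∫⁻ ω, ENNReal.ofReal (g ω ^ 2) ∂Q ≠ ∞ := by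
    refine ne_top_of_le_ne_top (b := ∫⁻ ω, 1 ∂Q) (by simp) (lintegral_mono fun ω => ?_)
    rw [ENNReal.ofReal_le_one]
    have : g ω ≤ 1 := ENNReal.toReal_le_of_le_ofReal zero_le_one (by simpa using condH_le B ω)
    have h0 : 0 ≤ g ω := ENNReal.toReal_nonneg
    nlinarith
  have h2 : ∫⁻ ω, ENNReal.ofReal (D ω) ∂Q = 0 := by
    have : ∫⁻ ω, ENNReal.ofReal (D ω) ∂Q + ∫⁻ ω, ENNReal.ofReal (g ω ^ 2) ∂Q =
      0 + ∫⁻ ω, ENNReal.ofReal (g ω ^ 2) ∂Q := by rw [zero_add]; exact h1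
    exact (ENNReal.add_left_inj hf).1 this
  rw [lintegral_eq_zero_iff hDm.ennreal_ofReal] at h2
  filter_upwards [h2] with ω hω e he
  simp only [Pi.zero_apply, ENNReal.ofReal_eq_zero] at hω
  have h3 : D ω = 0 := le_antisymm hω (hD0 ω)
  have h4 := (Finset.sum_eq_zero_iff_of_nonneg
    (fun e _ => mul_nonneg (hk.nonneg ω e) (sq_nonneg _))).1 h3 e (Finset.mem_univ e)
  have h5 : g (shift e.1 ω) - g ω = 0 := by
    rcases mul_eq_zero.1 h4 with h | h
    · linarith
    · exact pow_eq_zero_iff (two_ne_zero) |>.1 h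
  exact (ENNReal.toReal_eq_toReal_iff' (hfin _) (hfin _)).1 (sub_eq_zero.1 h5)

lemma condH_cyl (hs : IsStp κ stp) {B : Set (Config d × Noise)} (hB : MeasurableSet B)
    (hBi : skew stp ⁻¹' B = B) (n : ℕ) : ∀ (ω : Config d)
    (_ : ∀ ω', Reach κ ω ω' → ∀ e : Step d, 0 < κ ω' e → condH B (shift e.1 ω') = condH B ω')
    (U : ℕ → Set unitInterval) (_ : ∀ i, MeasurableSet (U i)),
    nuN ((Prod.mk ω ⁻¹' B) ∩ {u | ∀ i < n, u i ∈ U i}) =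
      condH B ω * ∏ i ∈ Finset.range n, volume (U i) := by
  have hm : ∀ ω : Config d, MeasurableSet (Prod.mk ω ⁻¹' B : Set Noise) := fun ω =>
    measurable_prodMk_left hB
  have hc : ∀ (n : ℕ) (U : ℕ → Set unitInterval) (_ : ∀ i, MeasurableSet (U i)),
      MeasurableSet {u : Noise | ∀ i < n, u i ∈ U i} := by
    intro n U hU
    have : {u : Noise | ∀ i < n, u i ∈ U i} = ⋂ i, ⋂ (_ : i < n), (fun u : Noise => u i) ⁻¹' U i := by
      ext u; simp
    rw [this]
    exact MeasurableSet.iInter fun i => MeasurableSet.iInter fun _ => measurable_pi_apply i (hU i)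
  induction n with
  | zero => intro ω _ U hU; simp [condH]
  | succ n ih =>
    intro ω hω U hU
    rw [meas_cons ((hm ω).inter (hc _ U hU))]
    have h1 : ∀ᵐ a : unitInterval, nuN (consN a ⁻¹' ((Prod.mk ω ⁻¹' B) ∩ {u | ∀ i < n + 1, u i ∈ U i}))
        = (U 0).indicator (fun _ => condH B ω * ∏ i ∈ Finset.range n, volume (U (i + 1))) a := by
      filter_upwards [ae_stp_pos hs ω] with a ha
      have hmem : ∀ u, (ω, consN a u) ∈ B ↔ (shift (stp ω a).1 ω, u) ∈ B := by
        intro u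
        conv_lhs => rw [← hBi]
        rfl
      have hall : ∀ u : Noise, (∀ i < n + 1, consN a u i ∈ U i) ↔
          a ∈ U 0 ∧ ∀ i < n, u i ∈ U (i + 1) := by
        intro u
        constructor
        · intro h
          exact ⟨h 0 (by omega), fun i hi => h (i + 1) (by omega)⟩
        · rintro ⟨h0, h1⟩ i hi
          cases i with
          | zero => exact h0
          | succ i => exact h1 i (by omega)
      by_cases h0 : a ∈ U 0
      · rw [Set.indicator_of_mem h0]
        have := ih (shift (stp ω a).1 ω) (fun ω' hr => hω ω'
          (Relation.ReflTransGen.head ⟨stp ω a, ha, rfl⟩ hr)) (fun i => U (i + 1)) (fun i => hU _)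
        rw [hω ω Relation.ReflTransGen.refl _ ha] at this
        rw [← this]
        congr 1
        ext u
        simp only [Set.mem_preimage, Set.mem_inter_iff, Set.mem_ofPred_eq, hmem, hall, h0, true_and]
      · rw [Set.indicator_of_notMem h0]
        convert measure_empty (μ := nuN)
        ext u
        simp only [Set.mem_preimage, Set.mem_inter_iff, Set.mem_ofPred_eq, hall, h0, false_and,
          and_false, Set.mem_empty_iff_false]
    rw [lintegral_congr_ae h1, lintegral_indicator_const (hU 0), Finset.prod_range_succ']
    ring

lemma condH_zero_one (hs : IsStp κ stp) {B : Set (Config d × Noise)} (hB : MeasurableSet B)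
    (hBi : skew stp ⁻¹' B = B) (ω : Config d)
    (hω : ∀ ω', Reach κ ω ω' → ∀ e : Step d, 0 < κ ω' e → condH B (shift e.1 ω') = condH B ω') :
    condH B ω = 0 ∨ condH B ω = 1 := by
  classical
  by_cases h0 : condH B ω = 0
  · exact Or.inl h0
  right
  have hfin : condH B ω ≠ ∞ := ne_top_of_le_ne_top ENNReal.one_ne_top (condH_le B ω)
  have hm : MeasurableSet (Prod.mk ω ⁻¹' B : Set Noise) := measurable_prodMk_left hB
  have key : (condH B ω)⁻¹ • nuN.restrict (Prod.mk ω ⁻¹' B) = nuN := by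
    refine Measure.eq_infinitePi _ fun s t ht => ?_
    let U : ℕ → Set unitInterval := fun i => if i ∈ s then t i else Set.univ
    have hU : ∀ i, MeasurableSet (U i) := by
      intro i
      simp only [U]
      split_ifs
      · exact ht i
      · exact MeasurableSet.univ
    obtain ⟨n, hn⟩ := s.exists_nat_subset_range
    have h1 := condH_cyl hs hB hBi n ω hω U hU
    have h2 : {u : Noise | ∀ i < n, u i ∈ U i} = Set.pi (s : Set ℕ) t := by
      ext u
      simp only [Set.mem_ofPred_eq, Set.mem_pi, U]
      constructor
      · intro h i hi
        have := h i (Finset.mem_range.1 (hn hi))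
        rwa [if_pos (by simpa using hi)] at this
      · intro h i hi
        split_ifs with h3
        · exact h i h3
        · trivial
    have h3 : ∏ i ∈ Finset.range n, volume (U i) = ∏ i ∈ s, volume (t i) := by
      rw [← Finset.prod_subset hn]
      · exact Finset.prod_congr rfl fun i hi => by simp [U, hi]
      · intro i _ hi
        simp [U, hi]
    rw [Measure.smul_apply, Measure.restrict_apply (MeasurableSet.pi s.countable_toSet fun i _ => ht i),
      smul_eq_mul, Set.inter_comm, ← h2, h1, h3, ← mul_assoc, ENNReal.inv_mul_cancel h0 hfin, one_mul]
  have h4 : nuN (Prod.mk ω ⁻¹' B)ᶜ = 0 := by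
    rw [← key, Measure.smul_apply, Measure.restrict_apply hm.compl]
    simp
  rw [prob_compl_eq_zero_iff hm] at h4
  exact h4

variable {p : ℝ} {P : Measure (Config d)}

lemma skew_erg (hd : 0 < d) (hp0 : 0 < p) (hp1 : p < 1) (h : IsBernoulli d p P)
    (hM : μ ∈ M1star d (P[|cluZero d])) (hk : IsKer μ.toMeasure κ) (hs : IsStp κ stp)
    {B : Set (Config d × Noise)} (hB : MeasurableSet B) (hBi : skew stp ⁻¹' B = B) :
    ((marg1 μ.toMeasure).prod nuN) B = 0 ∨ ((marg1 μ.toMeasure).prod nuN) Bᶜ = 0 := by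
  have := marg1_prob μ
  have hharm := condH_harm hk hM.1 hs hB hBi
  have hr := ae_reach hk hM.1 hharm
  have h01 : ∀ᵐ ω ∂(marg1 μ.toMeasure), condH B ω = 0 ∨ condH B ω = 1 := by
    filter_upwards [hr] with ω hω
    exact condH_zero_one hs hB hBi ω hω
  let A : Set (Config d) := {ω | condH B ω = 1}
  have hA : MeasurableSet A := condH_meas hB (measurableSet_singleton 1)
  have hAi : ∀ᵐ ω ∂(marg1 μ.toMeasure), ω ∈ A → ∀ e : Step d, 0 < κ ω e → shift e.1 ω ∈ A := by
    filter_upwards [hharm] with ω hω h1 e he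
    exact (hω e he).trans h1
  rcases zero_one hd hp0 hp1 h hM hk hA hAi with h0 | h0
  · left
    rw [Measure.measure_prod_null hB]
    filter_upwards [h01, measure_eq_zero_iff_ae_notMem.1 h0] with ω h1 h2
    exact h1.resolve_right h2
  · right
    rw [Measure.measure_prod_null hB.compl]
    filter_upwards [measure_eq_zero_iff_ae_notMem.1 h0] with ω h2
    have h3 : condH B ω = 1 := by simpa [A] using h2
    exact (prob_compl_eq_zero_iff (measurable_prodMk_left hB)).2 h3

end Erg

section PathLaw

variable {κ : Config d → Step d → ℝ} {stp : Config d → unitInterval → Step d}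

lemma pos_zero {n : ℕ} (s : Fin n → Step d) : pos s 0 = 0 := by simp [pos]

lemma pos_succ {n : ℕ} (s : Fin n → Step d) (k : Fin n) : pos s (k + 1) = (s k).1 + pos s k := by
  have : Finset.univ.filter (fun j : Fin n => (j : ℕ) < k + 1) =
      insert k (Finset.univ.filter (fun j : Fin n => (j : ℕ) < k)) := by
    ext j
    simp only [Finset.mem_filter, Finset.mem_univ, true_and, Finset.mem_insert, Fin.ext_iff]
    omega
  rw [pos, this, Finset.sum_insert (by simp)]
  rfl

lemma pos_cons {n : ℕ} (s : Fin (n + 1) → Step d) (k : ℕ) :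
    pos s (k + 1) = pos (fun j : Fin n => s j.succ) k + (s 0).1 := by
  unfold pos
  rw [Finset.sum_filter, Finset.sum_filter, Fin.sum_univ_succ, add_comm]
  simp

lemma pathProb_cons (κ : Config d → Step d → ℝ) (ω : Config d) {n : ℕ} (s : Fin (n + 1) → Step d) :
    pathProb κ ω s = κ ω (s 0) * pathProb κ (shift (s 0).1 ω) (fun j : Fin n => s j.succ) := by
  unfold pathProb
  rw [Fin.prod_univ_succ]
  congr 1
  · simp [pos_zero, shift_zero]
  · refine Finset.prod_congr rfl fun k _ => ?_
    rw [Fin.val_succ, pos_cons, shift_shift]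

/-- the simulated trajectory -/
def sts (stp : Config d → unitInterval → Step d) (n : ℕ) (x : Config d × Noise) : Fin n → Step d :=
  fun k => (fstp stp ((skew stp)^[k] x)).2

lemma sts_env (n : ℕ) (x : Config d × Noise) (k : ℕ) (hk : k ≤ n) :
    shift (pos (sts stp n x) k) x.1 = ((skew stp)^[k] x).1 := by
  induction k with
  | zero => simp [pos_zero, shift_zero]
  | succ k ih =>
    have h1 := pos_succ (sts stp n x) ⟨k, hk⟩
    simp only at h1
    rw [h1, ← shift_shift, ih (by omega), Function.iterate_succ_apply']
    rfl

lemma envPair_sts (n : ℕ) (x : Config d × Noise) (k : Fin n) :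
    envPair x.1 (sts stp n x) k = fstp stp ((skew stp)^[k] x) := by
  unfold envPair
  rw [sts_env n x k k.2.le]
  rfl

lemma birk_sts (f : EnvSp d → ℝ) (n : ℕ) (x : Config d × Noise) :
    birkhoffSum (skew stp) (fun y => f (fstp stp y)) n x =
      ∑ k : Fin n, f (envPair x.1 (sts stp n x) k) := by
  unfold birkhoffSum
  simp only [envPair_sts]
  exact Finset.sum_range (fun k => f (fstp stp ((skew stp)^[k] x)))

lemma sts_meas (hs : IsStp κ stp) (n : ℕ) : Measurable (sts stp n) :=
  measurable_pi_lambda _ fun k =>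
    measurable_snd.comp ((fstp_meas hs).comp ((skew_meas hs).iterate k))

lemma sts_law (hk : ∀ ω e, 0 ≤ κ ω e) (hs : IsStp κ stp) (n : ℕ) : ∀ (ω : Config d) (s : Fin n → Step d),
    nuN {u | sts stp n (ω, u) = s} = ENNReal.ofReal (pathProb κ ω s) := by
  classical
  induction n with
  | zero =>
    intro ω s
    have : {u : Noise | sts stp 0 (ω, u) = s} = Set.univ := by
      ext u
      simp only [Set.mem_ofPred_eq, Set.mem_univ, iff_true]
      exact Subsingleton.elim _ _
    rw [this]
    simp [pathProb]
  | succ n ih =>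
    intro ω s
    have hm : ∀ ω : Config d, MeasurableSet {u : Noise | sts stp n (ω, u) = fun j => s j.succ} := fun ω =>
      ((sts_meas hs n).comp (by fun_prop : Measurable fun u : Noise => (ω, u)))
        (measurableSet_singleton _)
    have hm1 : MeasurableSet {u : Noise | sts stp (n + 1) (ω, u) = s} :=
      ((sts_meas hs (n + 1)).comp (by fun_prop : Measurable fun u : Noise => (ω, u)))
        (measurableSet_singleton _)
    have h1 := lint_first hs ω (G := fun e u => if e = s 0 then
      {u : Noise | sts stp n (shift e.1 ω, u) = fun j => s j.succ}.indicator 1 u else 0)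
      (fun e => by
        by_cases he : e = s 0
        · simp only [he, if_true]; exact measurable_const.indicator (hm _)
        · simp only [he, if_false]; exact measurable_const)
    have h2 : ∀ u : Noise, {u : Noise | sts stp (n + 1) (ω, u) = s}.indicator (1 : Noise → ℝ≥0∞) u =
        if stp ω (u 0) = s 0 then {u' : Noise | sts stp n (shift (stp ω (u 0)).1 ω, u') =
          fun j => s j.succ}.indicator 1 (fun n => u (n + 1)) else 0 := by
      intro u
      have h3 : sts stp (n + 1) (ω, u) = s ↔ stp ω (u 0) = s 0 ∧
          sts stp n (shift (stp ω (u 0)).1 ω, fun n => u (n + 1)) = fun j => s j.succ := by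
        rw [funext_iff, Fin.forall_fin_succ, funext_iff]
        rfl
      by_cases h4 : stp ω (u 0) = s 0
      · rw [if_pos h4]
        simp only [Set.indicator_apply, Set.mem_ofPred_eq, h3, h4, true_and]
        rfl
      · rw [if_neg h4, Set.indicator_of_notMem]
        simp only [Set.mem_ofPred_eq, h3, h4, false_and, not_false_eq_true]
    rw [← lintegral_indicator_one hm1, lintegral_congr h2, h1, Finset.sum_eq_single (s 0)]
    · simp only [if_true]
      rw [lintegral_indicator_one (hm _), ih, pathProb_cons, ENNReal.ofReal_mul (hk _ _)]
    · intro b _ hb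
      simp [hb]
    · simp

lemma sts_law_le (hk : ∀ ω e, 0 ≤ κ ω e) (hs : IsStp κ stp) (n : ℕ) (ω : Config d)
    (E : Set (Fin n → Step d)) :
    nuN {u | sts stp n (ω, u) ∈ E} ≤ ENNReal.ofReal (qP κ ω E) := by
  classical
  have h1 : {u : Noise | sts stp n (ω, u) ∈ E} ⊆
      ⋃ s ∈ Finset.univ.filter (fun s => s ∈ E), {u | sts stp n (ω, u) = s} := by
    intro u hu
    simp only [Set.mem_iUnion]
    exact ⟨sts stp n (ω, u), by simpa using hu, rfl⟩
  refine (measure_mono h1).trans ((measure_biUnion_finset_le _ _).trans ?_)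
  simp only [sts_law hk hs]
  have hpn : ∀ s : Fin n → Step d, 0 ≤ pathProb κ ω s := fun s => Finset.prod_nonneg fun k _ => hk _ _
  rw [← ENNReal.ofReal_sum_of_nonneg (fun s _ => hpn s)]
  refine ENNReal.ofReal_le_ofReal (le_of_eq ?_)
  rw [Finset.sum_filter, qP]
  rfl

end PathLaw

lemma half_of_ae_eventually {S : ℕ → Set Noise} (h : ∀ᵐ u ∂nuN, ∀ᶠ n in atTop, u ∈ S n) :
    ∀ᶠ n in atTop, 1 / 2 ≤ nuN (S n) := by
  let T : ℕ → Set Noise := fun N => {u | ∀ n ≥ N, u ∈ S n}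
  have hmono : Monotone T := fun a b hab u hu n hn => hu n (hab.trans hn)
  have h1 : nuN (⋃ N, T N) = 1 := by
    rw [← measure_univ (μ := nuN)]
    refine measure_congr ?_
    filter_upwards [h] with u hu
    refine propext ⟨fun _ => trivial, fun _ => ?_⟩
    obtain ⟨N, hN⟩ := eventually_atTop.1 hu
    exact Set.mem_iUnion.2 ⟨N, hN⟩
  have h2 := tendsto_measure_iUnion_atTop (μ := nuN) hmono
  rw [h1] at h2
  have h3 : ∀ᶠ N in atTop, 1 / 2 < nuN (T N) :=
    h2.eventually (lt_mem_nhds (by norm_num))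
  filter_upwards [h3] with N hN
  exact hN.le.trans (measure_mono fun u hu => hu N le_rfl)

lemma nhds_basis_pm {G : Set (ProbabilityMeasure (EnvSp d))} {μ : ProbabilityMeasure (EnvSp d)}
    (hG : G ∈ 𝓝 μ) : ∃ (I : Finset (BoundedContinuousFunction (EnvSp d) ℝ)) (ε : ℝ), 0 < ε ∧
      ∀ ν : ProbabilityMeasure (EnvSp d), (∀ f ∈ I, |pairing f ν - pairing f μ| < ε) → ν ∈ G := by
  classical
  let F : Filter (ProbabilityMeasure (EnvSp d)) :=
    ⨅ f : BoundedContinuousFunction (EnvSp d) ℝ,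
      comap (fun ν => pairing f ν) (𝓝 (pairing f μ))
  have h1 : Tendsto (id : ProbabilityMeasure (EnvSp d) → _) F (𝓝 μ) := by
    rw [ProbabilityMeasure.tendsto_iff_forall_integral_tendsto]
    intro f
    exact tendsto_comap.mono_left (iInf_le _ f)
  have h2 : G ∈ F := h1 hG
  obtain ⟨I, hI, V, hV, -, hU, -⟩ := mem_iInf'.1 h2
  have h3 : ∀ f : BoundedContinuousFunction (EnvSp d) ℝ, ∃ ε > 0,
      ∀ ν, |pairing f ν - pairing f μ| < ε → ν ∈ V f := by
    intro f
    obtain ⟨W, hW, hWV⟩ := mem_comap.1 (hV f)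
    obtain ⟨ε, hε, hb⟩ := Metric.mem_nhds_iff.1 hW
    exact ⟨ε, hε, fun ν hν => hWV (hb (by rw [Metric.mem_ball, Real.dist_eq]; exact hν))⟩
  choose ε hε hεV using h3
  obtain ⟨ε₀, h0, hle⟩ : ∃ ε₀ > 0, ∀ f ∈ hI.toFinset, ε₀ ≤ ε f := by
    generalize hI.toFinset = J
    induction J using Finset.induction_on with
    | empty => exact ⟨1, one_pos, by simp⟩
    | insert a s _ ih =>
      obtain ⟨e, he, h⟩ := ih
      refine ⟨min e (ε a), lt_min he (hε a), fun f hf => ?_⟩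
      rcases Finset.mem_insert.1 hf with rfl | hf
      · exact min_le_right _ _
      · exact (min_le_left _ _).trans (h f hf)
  refine ⟨hI.toFinset, ε₀, h0, fun ν hν => ?_⟩
  rw [hU]
  refine Set.mem_iInter₂.2 fun f hf => hεV f ν ?_
  have hf' : f ∈ hI.toFinset := by simpa using hf
  exact (hν f hf').trans_le (hle f hf')

section LogRatio

variable {κ : Config d → Step d → ℝ} {μ : ProbabilityMeasure (EnvSp d)}

/-- log of the likelihood ratio -/
def lrat (κ : Config d → Step d → ℝ) (q : EnvSp d) : ℝ := Real.log (κ q.1 q.2 / srw d q.1 q.2)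

lemma lrat_meas (hk : IsKer μ.toMeasure κ) : Measurable (lrat κ) :=
  meas_env fun e => Real.measurable_log.comp ((hk.meas e).div (srw_meas e))

lemma lrat_lint_lt (hk : IsKer μ.toMeasure κ) :
    ∫⁻ q, ENNReal.ofReal |lrat κ q| ∂μ.toMeasure < ∞ := by
  have := marg1_prob μ
  have hm : Measurable fun q => ENNReal.ofReal |lrat κ q| :=
    (lrat_meas hk).abs.ennreal_ofReal
  rw [hk.lint _ hm]
  calc ∫⁻ ω, ∑ e, ENNReal.ofReal (κ ω e) * ENNReal.ofReal |lrat κ (ω, e)| ∂(marg1 μ.toMeasure)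
      ≤ ∫⁻ ω, ∑ e : Step d, ENNReal.ofReal (1 + (Fintype.card (Step d) : ℝ)) ∂(marg1 μ.toMeasure) := by
        refine lintegral_mono_ae ?_
        filter_upwards [hk.pos] with ω hω
        refine Finset.sum_le_sum fun e _ => ?_
        rw [← ENNReal.ofReal_mul (hk.nonneg ω e)]
        exact ENNReal.ofReal_le_ofReal (ent_term_bound hk hω e)
    _ < ∞ := by
        rw [lintegral_const, measure_univ, mul_one, Finset.sum_const, nsmul_eq_mul]
        exact ENNReal.mul_lt_top (ENNReal.natCast_lt_top _) ENNReal.ofReal_lt_top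

lemma lrat_int (hk : IsKer μ.toMeasure κ) : Integrable (lrat κ) μ.toMeasure := by
  refine ⟨(lrat_meas hk).aestronglyMeasurable, ?_⟩
  rw [hasFiniteIntegral_iff_norm]
  exact lrat_lint_lt hk

lemma entI_int {P₀ : Measure (Config d)} (hM : μ ∈ M1star d P₀) (hk : IsKer μ.toMeasure κ) :
    entI P₀ μ ≠ ∞ ∧ (entI P₀ μ).toReal = ∫ q, lrat κ q ∂μ.toMeasure := by
  have hkm : ∀ e, Measurable fun ω => κ ω e := hk.meas
  have hlm := lrat_meas hk
  have hle : ∀ e, Measurable fun ω => lrat κ (ω, e) := fun e =>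
    hlm.comp (by fun_prop : Measurable fun ω : Config d => (ω, e))
  have hlt := lrat_lint_lt hk
  have hnm : Measurable fun q => ENNReal.ofReal (-lrat κ q) := hlm.neg.ennreal_ofReal
  have hC : ∫⁻ q, ENNReal.ofReal (-lrat κ q) ∂μ.toMeasure ≠ ∞ :=
    (lt_of_le_of_lt (lintegral_mono fun q => ENNReal.ofReal_le_ofReal (neg_le_abs _)) hlt).ne
  have hkey : ∫⁻ q, ENNReal.ofReal (lrat κ q) ∂μ.toMeasure =
      entI P₀ μ + ∫⁻ q, ENNReal.ofReal (-lrat κ q) ∂μ.toMeasure := by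
    rw [entI_eq hM hk, hk.lint _ hlm.ennreal_ofReal, hk.lint _ hnm,
      ← lintegral_add_left (hent_meas hk).ennreal_ofReal]
    refine lintegral_congr_ae ?_
    filter_upwards [hk.pos] with ω hω
    have h0 := hent_nonneg hk hω
    have e1 : ∀ x : Step d → ℝ, ∑ e, ENNReal.ofReal (κ ω e) * ENNReal.ofReal (x e) =
        ENNReal.ofReal (∑ e, κ ω e * max (x e) 0) := by
      intro x
      rw [ENNReal.ofReal_sum_of_nonneg (fun e _ => mul_nonneg (hk.nonneg ω e) (le_max_right _ _))]
      refine Finset.sum_congr rfl fun e _ => ?_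
      rw [ENNReal.ofReal_mul (hk.nonneg ω e), ENNReal.ofReal_max, ENNReal.ofReal_zero,
        max_eq_left (zero_le)]
    rw [e1 (fun e => lrat κ (ω, e)), e1 (fun e => -lrat κ (ω, e)), ← ENNReal.ofReal_add h0
      (Finset.sum_nonneg fun e _ => mul_nonneg (hk.nonneg ω e) (le_max_right _ _))]
    congr 1
    rw [hent, ← Finset.sum_add_distrib]
    refine Finset.sum_congr rfl fun e _ => ?_
    rw [← mul_add]
    congr 1
    change max (lrat κ (ω, e)) 0 = lrat κ (ω, e) + _
    rcases le_total 0 (lrat κ (ω, e)) with h | h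
    · rw [max_eq_left h, max_eq_right (by linarith)]; ring
    · rw [max_eq_right h, max_eq_left (by linarith)]; ring
  have hA : ∫⁻ q, ENNReal.ofReal (lrat κ q) ∂μ.toMeasure ≠ ∞ :=
    (lt_of_le_of_lt (lintegral_mono fun q => ENNReal.ofReal_le_ofReal (le_abs_self _)) hlt).ne
  have hI : entI P₀ μ ≠ ∞ := fun h => hA (by rw [hkey, h, top_add])
  refine ⟨hI, ?_⟩
  rw [integral_eq_lintegral_pos_part_sub_lintegral_neg_part (lrat_int hk), hkey,
    ENNReal.toReal_add hI hC, add_sub_cancel_right]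

end LogRatio

section LB

variable {κ : Config d → Step d → ℝ} {μ : ProbabilityMeasure (EnvSp d)}
variable {p : ℝ} {P : Measure (Config d)}

/-- good trajectories -/
def goodE (κ : Config d → Step d → ℝ) (μ : ProbabilityMeasure (EnvSp d))
    (I : Finset (BoundedContinuousFunction (EnvSp d) ℝ)) (ε b : ℝ) (ω : Config d) (n : ℕ) :
    Set (Fin n → Step d) :=
  {s | (∀ k, 0 < κ (envPair ω s k).1 (envPair ω s k).2 ∧
      0 < srw d (envPair ω s k).1 (envPair ω s k).2) ∧
    ∑ k, lrat κ (envPair ω s k) ≤ n * b ∧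
    ∀ f ∈ I, |∑ k, f (envPair ω s k) - n * pairing f μ| ≤ n * ε}

lemma pathProb_ge {I : Finset (BoundedContinuousFunction (EnvSp d) ℝ)} {ε b : ℝ} {ω : Config d}
    {n : ℕ} {s : Fin n → Step d} (hs : s ∈ goodE κ μ I ε b ω n) :
    Real.exp (-(n * b)) * pathProb κ ω s ≤ pathProb (srw d) ω s := by
  obtain ⟨h1, h2, -⟩ := hs
  have e1 : pathProb (srw d) ω s = Real.exp (-∑ k, lrat κ (envPair ω s k)) * pathProb κ ω s := by
    unfold pathProb
    rw [← Finset.sum_neg_distrib, Real.exp_sum, ← Finset.prod_mul_distrib]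
    refine Finset.prod_congr rfl fun k _ => ?_
    obtain ⟨ha, hb⟩ := h1 k
    have : lrat κ (envPair ω s k) = Real.log (κ (envPair ω s k).1 (envPair ω s k).2 /
      srw d (envPair ω s k).1 (envPair ω s k).2) := rfl
    rw [this, ← Real.log_inv, Real.exp_log (by positivity), inv_div]
    change srw d (envPair ω s k).1 (envPair ω s k).2 = _ / _ * κ (envPair ω s k).1 (envPair ω s k).2
    field_simp
  rw [e1]
  refine mul_le_mul_of_nonneg_right (Real.exp_le_exp.2 (by linarith)) ?_
  exact Finset.prod_nonneg fun k _ => (h1 k).1.le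

lemma qP_ge {I : Finset (BoundedContinuousFunction (EnvSp d) ℝ)} {ε b : ℝ} {ω : Config d}
    {n : ℕ} {A : Set (Fin n → Step d)} (hA : goodE κ μ I ε b ω n ⊆ A) :
    Real.exp (-(n * b)) * qP κ ω (goodE κ μ I ε b ω n) ≤ qP (srw d) ω A := by
  classical
  unfold qP
  rw [Finset.mul_sum]
  refine Finset.sum_le_sum fun s _ => ?_
  by_cases hs : s ∈ goodE κ μ I ε b ω n
  · rw [Set.indicator_of_mem hs, Set.indicator_of_mem (hA hs)]
    exact pathProb_ge hs
  · rw [Set.indicator_of_notMem hs, mul_zero]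
    exact Set.indicator_nonneg (fun s _ => Finset.prod_nonneg fun k _ => srw_nonneg _ _) _

lemma pairing_emp (f : BoundedContinuousFunction (EnvSp d) ℝ) (ω : Config d) {n : ℕ}
    (s : Fin (n + 1) → Step d) :
    pairing f (empPM ω s) = ((n + 1 : ℕ) : ℝ)⁻¹ * ∑ k, f (envPair ω s k) := by
  unfold pairing
  change ∫ q, f q ∂(empMeas ω s) = _
  unfold empMeas
  have hm : StronglyMeasurable (fun q => f q) := f.continuous.stronglyMeasurable
  rw [integral_smul_measure, integral_finsetSum_measure]
  · simp only [integral_dirac' _ _ hm]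
    rw [ENNReal.toReal_inv, ENNReal.toReal_natCast, smul_eq_mul]
  · intro k _
    exact f.integrable _

lemma good_ae (hd : 0 < d) (hp0 : 0 < p) (hp1 : p < 1) (h : IsBernoulli d p P)
    (hM : μ ∈ M1star d (P[|cluZero d])) (hk : IsKer μ.toMeasure κ)
    (I : Finset (BoundedContinuousFunction (EnvSp d) ℝ)) {ε δ : ℝ} (hε : 0 < ε) (hδ : 0 < δ) :
    ∀ᵐ ω ∂(marg1 μ.toMeasure), ∀ᶠ n in atTop,
      1 / 2 ≤ qP κ ω (goodE κ μ I ε ((entI (P[|cluZero d]) μ).toReal + δ) ω n) := by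
  have := marg1_prob μ
  obtain ⟨stp, hs⟩ := exists_stp hd hk
  have hmp := skew_mp hk hM.1 hs
  have hfm := fstp_mp hk hs
  have herg : ∀ B, MeasurableSet B → skew stp ⁻¹' B = B →
      ((marg1 μ.toMeasure).prod nuN) B = 0 ∨ ((marg1 μ.toMeasure).prod nuN) Bᶜ = 0 :=
    fun B hB hBi => skew_erg hd hp0 hp1 h hM hk hs hB hBi
  have hintg : ∀ f : EnvSp d → ℝ, Measurable f → Integrable f μ.toMeasure →
      Integrable (fun y => f (fstp stp y)) ((marg1 μ.toMeasure).prod nuN) := fun f hf hi =>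
    (hfm.integrable_comp hf.aestronglyMeasurable).2 hi
  have hinteq : ∀ f : EnvSp d → ℝ, Measurable f →
      ∫ y, f (fstp stp y) ∂((marg1 μ.toMeasure).prod nuN) = ∫ q, f q ∂μ.toMeasure := by
    intro f hf
    conv_rhs => rw [← hfm.map_eq]
    rw [integral_map hfm.measurable.aemeasurable hf.aestronglyMeasurable]
  have hlm := lrat_meas hk
  have h1 : ∀ᵐ x ∂((marg1 μ.toMeasure).prod nuN), ∀ᶠ n : ℕ in atTop,
      ∑ k, lrat κ (envPair x.1 (sts stp n x) k) ≤ n * ((entI (P[|cluZero d]) μ).toReal + δ) := by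
    have := birk_upper hmp herg (f := fun y => lrat κ (fstp stp y)) (hlm.comp hfm.measurable)
      (hintg _ hlm (lrat_int hk)) hδ
    rw [hinteq _ hlm, ← (entI_int hM hk).2] at this
    filter_upwards [this] with x hx
    filter_upwards [hx] with n hn
    rwa [birk_sts] at hn
  have h2 : ∀ᵐ x ∂((marg1 μ.toMeasure).prod nuN), ∀ f ∈ I, ∀ᶠ n : ℕ in atTop,
      |∑ k, f (envPair x.1 (sts stp n x) k) - n * pairing f μ| ≤ n * ε := by
    rw [Finset.eventually_all]
    intro f _
    have hf : Measurable (fun q => f q) := f.continuous.measurable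
    have := birk_abs hmp herg (f := fun y => f (fstp stp y)) (hf.comp hfm.measurable)
      (hintg _ hf (f.integrable _)) hε
    rw [hinteq _ hf] at this
    filter_upwards [this] with x hx
    filter_upwards [hx] with n hn
    rwa [birk_sts (fun q => f q)] at hn
  have h3 : ∀ᵐ q ∂μ.toMeasure, 0 < κ q.1 q.2 ∧ 0 < srw d q.1 q.2 := by
    have hm1 : Measurable fun q : EnvSp d => κ q.1 q.2 := meas_env hk.meas
    have hm2 : Measurable fun q : EnvSp d => srw d q.1 q.2 := meas_env srw_meas
    have hms : MeasurableSet {q : EnvSp d | ¬ (0 < κ q.1 q.2 ∧ 0 < srw d q.1 q.2)} := by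
      exact ((measurableSet_lt measurable_const hm1).inter
        (measurableSet_lt measurable_const hm2)).compl
    have hmi : Measurable ({q : EnvSp d | ¬ (0 < κ q.1 q.2 ∧ 0 < srw d q.1 q.2)}.indicator
        (1 : EnvSp d → ℝ≥0∞)) := measurable_const.indicator hms
    rw [ae_iff, ← lintegral_indicator_one hms, hk.lint _ hmi]
    refine (lintegral_congr_ae ?_).trans lintegral_zero
    filter_upwards [hk.pos] with ω hω
    refine Finset.sum_eq_zero fun e _ => ?_
    by_cases he : 0 < κ ω e
    · rw [Set.indicator_of_notMem, mul_zero]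
      simp only [Set.mem_ofPred_eq, not_not]
      exact ⟨he, srw_pos_iff.2 ((hω e).1 he)⟩
    · rw [ENNReal.ofReal_of_nonpos (not_lt.1 he), zero_mul]
  have h4 : ∀ᵐ x ∂((marg1 μ.toMeasure).prod nuN), ∀ k : ℕ,
      0 < κ (fstp stp ((skew stp)^[k] x)).1 (fstp stp ((skew stp)^[k] x)).2 ∧
      0 < srw d (fstp stp ((skew stp)^[k] x)).1 (fstp stp ((skew stp)^[k] x)).2 := by
    rw [ae_all_iff]
    intro k
    exact (hfm.comp (hmp.iterate k)).quasiMeasurePreserving.ae h3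
  have h5 : ∀ᵐ x ∂((marg1 μ.toMeasure).prod nuN), ∀ᶠ n : ℕ in atTop,
      sts stp n x ∈ goodE κ μ I ε ((entI (P[|cluZero d]) μ).toReal + δ) x.1 n := by
    filter_upwards [h1, h2, h4] with x a1 a2 a4
    rw [← Finset.eventually_all] at a2
    filter_upwards [a1, a2] with n b1 b2
    refine ⟨fun k => ?_, b1, b2⟩
    rw [envPair_sts]
    exact a4 k
  filter_upwards [Measure.ae_ae_of_ae_prod h5] with ω hω
  filter_upwards [half_of_ae_eventually (S := fun n => {u | sts stp n (ω, u) ∈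
    goodE κ μ I ε ((entI (P[|cluZero d]) μ).toReal + δ) ω n}) hω] with n hn
  have h6 := hn.trans (sts_law_le hk.nonneg hs n ω _)
  have h7 : (1 / 2 : ℝ≥0∞) = ENNReal.ofReal (1 / 2) := by
    rw [ENNReal.ofReal_div_of_pos (by norm_num)]; simp
  rw [h7, ENNReal.ofReal_le_ofReal_iff'] at h6
  rcases h6 with h6 | h6
  · exact h6
  · norm_num at h6

lemma lb_one (hd : 0 < d) (hp0 : 0 < p) (hp1 : p < 1) (h : IsBernoulli d p P)
    (hM : μ ∈ M1star d (P[|cluZero d])) {G : Set (ProbabilityMeasure (EnvSp d))} (hG : G ∈ 𝓝 μ)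
    {δ : ℝ} (hδ : 0 < δ) :
    ∀ᵐ ω ∂(P[|cluZero d]), ∀ᶠ n : ℕ in atTop,
      ENNReal.ofReal (Real.exp (-(((n + 1 : ℕ) : ℝ) * ((entI (P[|cluZero d]) μ).toReal + δ)))) ≤
        qPE (srw d) ω {s : Fin (n + 1) → Step d | empPM ω s ∈ G} := by
  obtain ⟨κ, hk⟩ := exists_ker hd hM
  obtain ⟨I, ε, hε, hI⟩ := nhds_basis_pm hG
  have h1 := (ac_of_star hd hp0 hp1 h hM hk).ae_le
    (good_ae hd hp0 hp1 h hM hk I (half_pos hε) (half_pos hδ))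
  filter_upwards [h1] with ω hω
  have h2 := (tendsto_add_atTop_nat 1).eventually hω
  filter_upwards [h2, eventually_ge_atTop ⌈2 / δ⌉₊] with n hn hn2
  unfold qPE
  refine ENNReal.ofReal_le_ofReal ?_
  set J := (entI (P[|cluZero d]) μ).toReal
  have hA : goodE κ μ I (ε / 2) (J + δ / 2) ω (n + 1) ⊆ {s | empPM ω s ∈ G} := by
    rintro s ⟨-, -, h3⟩
    refine hI _ fun f hf => ?_
    have h4 := h3 f hf
    rw [pairing_emp]
    have hN : (0 : ℝ) < ((n + 1 : ℕ) : ℝ) := by positivity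
    have e1 : ((n + 1 : ℕ) : ℝ)⁻¹ * ∑ k, f (envPair ω s k) - pairing f μ =
        ((n + 1 : ℕ) : ℝ)⁻¹ * (∑ k, f (envPair ω s k) - ((n + 1 : ℕ) : ℝ) * pairing f μ) := by
      field_simp
    rw [e1, abs_mul, abs_of_pos (inv_pos.2 hN)]
    calc ((n + 1 : ℕ) : ℝ)⁻¹ * |∑ k, f (envPair ω s k) - ((n + 1 : ℕ) : ℝ) * pairing f μ|
        ≤ ((n + 1 : ℕ) : ℝ)⁻¹ * (((n + 1 : ℕ) : ℝ) * (ε / 2)) := by gcongr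
      _ = ε / 2 := by field_simp
      _ < ε := by linarith
  refine le_trans ?_ (qP_ge hA)
  have hn3 : 2 / δ ≤ ((n + 1 : ℕ) : ℝ) := by
    have := Nat.ceil_le.1 hn2
    push_cast
    linarith
  have hn4 : 1 ≤ ((n + 1 : ℕ) : ℝ) * (δ / 2) := by
    rw [div_le_iff₀ hδ] at hn3; linarith
  have h5 : Real.exp (-(((n + 1 : ℕ) : ℝ) * (δ / 2))) ≤ 1 / 2 := by
    rw [Real.exp_neg, one_div]
    refine inv_anti₀ two_pos ?_
    have := Real.add_one_le_exp (((n + 1 : ℕ) : ℝ) * (δ / 2))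
    linarith
  calc Real.exp (-(((n + 1 : ℕ) : ℝ) * (J + δ)))
      = Real.exp (-(((n + 1 : ℕ) : ℝ) * (J + δ / 2))) * Real.exp (-(((n + 1 : ℕ) : ℝ) * (δ / 2))) := by
        rw [← Real.exp_add]; congr 1; ring
    _ ≤ Real.exp (-(((n + 1 : ℕ) : ℝ) * (J + δ / 2))) * (1 / 2) := by gcongr
    _ ≤ _ := by gcongr

lemma lb_liminf (hd : 0 < d) (hp0 : 0 < p) (hp1 : p < 1) (h : IsBernoulli d p P)
    {G : Set (ProbabilityMeasure (EnvSp d))} (hG : G ∈ 𝓝 μ) :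
    ∀ᵐ ω ∂(P[|cluZero d]), - ((entI (P[|cluZero d]) μ : ℝ≥0∞) : EReal) ≤
          Filter.liminf (fun n : ℕ =>
            (((n + 1 : ℝ)⁻¹ : EReal) *
              ENNReal.log (qPE (srw d) ω {s : Fin (n + 1) → Step d | empPM ω s ∈ G})))
            Filter.atTop := by
  by_cases hM : μ ∈ M1star d (P[|cluZero d])
  swap
  · have : entI (P[|cluZero d]) μ = ∞ := by
      unfold entI
      rw [if_neg (fun hh => hM hh.1)]
    rw [this]
    simp
  obtain ⟨κ, hk⟩ := exists_ker hd hM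
  have hfin := (entI_int hM hk).1
  have h1 : ∀ᵐ ω ∂(P[|cluZero d]), ∀ m : ℕ, ∀ᶠ n : ℕ in atTop,
      ENNReal.ofReal (Real.exp (-(((n + 1 : ℕ) : ℝ) *
        ((entI (P[|cluZero d]) μ).toReal + 1 / ((m : ℝ) + 1))))) ≤
        qPE (srw d) ω {s : Fin (n + 1) → Step d | empPM ω s ∈ G} := by
    rw [ae_all_iff]
    exact fun m => lb_one hd hp0 hp1 h hM hG (by positivity)
  filter_upwards [h1] with ω hω
  set J := (entI (P[|cluZero d]) μ).toReal with hJ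
  have hJ2 : ((entI (P[|cluZero d]) μ : ℝ≥0∞) : EReal) = (J : EReal) := by
    rw [hJ]; exact (EReal.coe_ennreal_toReal hfin).symm
  have h2 : ∀ m : ℕ, ((-(J + 1 / ((m : ℝ) + 1)) : ℝ) : EReal) ≤ Filter.liminf (fun n : ℕ =>
            (((n + 1 : ℝ)⁻¹ : EReal) *
              ENNReal.log (qPE (srw d) ω {s : Fin (n + 1) → Step d | empPM ω s ∈ G})))
            Filter.atTop := by
    intro m
    refine le_liminf_of_le (by isBoundedDefault) ?_
    filter_upwards [hω m] with n hn
    have h3 := ENNReal.log_le_log hn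
    rw [ENNReal.log_ofReal, if_neg (not_le.2 (Real.exp_pos _)), Real.log_exp] at h3
    have hN : (0 : ℝ) < (n : ℝ) + 1 := by positivity
    have h4 : ((((n : ℝ) + 1 : ℝ) : EReal))⁻¹ = ((((n : ℝ) + 1)⁻¹ : ℝ) : EReal) := (EReal.coe_inv _).symm
    have h5 : ((-(J + 1 / ((m : ℝ) + 1)) : ℝ) : EReal) = ((((n : ℝ) + 1)⁻¹ : ℝ) : EReal) *
        ((-(((n + 1 : ℕ) : ℝ) * (J + 1 / ((m : ℝ) + 1))) : ℝ) : EReal) := by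
      rw [← EReal.coe_mul]
      congr 1
      push_cast
      field_simp
    rw [h5, ← h4]
    refine mul_le_mul_of_nonneg_left h3 ?_
    rw [h4]
    exact_mod_cast (inv_pos.2 hN).le
  have h6 : Tendsto (fun m : ℕ => ((-(J + 1 / ((m : ℝ) + 1)) : ℝ) : EReal)) atTop
      (𝓝 (- ((entI (P[|cluZero d]) μ : ℝ≥0∞) : EReal))) := by
    rw [hJ2, ← EReal.coe_neg]
    refine (continuous_coe_real_ereal.tendsto _).comp ?_
    have := (tendsto_one_div_add_atTop_nhds_zero_nat (𝕜 := ℝ)).const_add J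
    rw [add_zero] at this
    exact this.neg
  exact le_of_tendsto' h6 h2

lemma lb_full (hd : 0 < d) (hp0 : 0 < p) (hp1 : p < 1) (h : IsBernoulli d p P)
    {G : Set (ProbabilityMeasure (EnvSp d))} (hG : IsOpen G) :
    ∀ᵐ ω ∂(P[|cluZero d]), - ⨅ μ ∈ G, ((entI (P[|cluZero d]) μ : ℝ≥0∞) : EReal) ≤
          Filter.liminf (fun n : ℕ =>
            (((n + 1 : ℝ)⁻¹ : EReal) *
              ENNReal.log (qPE (srw d) ω {s : Fin (n + 1) → Step d | empPM ω s ∈ G})))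
            Filter.atTop := by
  rcases G.eq_empty_or_nonempty with rfl | hne
  · simp
  let S : Set EReal := (fun μ => ((entI (P[|cluZero d]) μ : ℝ≥0∞) : EReal)) '' G
  have hS : S.Nonempty := hne.image _
  obtain ⟨u, -, hu, huS⟩ := exists_seq_tendsto_sInf hS (OrderBot.bddBelow S)
  choose ν hν hνu using huS
  have hall : ∀ᵐ ω ∂(P[|cluZero d]), ∀ m, - u m ≤
          Filter.liminf (fun n : ℕ =>
            (((n + 1 : ℝ)⁻¹ : EReal) *
              ENNReal.log (qPE (srw d) ω {s : Fin (n + 1) → Step d | empPM ω s ∈ G})))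
            Filter.atTop := by
    rw [ae_all_iff]
    intro m
    rw [← hνu m]
    exact lb_liminf hd hp0 hp1 h (hG.mem_nhds (hν m))
  filter_upwards [hall] with ω hω
  rw [← sInf_image]
  exact le_of_tendsto' (hu.neg) hω

end LB

section Mix

lemma mix_density {α : Type*} [MeasurableSpace α] (A B : Measure α) [IsFiniteMeasure A]
    [IsFiniteMeasure B] : ∃ w : α → ℝ, Measurable w ∧ (∀ x, 0 ≤ w x) ∧ (∀ x, w x ≤ 1) ∧
      (∀ F : α → ℝ≥0∞, Measurable F → ∫⁻ x, F x ∂A = ∫⁻ x, ENNReal.ofReal (w x) * F x ∂(A + B)) ∧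
      (∀ F : α → ℝ≥0∞, Measurable F →
        ∫⁻ x, F x ∂B = ∫⁻ x, ENNReal.ofReal (1 - w x) * F x ∂(A + B)) := by
  have hAle : A ≤ A + B := Measure.le_add_right le_rfl
  have hac : A ≪ A + B := Measure.absolutelyContinuous_of_le hAle
  let w : α → ℝ := fun x => (min 1 (A.rnDeriv (A + B) x)).toReal
  have hw1 : ∀ x, w x ≤ 1 := fun x =>
    ENNReal.toReal_le_of_le_ofReal zero_le_one (by simp)
  have hw0 : ∀ x, 0 ≤ w x := fun x => ENNReal.toReal_nonneg
  have hwm : Measurable w := (measurable_const.min (Measure.measurable_rnDeriv A (A + B))).ennreal_toReal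
  have hA : (A + B).withDensity (fun x => ENNReal.ofReal (w x)) = A := by
    conv_rhs => rw [← Measure.withDensity_rnDeriv_eq A (A + B) hac]
    refine withDensity_congr_ae ?_
    filter_upwards [Measure.rnDeriv_le_one_of_le hAle] with x hx
    have hx : A.rnDeriv (A + B) x ≤ (1 : ℝ≥0∞) := hx
    simp only [w]
    rw [min_eq_right hx, ENNReal.ofReal_toReal (ne_top_of_le_ne_top ENNReal.one_ne_top hx)]
  have hwm' : Measurable fun x => ENNReal.ofReal (w x) := hwm.ennreal_ofReal
  have hvm' : Measurable fun x => ENNReal.ofReal (1 - w x) := (measurable_const.sub hwm).ennreal_ofReal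
  have hB : (A + B).withDensity (fun x => ENNReal.ofReal (1 - w x)) = B := by
    rw [← Measure.add_left_inj A]
    have e0 : (A + B).withDensity (fun x => ENNReal.ofReal (1 - w x)) + A =
      (A + B).withDensity (fun x => ENNReal.ofReal (w x)) +
        (A + B).withDensity (fun x => ENNReal.ofReal (1 - w x)) := by rw [hA, add_comm]
    rw [e0]
    rw [← withDensity_add_left hwm']
    have : (fun x => ENNReal.ofReal (w x)) + (fun x => ENNReal.ofReal (1 - w x)) = 1 := by
      funext x
      simp only [Pi.add_apply, Pi.one_apply]
      rw [← ENNReal.ofReal_add (hw0 x) (by linarith [hw1 x])]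
      simp
    rw [this, withDensity_one, add_comm]
  refine ⟨w, hwm, hw0, hw1, fun F hF => ?_, fun F hF => ?_⟩
  · conv_lhs => rw [← hA]
    rw [lintegral_withDensity_eq_lintegral_mul _ hwm' hF]
    rfl
  · conv_lhs => rw [← hB]
    rw [lintegral_withDensity_eq_lintegral_mul _ hvm' hF]
    rfl

lemma star_of_ker {P₀ : Measure (Config d)} {μ : ProbabilityMeasure (EnvSp d)}
    {κ : Config d → Step d → ℝ} (hk : IsKer μ.toMeasure κ)
    (hinv : marg1 μ.toMeasure = marg2 μ.toMeasure) (h1 : marg1 μ.toMeasure ≪ P₀)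
    (h2 : P₀ ≪ marg1 μ.toMeasure) : μ ∈ M1star d P₀ := by
  refine ⟨hinv, h1, fun e ω => ENNReal.ofReal (κ ω e), fun e => (hk.meas e).ennreal_ofReal,
    fun e => ?_, fun e => ?_⟩
  · ext A hA
    have hme : MeasurableSet (Set.univ ×ˢ {e} : Set (EnvSp d)) :=
      MeasurableSet.univ.prod (measurableSet_singleton e)
    have hmA : MeasurableSet (A ×ˢ {e} : Set (EnvSp d)) := hA.prod (measurableSet_singleton e)
    have hmi : Measurable ((A ×ˢ {e} : Set (EnvSp d)).indicator (1 : EnvSp d → ℝ≥0∞)) :=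
      measurable_const.indicator hmA
    rw [slice, Measure.map_apply measurable_fst hA, Measure.restrict_apply (measurable_fst hA),
      withDensity_apply _ hA]
    have : Prod.fst ⁻¹' A ∩ Set.univ ×ˢ {e} = (A ×ˢ {e} : Set (EnvSp d)) := by
      ext q; simp
    rw [this, ← lintegral_indicator_one hmA, hk.lint _ hmi, ← lintegral_indicator hA]
    refine lintegral_congr fun ω => ?_
    rw [Finset.sum_eq_single e]
    · by_cases hω : ω ∈ A
      · rw [Set.indicator_of_mem (by simp [hω]), Set.indicator_of_mem hω]; simp
      · rw [Set.indicator_of_notMem (by simp [hω]), Set.indicator_of_notMem hω]; simp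
    · intro b _ hb
      rw [Set.indicator_of_notMem (by simp [hb]), mul_zero]
    · simp
  · filter_upwards [h2.ae_le hk.pos] with ω hω
    rw [ENNReal.ofReal_pos]
    exact hω e

lemma xlog_convex {x y w π : ℝ} (hx : 0 ≤ x) (hy : 0 ≤ y) (hw0 : 0 ≤ w) (hw1 : w ≤ 1) (hπ : 0 ≤ π) :
    (w * x + (1 - w) * y) * Real.log ((w * x + (1 - w) * y) / π) ≤
      w * (x * Real.log (x / π)) + (1 - w) * (y * Real.log (y / π)) := by
  rcases hπ.eq_or_lt with h0 | h0
  · rw [← h0]; simp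
  have h := Real.convexOn_mul_log.2 (x := x / π) (div_nonneg hx hπ) (y := y / π) (div_nonneg hy hπ)
    hw0 (by linarith : 0 ≤ 1 - w) (by ring)
  simp only [smul_eq_mul] at h
  have e1 : w * (x / π) + (1 - w) * (y / π) = (w * x + (1 - w) * y) / π := by ring
  rw [e1] at h
  have h2 := mul_le_mul_of_nonneg_left h h0.le
  have e2 : π * ((w * x + (1 - w) * y) / π * Real.log ((w * x + (1 - w) * y) / π)) =
      (w * x + (1 - w) * y) * Real.log ((w * x + (1 - w) * y) / π) := by field_simp
  have e3 : π * (w * (x / π * Real.log (x / π)) + (1 - w) * (y / π * Real.log (y / π))) =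
      w * (x * Real.log (x / π)) + (1 - w) * (y * Real.log (y / π)) := by field_simp
  rw [e2, e3] at h2
  exact h2

lemma hent_convex {μ₁ μ₂ : Measure (EnvSp d)} {κ₁ κ₂ : Config d → Step d → ℝ} (hk₁ : IsKer μ₁ κ₁)
    (hk₂ : IsKer μ₂ κ₂) {w : Config d → ℝ} {ω : Config d} (hw0 : 0 ≤ w ω) (hw1 : w ω ≤ 1) :
    hent (fun ω e => w ω * κ₁ ω e + (1 - w ω) * κ₂ ω e) ω ≤
      w ω * hent κ₁ ω + (1 - w ω) * hent κ₂ ω := by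
  unfold hent
  rw [Finset.mul_sum, Finset.mul_sum, ← Finset.sum_add_distrib]
  exact Finset.sum_le_sum fun e _ =>
    xlog_convex (hk₁.nonneg ω e) (hk₂.nonneg ω e) hw0 hw1 (srw_nonneg ω e)

variable {p : ℝ} {P : Measure (Config d)}

lemma mix_star (hd : 0 < d) (hp0 : 0 < p) (hp1 : p < 1) (h : IsBernoulli d p P)
    {μ₁ μ₂ ν : ProbabilityMeasure (EnvSp d)} (hM₁ : μ₁ ∈ M1star d (P[|cluZero d]))
    (hM₂ : μ₂ ∈ M1star d (P[|cluZero d])) {t s : ℝ} (ht : 0 < t) (hs : 0 < s)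
    (hν : ν.toMeasure = ENNReal.ofReal t • μ₁.toMeasure + ENNReal.ofReal s • μ₂.toMeasure) :
    ν ∈ M1star d (P[|cluZero d]) ∧
      (entI (P[|cluZero d]) ν).toReal ≤
        t * (entI (P[|cluZero d]) μ₁).toReal + s * (entI (P[|cluZero d]) μ₂).toReal := by
  obtain ⟨κ₁, hk₁⟩ := exists_ker hd hM₁
  obtain ⟨κ₂, hk₂⟩ := exists_ker hd hM₂
  have hac₁ := ac_of_star hd hp0 hp1 h hM₁ hk₁
  have hac₂ := ac_of_star hd hp0 hp1 h hM₂ hk₂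
  have := marg1_prob μ₁
  have := marg1_prob μ₂
  have hsm : Measurable fun q : EnvSp d => shift q.2.1 q.1 := meas_env fun e => measurable_shift e.1
  set Q₁ := marg1 μ₁.toMeasure with hQ₁
  set Q₂ := marg1 μ₂.toMeasure with hQ₂
  have hQ : marg1 ν.toMeasure = ENNReal.ofReal t • Q₁ + ENNReal.ofReal s • Q₂ := by
    rw [marg1, hν, Measure.map_add _ _ measurable_fst, Measure.map_smul, Measure.map_smul]
    rfl
  have hQ2 : marg2 ν.toMeasure = ENNReal.ofReal t • Q₁ + ENNReal.ofReal s • Q₂ := by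
    rw [marg2, hν, Measure.map_add _ _ hsm, Measure.map_smul, Measure.map_smul, hQ₁, hQ₂, hM₁.1, hM₂.1]
    rfl
  have hfin₁ : IsFiniteMeasure (ENNReal.ofReal t • Q₁) := Measure.smul_finite _ ENNReal.ofReal_ne_top
  have hfin₂ : IsFiniteMeasure (ENNReal.ofReal s • Q₂) := Measure.smul_finite _ ENNReal.ofReal_ne_top
  obtain ⟨w, hwm, hw0, hw1, hwA, hwB⟩ := mix_density (ENNReal.ofReal t • Q₁) (ENNReal.ofReal s • Q₂)
  rw [← hQ] at hwA hwB
  have hacν : marg1 ν.toMeasure ≪ P[|cluZero d] := by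
    rw [hQ]
    exact (hM₁.2.1.smul_left _).add_left (hM₂.2.1.smul_left _)
  have hνac : P[|cluZero d] ≪ marg1 ν.toMeasure := by
    rw [hQ]
    refine hac₁.trans ((Measure.absolutelyContinuous_smul ?_).trans
      (Measure.absolutelyContinuous_of_le (Measure.le_add_right le_rfl)))
    exact (ENNReal.ofReal_pos.2 ht).ne'
  have hp₁ : ∀ᵐ ω ∂(marg1 ν.toMeasure), ∀ e : Step d, 0 < κ₁ ω e ↔ edgeOpen ω 0 e.1 :=
    (hacν.trans hac₁).ae_le hk₁.pos
  have hp₂ : ∀ᵐ ω ∂(marg1 ν.toMeasure), ∀ e : Step d, 0 < κ₂ ω e ↔ edgeOpen ω 0 e.1 :=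
    (hacν.trans hac₂).ae_le hk₂.pos
  have hkm : ∀ e, Measurable fun ω => w ω * κ₁ ω e + (1 - w ω) * κ₂ ω e := fun e =>
    (hwm.mul (hk₁.meas e)).add ((measurable_const.sub hwm).mul (hk₂.meas e))
  have hk : IsKer ν.toMeasure (fun ω e => w ω * κ₁ ω e + (1 - w ω) * κ₂ ω e) := by
    refine ⟨hkm, fun ω e => ?_, fun ω => ?_, ?_, fun f hf => ?_⟩
    · have := hk₁.nonneg ω e
      have := hk₂.nonneg ω e
      have := hw0 ω
      have : 0 ≤ 1 - w ω := by linarith [hw1 ω]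
      positivity
    · rw [Finset.sum_add_distrib, ← Finset.mul_sum, ← Finset.mul_sum, hk₁.sum, hk₂.sum]
      ring
    · filter_upwards [hp₁, hp₂] with ω h1 h2 e
      constructor
      · intro h3
        by_contra hc
        have a1 := not_lt.1 (fun h4 => hc ((h1 e).1 h4))
        have a2 := not_lt.1 (fun h4 => hc ((h2 e).1 h4))
        have := hw0 ω
        have := hw1 ω
        nlinarith
      · intro ho
        have a1 := (h1 e).2 ho
        have a2 := (h2 e).2 ho
        rcases (hw0 ω).eq_or_lt with h5 | h5
        · rw [← h5]; simpa using a2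
        · have : 0 ≤ (1 - w ω) * κ₂ ω e := mul_nonneg (by linarith [hw1 ω]) a2.le
          have : 0 < w ω * κ₁ ω e := mul_pos h5 a1
          linarith
    · have hfe : ∀ e, Measurable fun ω => f (ω, e) := fun e =>
        hf.comp (by fun_prop : Measurable fun ω : Config d => (ω, e))
      have m1 : Measurable fun ω => ∑ e, ENNReal.ofReal (κ₁ ω e) * f (ω, e) :=
        Finset.measurable_fun_sum _ fun e _ => (hk₁.meas e).ennreal_ofReal.mul (hfe e)
      have m2 : Measurable fun ω => ∑ e, ENNReal.ofReal (κ₂ ω e) * f (ω, e) :=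
        Finset.measurable_fun_sum _ fun e _ => (hk₂.meas e).ennreal_ofReal.mul (hfe e)
      have m3 : Measurable fun ω => ENNReal.ofReal (w ω) * ∑ e, ENNReal.ofReal (κ₁ ω e) * f (ω, e) :=
        hwm.ennreal_ofReal.mul m1
      have e1 := hwA _ m1
      have e2 := hwB _ m2
      rw [lintegral_smul_measure] at e1 e2
      conv_lhs => rw [hν]
      rw [lintegral_add_measure, lintegral_smul_measure, lintegral_smul_measure, hk₁.lint _ hf,
        hk₂.lint _ hf, e1, e2, ← lintegral_add_left m3]
      refine lintegral_congr fun ω => ?_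
      rw [Finset.mul_sum, Finset.mul_sum, ← Finset.sum_add_distrib]
      refine Finset.sum_congr rfl fun e _ => ?_
      have b1 : 0 ≤ 1 - w ω := by linarith [hw1 ω]
      rw [ENNReal.ofReal_add (mul_nonneg (hw0 ω) (hk₁.nonneg ω e)) (mul_nonneg b1 (hk₂.nonneg ω e)),
        ENNReal.ofReal_mul (hw0 ω), ENNReal.ofReal_mul b1]
      ring
  have hM : ν ∈ M1star d (P[|cluZero d]) := star_of_ker hk (hQ.trans hQ2.symm) hacν hνac
  refine ⟨hM, ?_⟩
  have key : entI (P[|cluZero d]) ν ≤ ENNReal.ofReal t * entI (P[|cluZero d]) μ₁ +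
      ENNReal.ofReal s * entI (P[|cluZero d]) μ₂ := by
    have m1 : Measurable fun ω => ENNReal.ofReal (hent κ₁ ω) := (hent_meas hk₁).ennreal_ofReal
    have m2 : Measurable fun ω => ENNReal.ofReal (hent κ₂ ω) := (hent_meas hk₂).ennreal_ofReal
    have m3 : Measurable fun ω => ENNReal.ofReal (w ω) * ENNReal.ofReal (hent κ₁ ω) :=
      hwm.ennreal_ofReal.mul m1
    have e1 := hwA _ m1
    have e2 := hwB _ m2
    rw [lintegral_smul_measure, smul_eq_mul] at e1 e2
    rw [entI_eq hM hk, entI_eq hM₁ hk₁, entI_eq hM₂ hk₂]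
    rw [e1, e2, ← lintegral_add_left m3]
    refine lintegral_mono_ae ?_
    filter_upwards [hp₁, hp₂] with ω h1 h2
    have b1 : 0 ≤ 1 - w ω := by linarith [hw1 ω]
    rw [← ENNReal.ofReal_mul (hw0 ω), ← ENNReal.ofReal_mul b1, ← ENNReal.ofReal_add
      (mul_nonneg (hw0 ω) (hent_nonneg hk₁ h1)) (mul_nonneg b1 (hent_nonneg hk₂ h2))]
    exact ENNReal.ofReal_le_ofReal (hent_convex hk₁ hk₂ (hw0 ω) (hw1 ω))
  have f1 := (entI_int hM₁ hk₁).1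
  have f2 := (entI_int hM₂ hk₂).1
  have g1 : ENNReal.ofReal t * entI (P[|cluZero d]) μ₁ ≠ ∞ := ENNReal.mul_ne_top ENNReal.ofReal_ne_top f1
  have g2 : ENNReal.ofReal s * entI (P[|cluZero d]) μ₂ ≠ ∞ := ENNReal.mul_ne_top ENNReal.ofReal_ne_top f2
  have h3 := ENNReal.toReal_mono (ENNReal.add_ne_top.2 ⟨g1, g2⟩) key
  rw [ENNReal.toReal_add g1 g2, ENNReal.toReal_mul, ENNReal.toReal_mul, ENNReal.toReal_ofReal ht.le,
    ENNReal.toReal_ofReal hs.le] at h3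
  exact h3

end Mix

section Dual

lemma bis_le_entI (P₀ : Measure (Config d)) (μ : ProbabilityMeasure (EnvSp d)) :
    entIbis P₀ μ ≤ ((entI P₀ μ : ℝ≥0∞) : EReal) := by
  refine iSup_le fun f => ?_
  by_cases ht : entI P₀ μ = ∞
  · rw [ht]; simp
  have h1 : ((pairing f μ : ℝ) : EReal) - ((entI P₀ μ : ℝ≥0∞) : EReal) ≤ entIstar P₀ f :=
    le_iSup (fun μ : ProbabilityMeasure (EnvSp d) =>
      ((pairing f μ : ℝ) : EReal) - ((entI P₀ μ : ℝ≥0∞) : EReal)) μ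
  refine (EReal.sub_le_sub le_rfl h1).trans ?_
  rw [← EReal.coe_ennreal_toReal ht, ← EReal.coe_sub, ← EReal.coe_sub, EReal.coe_le_coe_iff]
  linarith

lemma entI_top {P₀ : Measure (Config d)} {μ : ProbabilityMeasure (EnvSp d)} (h : μ ∉ M1star d P₀) :
    entI P₀ μ = ∞ := by
  unfold entI
  rw [if_neg]
  exact fun h' => h h'.1

lemma bis_ge {P₀ : Measure (Config d)} {μ₀ : ProbabilityMeasure (EnvSp d)} {a : ℝ}
    (hfin : ∀ ν ∈ M1star d P₀, entI P₀ ν ≠ ∞)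
    (g : BoundedContinuousFunction (EnvSp d) ℝ)
    (hg : ∀ ν ∈ M1star d P₀, pairing g ν - (entI P₀ ν).toReal ≤ pairing g μ₀ - a) :
    (a : EReal) ≤ entIbis P₀ μ₀ := by
  have h1 : entIstar P₀ g ≤ ((pairing g μ₀ - a : ℝ) : EReal) := by
    refine iSup_le fun ν => ?_
    by_cases hν : ν ∈ M1star d P₀
    · rw [← EReal.coe_ennreal_toReal (hfin ν hν), ← EReal.coe_sub, EReal.coe_le_coe_iff]
      exact hg ν hν
    · rw [entI_top hν]
      simp
  have h2 : ((pairing g μ₀ : ℝ) : EReal) - entIstar P₀ g ≤ entIbis P₀ μ₀ :=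
    le_iSup (fun f : BoundedContinuousFunction (EnvSp d) ℝ =>
      ((pairing f μ₀ : ℝ) : EReal) - entIstar P₀ f) g
  refine le_trans ?_ h2
  refine le_trans ?_ (EReal.sub_le_sub le_rfl h1)
  rw [← EReal.coe_sub, EReal.coe_le_coe_iff]
  linarith

lemma pairing_lin (I : Finset (BoundedContinuousFunction (EnvSp d) ℝ)) (c : I → ℝ)
    (ν : ProbabilityMeasure (EnvSp d)) :
    pairing (∑ f : I, c f • f.1 : BoundedContinuousFunction (EnvSp d) ℝ) ν =
      ∑ f : I, c f * pairing f.1 ν := by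
  unfold pairing
  have e : ∀ q : EnvSp d, (∑ f : I, c f • f.1 : BoundedContinuousFunction (EnvSp d) ℝ) q =
      ∑ f : I, c f * f.1 q := by
    intro q
    rw [BoundedContinuousFunction.sum_apply]
    rfl
  simp_rw [e]
  rw [integral_finsetSum]
  · simp_rw [integral_const_mul]
  · intro f _
    exact (BoundedContinuousFunction.integrable _ f.1).const_mul _

variable {p : ℝ} {P : Measure (Config d)}

lemma exists_mix (μ₁ μ₂ : ProbabilityMeasure (EnvSp d)) {t s : ℝ} (ht : 0 ≤ t) (hs : 0 ≤ s)
    (hts : t + s = 1) : ∃ ν : ProbabilityMeasure (EnvSp d),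
      ν.toMeasure = ENNReal.ofReal t • μ₁.toMeasure + ENNReal.ofReal s • μ₂.toMeasure := by
  refine ⟨⟨ENNReal.ofReal t • μ₁.toMeasure + ENNReal.ofReal s • μ₂.toMeasure, ⟨?_⟩⟩, rfl⟩
  simp only [Measure.add_apply, Measure.smul_apply, measure_univ, smul_eq_mul, mul_one]
  rw [← ENNReal.ofReal_add ht hs, hts, ENNReal.ofReal_one]

lemma pairing_mix {μ₁ μ₂ ν : ProbabilityMeasure (EnvSp d)} {t s : ℝ} (ht : 0 ≤ t) (hs : 0 ≤ s)
    (hν : ν.toMeasure = ENNReal.ofReal t • μ₁.toMeasure + ENNReal.ofReal s • μ₂.toMeasure)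
    (f : BoundedContinuousFunction (EnvSp d) ℝ) :
    pairing f ν = t * pairing f μ₁ + s * pairing f μ₂ := by
  unfold pairing
  rw [hν, integral_add_measure, integral_smul_measure, integral_smul_measure,
    ENNReal.toReal_ofReal ht, ENNReal.toReal_ofReal hs]
  · rfl
  · exact (BoundedContinuousFunction.integrable _ f).smul_measure ENNReal.ofReal_ne_top
  · exact (BoundedContinuousFunction.integrable _ f).smul_measure ENNReal.ofReal_ne_top

lemma dual_key (hd : 0 < d) (hp0 : 0 < p) (hp1 : p < 1) (h : IsBernoulli d p P)
    {G : Set (ProbabilityMeasure (EnvSp d))} (hG : IsOpen G) {a : ℝ}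
    (ha : ∀ ν ∈ G, (a : EReal) ≤ ((entI (P[|cluZero d]) ν : ℝ≥0∞) : EReal))
    {μ₀ : ProbabilityMeasure (EnvSp d)} (hμ₀ : μ₀ ∈ G) :
    (a : EReal) ≤ entIbis (P[|cluZero d]) μ₀ := by
  have hfin : ∀ ν ∈ M1star d (P[|cluZero d]), entI (P[|cluZero d]) ν ≠ ∞ := fun ν hν => by
    obtain ⟨κ, hk⟩ := exists_ker hd hν
    exact (entI_int hν hk).1
  classical
  obtain ⟨I, ε, hε, hI⟩ := nhds_basis_pm (hG.mem_nhds hμ₀)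
  let T : ProbabilityMeasure (EnvSp d) → (I → ℝ) := fun ν f => pairing f.1 ν
  let U : Set ((I → ℝ) × ℝ) := {q | (∀ f, |q.1 f - T μ₀ f| < ε) ∧ q.2 < a}
  let K : Set ((I → ℝ) × ℝ) := {q | ∃ ν ∈ M1star d (P[|cluZero d]), q.1 = T ν ∧
    (entI (P[|cluZero d]) ν).toReal ≤ q.2}
  have hUeq : U = (Metric.ball (T μ₀) ε) ×ˢ Set.Iio a := by
    ext q
    simp only [U, Set.mem_prod, Metric.mem_ball, Set.mem_Iio, dist_pi_lt_iff hε, Real.dist_eq]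
    rfl
  have hUo : IsOpen U := by
    rw [hUeq]; exact Metric.isOpen_ball.prod isOpen_Iio
  have hUc : Convex ℝ U := by
    rw [hUeq]; exact (convex_ball _ _).prod (convex_Iio a)
  have hKc : Convex ℝ K := by
    rintro q₁ ⟨ν₁, h1, h1T, h1r⟩ q₂ ⟨ν₂, h2, h2T, h2r⟩ t s ht hs hts
    rcases ht.eq_or_lt with h0 | h0
    · have : s = 1 := by linarith
      subst this
      rw [← h0, zero_smul, one_smul, zero_add]
      exact ⟨ν₂, h2, h2T, h2r⟩
    rcases hs.eq_or_lt with h0' | h0'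
    · have : t = 1 := by linarith
      subst this
      rw [← h0', zero_smul, one_smul, add_zero]
      exact ⟨ν₁, h1, h1T, h1r⟩
    obtain ⟨ν, hν⟩ := exists_mix ν₁ ν₂ ht hs hts
    obtain ⟨hM, hle⟩ := mix_star hd hp0 hp1 h h1 h2 h0 h0' hν
    refine ⟨ν, hM, ?_, ?_⟩
    · funext f
      simp only [Prod.fst_add, Prod.smul_fst, Pi.add_apply, Pi.smul_apply, smul_eq_mul, h1T, h2T, T]
      exact (pairing_mix ht hs hν f.1).symm
    · simp only [Prod.snd_add, Prod.smul_snd, smul_eq_mul]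
      have := mul_le_mul_of_nonneg_left h1r ht
      have := mul_le_mul_of_nonneg_left h2r hs
      linarith
  have hdisj : Disjoint U K := by
    rw [Set.disjoint_left]
    rintro q ⟨hq1, hq2⟩ ⟨ν, hν, hT, hr⟩
    have hνG : ν ∈ G := hI ν fun f hf => by
      have := hq1 ⟨f, hf⟩
      rw [hT] at this
      exact this
    have h1 := ha ν hνG
    rw [← EReal.coe_ennreal_toReal (hfin ν hν), EReal.coe_le_coe_iff] at h1
    linarith
  obtain ⟨φ, u, hφU, hφK⟩ := geometric_hahn_banach_open hUc hUo hKc hdisj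
  let σ : ℝ := φ (0, 1)
  let c : I → ℝ := fun f => φ (Pi.single f 1, 0)
  have hφ : ∀ (y : I → ℝ) (r : ℝ), φ (y, r) = ∑ f, c f * y f + r * σ := by
    intro y r
    have e1 : (y, r) = ∑ f, y f • ((Pi.single f (1 : ℝ) : I → ℝ), (0 : ℝ)) + r • ((0 : I → ℝ), (1 : ℝ)) := by
      refine Prod.ext ?_ ?_
      · simp only [Prod.fst_add, Prod.fst_sum, Prod.smul_fst, smul_zero, add_zero]
        exact pi_eq_sum_univ' y
      · simp [Prod.snd_sum]
    rw [e1, map_add, map_sum, map_smul]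
    simp only [map_smul, smul_eq_mul, c, σ]
    congr 1
    exact Finset.sum_congr rfl fun f _ => mul_comm _ _
  let Lf : ProbabilityMeasure (EnvSp d) → ℝ := fun ν => ∑ f, c f * pairing f.1 ν
  have hU' : ∀ r < a, Lf μ₀ + r * σ < u := by
    intro r hr
    have := hφU (T μ₀, r) ⟨fun f => by simpa using hε, hr⟩
    rw [hφ] at this
    exact this
  have hK' : ∀ ν ∈ M1star d (P[|cluZero d]), u ≤ Lf ν + (entI (P[|cluZero d]) ν).toReal * σ := by
    intro ν hν
    have := hφK (T ν, (entI (P[|cluZero d]) ν).toReal) ⟨ν, hν, rfl, le_rfl⟩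
    rw [hφ] at this
    exact this
  have hpair : ∀ (b : ℝ) ν, pairing (∑ f : I, (b * c f) • f.1 : BoundedContinuousFunction (EnvSp d) ℝ) ν =
      b * Lf ν := by
    intro b ν
    rw [pairing_lin, Finset.mul_sum]
    exact Finset.sum_congr rfl fun f _ => mul_assoc _ _ _
  have hσ : 0 ≤ σ := by
    by_contra hc
    push Not at hc
    have h1 := hU' (min (a - 1) ((u - Lf μ₀) / σ)) (by
      have := min_le_left (a - 1) ((u - Lf μ₀) / σ); linarith)
    have h2 := mul_le_mul_of_nonpos_right (min_le_right (a - 1) ((u - Lf μ₀) / σ)) hc.le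
    rw [div_mul_cancel₀ _ hc.ne] at h2
    linarith
  rcases hσ.eq_or_lt with h0 | h0
  · rw [← h0] at hU' hK'
    simp only [mul_zero, add_zero] at hU' hK'
    have h1 := hU' (a - 1) (by linarith)
    obtain ⟨n, hn⟩ := exists_nat_ge (a / (u - Lf μ₀))
    rw [div_le_iff₀ (by linarith)] at hn
    refine bis_ge hfin (∑ f : I, ((-(n : ℝ)) * c f) • f.1) fun ν hν => ?_
    rw [hpair, hpair]
    have h2 := mul_le_mul_of_nonneg_left (hK' ν hν) (Nat.cast_nonneg (α := ℝ) n)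
    have h3 : 0 ≤ (entI (P[|cluZero d]) ν).toReal := ENNReal.toReal_nonneg
    linarith
  · have h1 : Lf μ₀ + a * σ ≤ u := by
      by_contra hc
      push Not at hc
      have h2 := hU' (a - (Lf μ₀ + a * σ - u) / σ) (by
        have : 0 < (Lf μ₀ + a * σ - u) / σ := div_pos (by linarith) h0
        linarith)
      rw [sub_mul, div_mul_cancel₀ _ h0.ne'] at h2
      linarith
    refine bis_ge hfin (∑ f : I, ((-σ⁻¹) * c f) • f.1) fun ν hν => ?_
    rw [hpair, hpair]
    have h2 := mul_le_mul_of_nonneg_left (h1.trans (hK' ν hν)) (inv_nonneg.2 h0.le)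
    have e1 : σ⁻¹ * (Lf μ₀ + a * σ) = σ⁻¹ * Lf μ₀ + a := by field_simp
    have e2 : σ⁻¹ * (Lf ν + (entI (P[|cluZero d]) ν).toReal * σ) =
        σ⁻¹ * Lf ν + (entI (P[|cluZero d]) ν).toReal := by field_simp
    rw [e1, e2] at h2
    linarith

lemma inf_eq_bis (hd : 0 < d) (hp0 : 0 < p) (hp1 : p < 1) (h : IsBernoulli d p P)
    {G : Set (ProbabilityMeasure (EnvSp d))} (hG : IsOpen G) :
    (⨅ μ ∈ G, ((entI (P[|cluZero d]) μ : ℝ≥0∞) : EReal)) = ⨅ μ ∈ G, entIbis (P[|cluZero d]) μ := by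
  refine le_antisymm ?_ (iInf₂_mono fun μ _ => bis_le_entI _ μ)
  refine le_iInf₂ fun μ hμ => ?_
  rw [← EReal.ge_of_forall_gt_iff_ge]
  intro z hz
  exact dual_key hd hp0 hp1 h hG (fun ν hν => hz.le.trans (iInf₂_le ν hν)) hμ

end Dual

end SRWPC

open SRWPC in
/-- **Large deviation lower bound** (Lemma 3.4). -/
theorem LDP_lower_bound
    (d : ℕ) (hd : 2 ≤ d) (p : ℝ) (hp0 : 0 < p) (hp1 : p < 1) (hpc : pc d < p)
    (P : Measure (Config d)) (hP : IsBernoulli d p P) :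
    ∀ G : Set (ProbabilityMeasure (EnvSp d)), IsOpen G →
      (∀ᵐ ω ∂(P[|cluZero d]),
        - ⨅ μ ∈ G, ((entI (P[|cluZero d]) μ : ℝ≥0∞) : EReal) ≤
          Filter.liminf (fun n : ℕ =>
            (((n + 1 : ℝ)⁻¹ : EReal) *
              ENNReal.log (qPE (srw d) ω {s : Fin (n + 1) → Step d | empPM ω s ∈ G})))
            Filter.atTop) ∧
      (⨅ μ ∈ G, ((entI (P[|cluZero d]) μ : ℝ≥0∞) : EReal)) =
        ⨅ μ ∈ G, entIbis (P[|cluZero d]) μ := by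
  intro G hG
  exact ⟨lb_full (by omega) hp0 hp1 hP hG, inf_eq_bis (by omega) hp0 hp1 hP hG⟩
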